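/- For every n ≥ 1 and r ≥ 1, the second homotopy group of the character variety X_r(U(n)) is trivial: π₂(X_r(U(n))) = 0. -/

import Mathlib

/-!
Write `X` for the quotient of `U(n)^r` by conjugation and let `F : ℝ² → X` be constant outside the
open unit square. The point is to deform `F` to a constant map through maps which are constant on
the boundary of the square; `genLoop_null` turns such a free deformation into a based one.

**Cover.** For `ζ ∈ (S¹)^r` let `W_ζ ⊆ X` be the open set of classes of tuples `(A_i)` such that
`ζ_i` is not an eigenvalue of `A_i` (`Wset`). Scaling Cayley transforms contracts `W_ζ` to the
class of the scalar tuple `-ζ` (`coneX`), so maps from the boundary of a cube to `W_ζ` extend to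
the cube.

**Intersections.** Every loop in `W_ζ ∩ W_ζ'` is null-homotopic (`nullLoops_Wset_inter`). Stabilizers
of tuples are commutants, hence path connected (`stab_joined`), so paths in `X` lift to `U(n)^r` up
to reparametrisation, with prescribed end points (`exists_path_lift`). Upstairs a Cayley
transform identifies the unitaries with neither eigenvalue `ζ`, `ζ'` with the invertible Hermitian
matrices (`nullLoops_inter`). These retract onto the space of orthogonal projections
(`nullLoops_GH`), whose components are Grassmannians. The contractible open sets
`{Q | 1 - P - Q invertible}` have path connected intersections and any two projections of the same
rank lie in a common one, so van Kampen's argument applies (`nullLoops_Gr`, `vanKampen_loop`).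

**Angles.** The `i`-th determinant of `F` has a continuous logarithm `φ_i` that is constant outside
the square (`exists_log_det`). Over each point choose a sorted list of eigenvalue angles of spread at
most `2π` with sum `φ_i` (`exists_angles`). The choice need not be continuous. However, if `F` maps a
connected set into `W_ζ` with `ζ_i = e^{iξ_i}`, the integers `⌊(angle - ξ_i) / 2π⌋` are constant
there (`floors_const`): their sum is a continuous function of the point, and sorted integers of
spread at most one are determined by their sum. After a fine subdivision of the square,
the angles over each cell therefore lie in a fixed convex box, and a partition of unity yields
a continuous family `z` of angle vectors in the same boxes. It defines a map `g` into classes of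
diagonal tuples, such that `F` and `g` map each cell into the same `W_ζ`.

**Conclusion.** A homotopy from `F` to `g` is built over the vertices, the edges and the cells of
the subdivision (`grid`), using the two properties of the cover; `g` is contracted by scaling the
angles `z` to `0` (`grid_null`).
-/

/-- The unitary group `U(n)` of `n × n` complex unitary matrices. -/
abbrev Un (n : ℕ) : Type := ↥(Matrix.unitaryGroup (Fin n) ℂ)

/-- The character variety `X_r(U(n))`: the quotient topological space of `U(n)^r`
by the diagonal conjugation action `g • (A₁, …, A_r) = (g A₁ g⁻¹, …, g A_r g⁻¹)`. -/
abbrev CharVarU (n r : ℕ) : Type :=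
  Quotient (MulAction.orbitRel (ConjAct (Un n)) (Fin r → Un n))

/-! ### Chains and paths in complete metric spaces -/

section

/-- A chain of `R`-steps, written as an eventually constant sequence in which points may be
repeated. -/
theorem exists_seq_of_reflTransGen {Y : Type*} {R : Y → Y → Prop} {a b : Y}
    (h : Relation.ReflTransGen R a b) :
    ∃ (m : ℕ) (z : ℕ → Y), z 0 = a ∧ (∀ i, m ≤ i → z i = b) ∧
      ∀ i, R (z i) (z (i + 1)) ∨ z (i + 1) = z i := by
  induction h using Relation.ReflTransGen.head_induction_on with
  | refl => exact ⟨0, fun _ => b, rfl, fun _ _ => rfl, fun _ => Or.inr rfl⟩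
  | @head c d hcd _ ih =>
    obtain ⟨m, z, h0, hm, hs⟩ := ih
    refine ⟨m + 1, fun i => Nat.casesOn i c z, rfl, ?_, ?_⟩
    · rintro (_ | i) hi
      · omega
      · exact hm i (by omega)
    · rintro (_ | i)
      · left; simpa [h0] using hcd
      · exact hs i

/-- Refinement of a chain from `a` to `b` with steps shorter than `δ`: if points at distance less
than `δ` are joined by `δ'`-chains staying `ε`-close, each step can be replaced by such a chain. All
the replacements are padded to a common length `m`, so that the index `q` of the new chain refines the
index `q / m` of the old one. -/
theorem refine_chain {Y : Type*} [MetricSpace Y] {δ δ' ε : ℝ} (hδ' : 0 < δ') (hε : 0 < ε)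
    (H : ∀ a b : Y, dist a b < δ →
      Relation.ReflTransGen (fun x y => dist x y < δ' ∧ dist y a < ε) a b)
    (a b : Y) (M : ℕ) (p : ℕ → Y) (h0 : p 0 = a) (hM : ∀ j, M ≤ j → p j = b)
    (hs : ∀ j, dist (p j) (p (j + 1)) < δ) :
    ∃ (m : ℕ) (p' : ℕ → Y), 0 < m ∧ p' 0 = a ∧ (∀ j, M * m ≤ j → p' j = b) ∧
      (∀ j, dist (p' j) (p' (j + 1)) < δ') ∧ ∀ q, dist (p' q) (p (q / m)) < ε := by
  have H1 : ∀ j, ∃ (m : ℕ) (z : ℕ → Y), z 0 = p j ∧ (∀ i, m ≤ i → z i = p (j + 1)) ∧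
      (∀ i, dist (z i) (z (i + 1)) < δ') ∧ (∀ i, dist (z i) (p j) < ε) := by
    intro j
    obtain ⟨m, z, h0, hm, hz⟩ := exists_seq_of_reflTransGen (H _ _ (hs j))
    refine ⟨m, z, h0, hm, fun i => ?_, fun i => ?_⟩
    · rcases hz i with h | h
      · exact h.1
      · simpa [h] using hδ'
    · induction i with
      | zero => simpa [h0] using hε
      | succ i ih =>
        rcases hz i with h | h
        · exact h.2
        · rwa [h]
  choose m z hz0 hzm hzs hzd using H1
  -- the common length to which the blocks are padded
  let m' := (Finset.range M).sup m + 1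
  have hm' : ∀ j, j < M → m j ≤ m' := fun j hj =>
    (Finset.le_sup (f := m) (Finset.mem_range.2 hj)).trans (Nat.le_succ _)
  have hpos : 0 < m' := Nat.succ_pos _
  refine ⟨m', fun q => if q / m' < M then z (q / m') (q % m') else b, hpos, ?_, ?_, ?_, ?_⟩
  · by_cases h : 0 < M
    · simp [h, hz0, h0]
    · simp only [Nat.zero_div, h, if_false]
      rw [← h0, hM 0 (by omega)]
  · intro j hj
    have : ¬ (j / m' < M) := by
      rw [not_lt, Nat.le_div_iff_mul_le hpos]; exact hj
    simp [this]
  · intro q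
    by_cases hq : q / m' < M
    · by_cases hd : (q + 1) % m' = 0
      · have h1 : (q + 1) / m' = q / m' + 1 := by
          rw [Nat.succ_div, if_pos (Nat.dvd_of_mod_eq_zero hd)]
        have h2 : q % m' + 1 = m' := by
          have e1 := Nat.div_add_mod (q + 1) m'
          have e2 := Nat.div_add_mod q m'
          rw [h1, hd, mul_add] at e1
          omega
        have h3 : (if (q + 1) / m' < M then z ((q + 1) / m') ((q + 1) % m') else b)
            = z (q / m') (q % m' + 1) := by
          rw [hzm (q / m') (q % m' + 1) (by rw [h2]; exact hm' _ hq), hd, h1]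
          split_ifs with h
          · rw [hz0]
          · rw [hM _ (by omega)]
        simp only [if_pos hq, h3]
        exact hzs _ _
      · have h1 : (q + 1) / m' = q / m' := by
          rw [Nat.succ_div, if_neg (fun h => hd (Nat.mod_eq_zero_of_dvd h)), add_zero]
        have h2 : (q + 1) % m' = q % m' + 1 := by
          have e1 := Nat.div_add_mod (q + 1) m'
          have e2 := Nat.div_add_mod q m'
          rw [h1] at e1
          omega
        simp only [h1, h2, if_pos hq]
        exact hzs _ _
    · have : ¬ ((q + 1) / m' < M) := by
        have := Nat.div_le_div_right (c := m') (Nat.le_succ q)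
        simp only [Nat.succ_eq_add_one] at this
        omega
      simpa [hq, this] using hδ'
  · intro q
    by_cases hq : q / m' < M
    · simp only [if_pos hq]; exact hzd _ _
    · simp only [if_neg hq]
      rw [hM _ (by omega)]; simpa using hε

/-- If nearby points can be joined by arbitrarily fine chains of small diameter, then nearby points
are joined by paths: successive refinements of a chain form a uniformly Cauchy sequence of step
functions whose limit is continuous. -/
theorem joined_of_chain {Y : Type*} [MetricSpace Y] [CompleteSpace Y]
    (H : ∀ ε > 0, ∃ δ > 0, ∀ a b : Y, dist a b < δ → ∀ δ' > 0,
      Relation.ReflTransGen (fun x y => dist x y < δ' ∧ dist y a < ε) a b) :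
    ∃ δ > 0, ∀ a b : Y, dist a b < δ → Joined a b := by
  have H1 : ∀ k : ℕ, ∃ δ > 0, δ ≤ (1 / 2 : ℝ) ^ k ∧ ∀ a b : Y, dist a b < δ → ∀ δ' > 0,
      Relation.ReflTransGen (fun x y => dist x y < δ' ∧ dist y a < (1 / 2 : ℝ) ^ k) a b := by
    intro k
    obtain ⟨δ, h, h'⟩ := H ((1 / 2 : ℝ) ^ k) (by positivity)
    exact ⟨min δ ((1 / 2 : ℝ) ^ k), lt_min h (by positivity), min_le_right _ _,
      fun a b hab => h' a b (hab.trans_le (min_le_left _ _))⟩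
  choose δ hδ0 hδ1 hδ using H1
  refine ⟨δ 0, hδ0 0, fun a b hab => ?_⟩
  -- chains from `a` to `b` with steps shorter than `δ k`, together with a bound for their length
  let Lev : ℕ → Type _ := fun k => {x : ℕ × (ℕ → Y) // 0 < x.1 ∧ x.2 0 = a ∧
    (∀ j, x.1 ≤ j → x.2 j = b) ∧ ∀ j, dist (x.2 j) (x.2 (j + 1)) < δ k}
  have step : ∀ k (x : Lev k), ∃ (m : ℕ) (y : Lev (k + 1)), 0 < m ∧ y.1.1 = x.1.1 * m ∧
      ∀ q, dist (y.1.2 q) (x.1.2 (q / m)) < (1 / 2 : ℝ) ^ k := by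
    rintro k ⟨⟨M, p⟩, h0, h1, h2, h3⟩
    obtain ⟨m, p', hm, h0', h1', h2', h3'⟩ := refine_chain (hδ0 (k + 1)) (by positivity)
      (fun a b h => hδ k a b h (δ (k + 1)) (hδ0 _)) a b M p h1 h2 h3
    exact ⟨m, ⟨⟨M * m, p'⟩, Nat.mul_pos h0 hm, h0', h1', h2'⟩, hm, rfl, h3'⟩
  choose m next hm hM hd using step
  let x : ∀ k, Lev k := fun k => Nat.rec (motive := Lev)
    ⟨⟨1, fun j => if j = 0 then a else b⟩, one_pos, by simp, by
      intro j hj; simp [show j ≠ 0 by omega], by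
      rintro (_ | j)
      · simpa using hab
      · simpa using hδ0 0⟩ (fun k x => next k x) k
  have hx : ∀ k, x (k + 1) = next k (x k) := fun k => rfl
  -- the step function on `[0, 1]` given by the `k`-th chain
  let u : ℕ → ℝ → Y := fun k t => (x k).1.2 ⌊t * (x k).1.1⌋₊
  have hu : ∀ t k, dist (u k t) (u (k + 1) t) ≤ 1 * (1 / 2 : ℝ) ^ k := by
    intro t k
    have := hd k (x k) ⌊t * (x (k + 1)).1.1⌋₊
    rw [← hx, ← Nat.floor_div_natCast, hx, hM] at this
    have hmm : ((m k (x k) : ℕ) : ℝ) ≠ 0 := Nat.cast_ne_zero.2 (hm k (x k)).ne'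
    rw [Nat.cast_mul, ← mul_assoc, mul_div_cancel_right₀ _ hmm, dist_comm, mul_assoc] at this
    rw [one_mul]
    simp only [u]
    rw [hx, hM, Nat.cast_mul]
    exact this.le
  have hc : ∀ t, ∃ y, Filter.Tendsto (fun k => u k t) Filter.atTop (nhds y) := fun t =>
    cauchySeq_tendsto_of_complete (cauchySeq_of_le_geometric (1 / 2) 1 (by norm_num) (hu t))
  choose f hf using hc
  have hfu : ∀ t k, dist (u k t) (f t) ≤ 2 * (1 / 2 : ℝ) ^ k := by
    intro t k
    have := dist_le_of_le_geometric_of_tendsto (1 / 2) 1 (by norm_num) (hu t) (hf t) k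
    refine this.trans (le_of_eq ?_)
    ring
  have hclose : ∀ k, ∀ s t : ℝ, 0 ≤ s → s ≤ t → (t - s) * (x k).1.1 < 1 →
      dist (f s) (f t) ≤ 5 * (1 / 2 : ℝ) ^ k := by
    intro k s t hs hst hlt
    have h1 : dist (u k s) (u k t) ≤ (1 / 2 : ℝ) ^ k := by
      have hle : ⌊s * (x k).1.1⌋₊ ≤ ⌊t * (x k).1.1⌋₊ := by gcongr
      have hge : ⌊t * (x k).1.1⌋₊ < ⌊s * (x k).1.1⌋₊ + 2 := by
        rw [Nat.floor_lt (mul_nonneg (hs.trans hst) (Nat.cast_nonneg _))]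
        have := Nat.lt_floor_add_one (s * (x k).1.1 : ℝ)
        push_cast
        linarith
      have h3 : ⌊t * (x k).1.1⌋₊ = ⌊s * (x k).1.1⌋₊ ∨
          ⌊t * (x k).1.1⌋₊ = ⌊s * (x k).1.1⌋₊ + 1 := by omega
      simp only [u]
      rcases h3 with h | h <;> rw [h]
      · simp
      · exact ((x k).2.2.2.2 _).le.trans (hδ1 k)
    calc dist (f s) (f t) ≤ dist (f s) (u k s) + dist (u k s) (u k t) + dist (u k t) (f t) :=
          dist_triangle4 _ _ _ _
      _ ≤ _ := by
          have h2 := hfu s k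
          rw [dist_comm] at h2
          linarith [hfu t k]
  have hcont : Continuous fun t : unitInterval => f t := by
    rw [Metric.continuous_iff]
    intro t ε hε
    obtain ⟨k, hk⟩ := exists_pow_lt_of_lt_one (show 0 < ε / 5 by positivity)
      (show (1 / 2 : ℝ) < 1 by norm_num)
    have hMp : (0 : ℝ) < (x k).1.1 := Nat.cast_pos.2 (x k).2.1
    refine ⟨1 / (x k).1.1, by positivity, fun s hst => ?_⟩
    rw [lt_div_iff₀ hMp, Subtype.dist_eq, Real.dist_eq] at hst
    rcases le_total (s : ℝ) t with h | h
    · have := hclose k s t s.2.1 h (by rwa [abs_sub_comm, abs_of_nonneg (sub_nonneg.2 h)] at hst)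
      linarith
    · have := hclose k t s t.2.1 h (by rwa [abs_of_nonneg (sub_nonneg.2 h)] at hst)
      rw [dist_comm]
      linarith
  have h0 : f 0 = a := by
    refine tendsto_nhds_unique (hf 0) ?_
    simp only [u, zero_mul, Nat.floor_zero]
    exact (tendsto_const_nhds).congr fun k => ((x k).2.2.1).symm
  have h1 : f 1 = b := by
    refine tendsto_nhds_unique (hf 1) ?_
    refine (tendsto_const_nhds).congr fun k => ?_
    simp only [u, one_mul, Nat.floor_natCast]
    exact ((x k).2.2.2.1 _ le_rfl).symm
  exact ⟨⟨⟨fun t => f t, hcont⟩, by simpa using h0, by simpa using h1⟩⟩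

end

/-! ### Lifting paths through quotients by compact groups -/

section
open Topology Filter

section
variable {G M : Type*} [Group G] [TopologicalSpace G] [CompactSpace G]
  [LocallyPathConnectedSpace G] [TopologicalSpace M] [T2Space M] [MulAction G M]
  [ContinuousSMul G M]

/-- If stabilizers are path connected, then points of a common orbit close to `y₀` are joined inside
the intersection of that orbit with a given neighbourhood of `y₀`. By compactness of `G` it is enough to
consider group elements near a given `g₀`; when `g₀` fixes `y₀` it is joined to `1` in the stabilizer. -/
theorem eventually_joinedIn_orbit
    (hstab : ∀ (y : M) (g : G), g • y = y → JoinedIn {h : G | h • y = y} 1 g)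
    (y₀ : M) {U : Set M} (hU : U ∈ 𝓝 y₀) :
    ∀ᶠ q : M × M in 𝓝 (y₀, y₀), ∀ g : G, g • q.1 = q.2 →
      JoinedIn (MulAction.orbit G q.1 ∩ U) q.1 q.2 := by
  have key : ∀ᶠ q : M × M in 𝓝 (y₀, y₀), ∀ g ∈ (Set.univ : Set G), g • q.1 = q.2 →
      JoinedIn (MulAction.orbit G q.1 ∩ U) q.1 q.2 := by
    refine isCompact_univ.eventually_forall_of_forall_eventually fun g₀ _ => ?_
    by_cases hg : g₀ • y₀ = y₀
    · obtain ⟨c, hc⟩ := hstab y₀ g₀ hg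
      have e1 : ∀ᶠ y in 𝓝 y₀, ∀ t ∈ (Set.univ : Set unitInterval), c t • y ∈ U := by
        refine isCompact_univ.eventually_forall_of_forall_eventually fun t _ => ?_
        have : ContinuousAt (fun z : M × unitInterval => c z.2 • z.1) (y₀, t) := by fun_prop
        refine this ?_
        have h := hc t
        simp only [Set.mem_ofPred_eq] at h
        simpa [h] using hU
      have e2 : ∀ᶠ z : G × M in 𝓝 (g₀, y₀), z.1 • z.2 ∈ U := by
        have : ContinuousAt (fun z : G × M => z.1 • z.2) (g₀, y₀) := by fun_prop
        refine this ?_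
        simpa [hg] using hU
      rw [nhds_prod_eq] at e2
      obtain ⟨V, hV, W, hW, hVW⟩ := Filter.mem_prod_iff.1 e2
      obtain ⟨V', ⟨hV', hp⟩, hVV⟩ := (path_connected_basis g₀).mem_iff.1 hV
      have e3 : ∀ᶠ z : (M × M) × G in 𝓝 ((y₀, y₀), g₀),
          z.1.1 ∈ W ∧ (∀ t ∈ (Set.univ : Set unitInterval), c t • z.1.1 ∈ U) ∧ z.2 ∈ V' := by
        have t1 : Tendsto (fun z : (M × M) × G => z.1.1) (𝓝 ((y₀, y₀), g₀)) (𝓝 y₀) :=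
          (continuous_fst.comp continuous_fst).tendsto _
        have t2 : Tendsto (fun z : (M × M) × G => z.2) (𝓝 ((y₀, y₀), g₀)) (𝓝 g₀) :=
          continuous_snd.tendsto _
        exact (t1.eventually hW).and ((t1.eventually e1).and (t2.eventually hV'))
      filter_upwards [e3]
      rintro ⟨⟨y, y'⟩, g⟩ ⟨h1, h2, h3⟩ hgy
      simp only at h1 h2 h3 hgy ⊢
      have j1 : JoinedIn (MulAction.orbit G y ∩ U) y (g₀ • y) := by
        refine ⟨⟨⟨fun t => c t • y, by fun_prop⟩, by simp, by simp⟩, fun t => ?_⟩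
        exact ⟨MulAction.mem_orbit _ _, h2 t trivial⟩
      obtain ⟨d, hd⟩ := hp.joinedIn g₀ (mem_of_mem_nhds hV') g h3
      have j2 : JoinedIn (MulAction.orbit G y ∩ U) (g₀ • y) (g • y) := by
        refine ⟨⟨⟨fun t => d t • y, by fun_prop⟩, by simp, by simp⟩, fun t => ?_⟩
        exact ⟨MulAction.mem_orbit _ _, hVW (Set.mk_mem_prod (hVV (hd t)) h1)⟩
      rw [← hgy]
      exact j1.trans j2
    · have : ContinuousAt (fun z : (M × M) × G => (z.2 • z.1.1, z.1.2)) ((y₀, y₀), g₀) := by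
        fun_prop
      have h2 : ∀ᶠ p : M × M in 𝓝 (g₀ • y₀, y₀), p.1 ≠ p.2 :=
        (isOpen_ne_fun continuous_fst continuous_snd).mem_nhds hg
      filter_upwards [this.eventually h2] with z hz h
      exact absurd h hz
  filter_upwards [key] with q hq g
  exact hq g trivial

theorem reflTransGen_symm {Y : Type*} {R : Y → Y → Prop} (hR : ∀ x y, R x y → R y x) {a b : Y}
    (h : Relation.ReflTransGen R a b) : Relation.ReflTransGen R b a := by
  induction h with
  | refl => exact .refl
  | tail _ hbc ih => exact Relation.ReflTransGen.head (hR _ _ hbc) ih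

/-- A symmetric relation that holds locally on `S` connects, by chains, points joined by a path in
`S`. -/
theorem reflTransGen_of_joinedIn {Y : Type*} [TopologicalSpace Y] {S : Set Y} {R : Y → Y → Prop}
    (hR : ∀ x y, R x y → R y x) (hloc : ∀ x ∈ S, ∀ᶠ y in 𝓝[S] x, R x y) {a b : Y}
    (h : JoinedIn S a b) : Relation.ReflTransGen R a b := by
  obtain ⟨p, hp⟩ := h
  have hpre : IsPreconnected (Set.range p) := (isConnected_range p.continuous).isPreconnected
  have hsub : Set.range p ⊆ S := by rintro _ ⟨t, rfl⟩; exact hp t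
  refine hpre.induction₂ (Relation.ReflTransGen R) (fun x hx => ?_)
    (fun x y z _ _ _ => Relation.ReflTransGen.trans)
    (fun x y _ _ => reflTransGen_symm hR) ⟨0, p.source⟩ ⟨1, p.target⟩
  have h1 : ∀ᶠ y in 𝓝[Set.range p] x, R x y :=
    Filter.Eventually.filter_mono (nhdsWithin_mono _ hsub) (hloc x (hsub hx))
  exact h1.mono fun y => Relation.ReflTransGen.single
end

section
variable {G M : Type*} [Group G] [TopologicalSpace G] [CompactSpace G]
  [LocallyPathConnectedSpace G] [MetricSpace M] [CompactSpace M] [MulAction G M]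
  [ContinuousSMul G M]

set_option linter.unusedSectionVars false in
theorem t2_quotient : T2Space (Quotient (MulAction.orbitRel G M)) := by
  rw [t2Space_iff_of_isOpenQuotientMap (π := (Quotient.mk (MulAction.orbitRel G M))) MulAction.isOpenQuotientMap_quotientMk]
  have : {q : M × M | (Quotient.mk (MulAction.orbitRel G M)) q.1 = (Quotient.mk (MulAction.orbitRel G M)) q.2} =
      (fun z : G × M => (z.1 • z.2, z.2)) '' Set.univ := by
    ext ⟨a, b⟩
    simp only [Set.mem_ofPred_eq, Quotient.eq, MulAction.orbitRel_apply, MulAction.mem_orbit_iff,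
      Set.image_univ, Set.mem_range, Prod.exists, Prod.mk.injEq]
    constructor
    · rintro ⟨g, rfl⟩; exact ⟨g, b, rfl, rfl⟩
    · rintro ⟨g, c, rfl, rfl⟩; exact ⟨g, rfl⟩
  rw [this]
  exact (isCompact_univ.image (by fun_prop)).isClosed

/-- The pullback of `M → M/G` along a path `γ` is locally connected by fine chains: any two of its
points near `a` are joined by arbitrarily fine chains staying near `a`. -/
theorem local_chain
    (hstab : ∀ (y : M) (g : G), g • y = y → JoinedIn {h : G | h • y = y} 1 g)
    (γ : C(unitInterval, (Quotient (MulAction.orbitRel G M)))) (a : {z : unitInterval × M // (Quotient.mk (MulAction.orbitRel G M)) z.2 = γ z.1}) {ε : ℝ} (hε : 0 < ε) :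
    ∃ V ∈ 𝓝 a, ∀ x ∈ V, ∀ y ∈ V, ∀ δ' > 0, Relation.ReflTransGen
      (fun x y : {z : unitInterval × M // (Quotient.mk (MulAction.orbitRel G M)) z.2 = γ z.1} =>
        dist x y < δ' ∧ dist x a < ε ∧ dist y a < ε) x y := by
  obtain ⟨⟨t₀, y₀⟩, ha⟩ := a
  simp only at ha
  have hopen : IsOpenMap (Quotient.mk (MulAction.orbitRel G M)) := isOpenMap_quotient_mk'_mul
  -- near `y₀`, points of one fibre are joined inside the fibre without leaving the `ε`-ball
  obtain ⟨B, hB, hBj⟩ : ∃ B : Set M, B ∈ 𝓝 y₀ ∧ (∀ y ∈ B, ∀ y' ∈ B, (Quotient.mk (MulAction.orbitRel G M)) y = (Quotient.mk (MulAction.orbitRel G M)) y' →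
      JoinedIn (MulAction.orbit G y ∩ Metric.ball y₀ ε) y y') := by
    have h := eventually_joinedIn_orbit hstab y₀ (Metric.ball_mem_nhds y₀ hε)
    rw [nhds_prod_eq, Filter.eventually_prod_self_iff'] at h
    obtain ⟨B, hB, h⟩ := h
    refine ⟨B, hB, fun y hy y' hy' hyy => ?_⟩
    have : y' ∈ MulAction.orbit G y := by
      rw [← MulAction.orbitRel_apply]; exact Quotient.exact hyy.symm
    obtain ⟨g, hg⟩ := this
    exact h y hy y' hy' g hg
  obtain ⟨B', hB'B, hB'o, hyB'⟩ := mem_nhds_iff.1 (Filter.inter_mem hB (Metric.ball_mem_nhds y₀ hε))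
  obtain ⟨J, hJo, hJ0, hJ1, hJpre⟩ : ∃ J : Set unitInterval, J ∈ 𝓝 t₀ ∧ J ⊆ γ ⁻¹' ((Quotient.mk (MulAction.orbitRel G M)) '' B') ∧
      J ⊆ Metric.ball t₀ ε ∧ IsPreconnected J := by
    have h1 : γ ⁻¹' ((Quotient.mk (MulAction.orbitRel G M)) '' B') ∈ 𝓝 t₀ :=
      ((hopen _ hB'o).preimage γ.continuous).mem_nhds ⟨y₀, hyB', ha⟩
    have : LocallyPathConnectedSpace unitInterval :=
      Convex.locallyPathConnectedSpace (E := ℝ) (convex_Icc (0 : ℝ) 1)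
    obtain ⟨J, ⟨hJ, hJ'⟩, hs⟩ := (path_connected_basis t₀).mem_iff.1
      (Filter.inter_mem h1 (Metric.ball_mem_nhds t₀ hε))
    exact ⟨J, hJ, hs.trans Set.inter_subset_left, hs.trans Set.inter_subset_right,
      hJ'.isConnected.isPreconnected⟩
  refine ⟨{x | x.1.1 ∈ J ∧ x.1.2 ∈ B'}, ?_, ?_⟩
  · have h1 : Tendsto (fun x : {z : unitInterval × M // (Quotient.mk (MulAction.orbitRel G M)) z.2 = γ z.1} => x.1)
      (𝓝 ⟨(t₀, y₀), ha⟩) (𝓝 (t₀, y₀)) := continuous_subtype_val.tendsto _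
    have h2 : J ×ˢ B' ∈ 𝓝 (t₀, y₀) := prod_mem_nhds hJo (hB'o.mem_nhds hyB')
    exact h1 h2
  rintro ⟨⟨t, y⟩, hy⟩ ⟨htJ, hyB⟩ ⟨⟨t', y'⟩, hy'⟩ ⟨htJ', hyB2⟩ δ' hδ'
  simp only at htJ hyB htJ' hyB2 hy hy'
  set R := (fun x y : {z : unitInterval × M // (Quotient.mk (MulAction.orbitRel G M)) z.2 = γ z.1} =>
        dist x y < δ' ∧ dist x ⟨(t₀, y₀), ha⟩ < ε ∧ dist y ⟨(t₀, y₀), ha⟩ < ε) with hRdef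
  have hRs : ∀ x y, R x y → R y x := fun x y h => ⟨by rw [dist_comm]; exact h.1, h.2.2, h.2.1⟩
  -- within a fibre the chain comes from a path, between nearby fibres from openness of the projection
  have fib : ∀ s ∈ J, ∀ z z' (hz : (Quotient.mk (MulAction.orbitRel G M)) z = γ s) (hz' : (Quotient.mk (MulAction.orbitRel G M)) z' = γ s), z ∈ B' → z' ∈ B' →
      Relation.ReflTransGen R ⟨(s, z), hz⟩ ⟨(s, z'), hz'⟩ := by
    intro s hs z z' hz hz' hzB hzB'
    obtain ⟨p, hp⟩ := hBj z (hB'B hzB).1 z' (hB'B hzB').1 (hz.trans hz'.symm)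
    have hj : JoinedIn {x : {z : unitInterval × M // (Quotient.mk (MulAction.orbitRel G M)) z.2 = γ z.1} |
        dist x ⟨(t₀, y₀), ha⟩ < ε} ⟨(s, z), hz⟩ ⟨(s, z'), hz'⟩ := by
      refine ⟨⟨⟨fun τ => ⟨(s, p τ), ?_⟩, ?_⟩, ?_, ?_⟩, ?_⟩
      · rw [← hz]
        exact Quotient.sound ((MulAction.orbitRel_apply).2 (hp τ).1)
      · fun_prop
      · simp
      · simp
      · intro τ
        change dist ((s, p τ) : unitInterval × M) (t₀, y₀) < ε
        exact max_lt (hJ1 hs) (hp τ).2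
    refine reflTransGen_of_joinedIn hRs (fun x hx => ?_) hj
    filter_upwards [mem_nhdsWithin_of_mem_nhds (Metric.ball_mem_nhds x hδ'), self_mem_nhdsWithin]
      with w hw hw'
    exact ⟨by rw [dist_comm]; exact hw, hx, hw'⟩
  have ex : ∀ s ∈ J, ∃ z ∈ B', (Quotient.mk (MulAction.orbitRel G M)) z = γ s := fun s hs => hJ0 hs
  have main := hJpre.induction₂ (fun s s' => ∀ z z' (hz : (Quotient.mk (MulAction.orbitRel G M)) z = γ s) (hz' : (Quotient.mk (MulAction.orbitRel G M)) z' = γ s'),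
    z ∈ B' → z' ∈ B' → Relation.ReflTransGen R ⟨(s, z), hz⟩ ⟨(s', z'), hz'⟩) ?_ ?_ ?_ htJ htJ'
  · exact main y y' hy hy' hyB hyB2
  · intro s hs
    obtain ⟨z₁, hz₁B, hz₁⟩ := ex s hs
    have h1 : (Quotient.mk (MulAction.orbitRel G M)) '' (B' ∩ Metric.ball z₁ δ') ∈ 𝓝 (γ s) :=
      (hopen _ (hB'o.inter Metric.isOpen_ball)).mem_nhds
        ⟨z₁, ⟨hz₁B, Metric.mem_ball_self hδ'⟩, hz₁⟩
    filter_upwards [mem_nhdsWithin_of_mem_nhds (γ.continuous.continuousAt h1),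
      mem_nhdsWithin_of_mem_nhds (Metric.ball_mem_nhds s hδ'), self_mem_nhdsWithin]
      with s' hs' hsd hs'J z z' hz hz' hzB hzB'
    obtain ⟨w, ⟨hwB, hwd⟩, hw⟩ := hs'
    refine (fib s hs z z₁ hz hz₁ hzB hz₁B).trans (Relation.ReflTransGen.head ?_
      (fib s' hs'J w z' hw hz' hwB hzB'))
    refine ⟨?_, max_lt (hJ1 hs) (hB'B hz₁B).2, max_lt (hJ1 hs'J) (hB'B hwB).2⟩
    rw [dist_comm]
    exact max_lt hsd hwd
  · intro s₁ s₂ s₃ h1 h2 h3 h12 h23 z z' hz hz' hzB hzB'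
    obtain ⟨w, hwB, hw⟩ := ex s₂ h2
    exact (h12 z w hz hw hzB hwB).trans (h23 w z' hw hz' hwB hzB')
  · intro s₁ s₂ _ _ h z z' hz hz' hzB hzB'
    exact reflTransGen_symm hRs (h z' z hz' hz hzB' hzB)

/-- A path in the quotient by a compact group with path connected stabilizers lifts, with prescribed
end points, after a reparametrisation `τ`. The pullback of `M → M/G` along the path is
path connected because it is compact, its fine chains stay small locally, and its fibres are orbits of
a path connected group. -/
theorem exists_path_lift [PathConnectedSpace G]
    (hstab : ∀ (y : M) (g : G), g • y = y → JoinedIn {h : G | h • y = y} 1 g)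
    {x₀ x₁ : (Quotient (MulAction.orbitRel G M))} (γ : Path x₀ x₁) (y₀ y₁ : M) (h₀ : (Quotient.mk (MulAction.orbitRel G M)) y₀ = x₀) (h₁ : (Quotient.mk (MulAction.orbitRel G M)) y₁ = x₁) :
    ∃ (p : Path y₀ y₁) (τ : unitInterval → unitInterval), Continuous τ ∧ τ 0 = 0 ∧ τ 1 = 1 ∧
      ∀ s, (Quotient.mk (MulAction.orbitRel G M)) (p s) = γ (τ s) := by
  have := t2_quotient (G := G) (M := M)
  have hopen : IsOpenMap (Quotient.mk (MulAction.orbitRel G M)) := isOpenMap_quotient_mk'_mul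
  let Y := {z : unitInterval × M // (Quotient.mk (MulAction.orbitRel G M)) z.2 = γ z.1}
  have hcl : IsClosed {z : unitInterval × M | (Quotient.mk (MulAction.orbitRel G M)) z.2 = γ z.1} :=
    isClosed_eq (continuous_quotient_mk'.comp continuous_snd) (γ.continuous.comp continuous_fst)
  have : CompactSpace Y := isCompact_iff_compactSpace.1 hcl.isCompact
  obtain ⟨δ, hδ, hj⟩ := joined_of_chain (Y := Y) (by
    intro ε hε
    choose V hV hVc using fun a : Y => local_chain hstab γ.toContinuousMap a (half_pos hε)
    obtain ⟨δ, hδ, hl⟩ := lebesgue_number_lemma_of_metric (s := (Set.univ : Set Y))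
      isCompact_univ (c := fun a => interior (V a)) (fun a => isOpen_interior)
      (fun a _ => Set.mem_iUnion.2 ⟨a, mem_interior_iff_mem_nhds.2 (hV a)⟩)
    refine ⟨δ, hδ, fun a b hab δ' hδ' => ?_⟩
    obtain ⟨c, hc⟩ := hl a trivial
    have haV := interior_subset (hc (Metric.mem_ball_self hδ))
    have hbV := interior_subset (hc (Metric.mem_ball'.2 hab))
    have h := hVc c a haV b hbV δ' hδ'
    by_cases hne : a = b
    · rw [hne]
    have hac : dist a c < ε / 2 := by
      rcases Relation.ReflTransGen.cases_head h with h | ⟨d, h, -⟩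
      · exact absurd h hne
      · exact h.2.1
    refine Relation.ReflTransGen.mono (fun x y hxy => ⟨hxy.1, ?_⟩) _ _ h
    calc dist y a ≤ dist y c + dist c a := dist_triangle _ _ _
      _ < ε / 2 + ε / 2 := add_lt_add hxy.2.2 (by rwa [dist_comm])
      _ = ε := add_halves ε)
  -- the fibres of the pullback are orbits of a path connected group
  have hfib : ∀ t y y' (hy : (Quotient.mk (MulAction.orbitRel G M)) y = γ t) (hy' : (Quotient.mk (MulAction.orbitRel G M)) y' = γ t),
      Joined (⟨(t, y), hy⟩ : Y) ⟨(t, y'), hy'⟩ := by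
    intro t y y' hy hy'
    have : y' ∈ MulAction.orbit G y := by
      rw [← MulAction.orbitRel_apply]; exact Quotient.exact (hy'.trans hy.symm)
    obtain ⟨g, rfl⟩ := this
    obtain ⟨c⟩ := PathConnectedSpace.joined (1 : G) g
    refine ⟨⟨⟨fun s => ⟨(t, c s • y), ?_⟩, ?_⟩, ?_, ?_⟩⟩
    · rw [← hy]
      exact Quotient.sound ((MulAction.orbitRel_apply).2 (MulAction.mem_orbit _ _))
    · fun_prop
    · simp
    · simp
  have main := (isPreconnected_univ (α := unitInterval)).induction₂
    (fun s s' => ∀ z z' (hz : (Quotient.mk (MulAction.orbitRel G M)) z = γ s) (hz' : (Quotient.mk (MulAction.orbitRel G M)) z' = γ s'),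
      Joined (⟨(s, z), hz⟩ : Y) ⟨(s', z'), hz'⟩) ?_ ?_ ?_ (Set.mem_univ 0) (Set.mem_univ 1)
  · obtain ⟨q⟩ := main y₀ y₁ (by simpa using h₀) (by simpa using h₁)
    refine ⟨⟨⟨fun s => (q s).1.2, by fun_prop⟩, by simp, by simp⟩, fun s => (q s).1.1,
      by fun_prop, by simp, by simp, fun s => (q s).2⟩
  · intro s _
    obtain ⟨z₁, hz₁⟩ := Quotient.exists_rep (γ s)
    have h1 : (Quotient.mk (MulAction.orbitRel G M)) '' (Metric.ball z₁ δ) ∈ 𝓝 (γ s) :=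
      (hopen _ Metric.isOpen_ball).mem_nhds ⟨z₁, Metric.mem_ball_self hδ, hz₁⟩
    rw [nhdsWithin_univ]
    filter_upwards [γ.continuous.continuousAt h1, Metric.ball_mem_nhds s hδ]
      with s' hs' hsd z z' hz hz'
    obtain ⟨w, hwd, hw⟩ := hs'
    refine (hfib s z z₁ hz hz₁).trans ((hj _ _ ?_).trans (hfib s' w z' hw hz'))
    rw [dist_comm]
    exact max_lt hsd hwd
  · intro s₁ s₂ s₃ _ _ _ h12 h23 z z' hz hz'
    obtain ⟨w, hw⟩ := Quotient.exists_rep (γ s₂)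
    exact (h12 z w hz hw).trans (h23 w z' hw hz')
  · intro s₁ s₂ _ _ h z z' hz hz'
    exact (h z' z hz' hz).symm
end

end

/-! ### A van Kampen argument -/

section
open Topology Filter

/-- The simple connectivity half of van Kampen's theorem: paths in a single `O i` are determined by
their end points up to homotopy in `S`, the pairwise intersections are path connected, and every
point of the loop lies in a member of the cover that also contains the base point. -/
theorem vanKampen_loop {S ι : Type*} [TopologicalSpace S] (O : ι → Set S)
    (hopen : ∀ i, IsOpen (O i))
    (hnull : ∀ i (x y : S) (α β : Path x y), (∀ t, α t ∈ O i) → (∀ t, β t ∈ O i) → α.Homotopic β)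
    (hconn : ∀ i j (x y : S), x ∈ O i ∩ O j → y ∈ O i ∩ O j → JoinedIn (O i ∩ O j) x y)
    {x : S} (γ : Path x x) (hcover : ∀ t, ∃ i, x ∈ O i ∧ γ t ∈ O i) :
    γ.Homotopic (Path.refl x) := by
  -- the initial part of `γ` up to `t`, closed up inside some member of the cover, is null-homotopic
  let Good : unitInterval → Prop := fun t => ∀ i, γ 0 ∈ O i → γ t ∈ O i →
    ∀ β : Path (γ t) (γ 0), (∀ s, β s ∈ O i) →
      ((γ.subpath 0 t).trans β).Homotopic (Path.refl (γ 0))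
  have hx : γ 0 = x := γ.source
  have step : ∀ t t' i, γ 0 ∈ O i → γ '' (Set.uIcc t t') ⊆ O i → Good t → Good t' := by
    intro t t' i h0 hsub hgood j h0j htj β hβ
    have ht' : γ t' ∈ O i := hsub ⟨t', Set.right_mem_uIcc, rfl⟩
    have ht : γ t ∈ O i := hsub ⟨t, Set.left_mem_uIcc, rfl⟩
    obtain ⟨α, hα⟩ := hconn i j _ _ ⟨ht', htj⟩ ⟨h0, h0j⟩
    have e1 : β.Homotopic α := hnull j _ _ _ _ hβ fun s => (hα s).2
    have e2 : ((γ.subpath 0 t).trans (γ.subpath t t')).Homotopic (γ.subpath 0 t') :=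
      ⟨Path.Homotopy.subpathTransSubpath γ 0 t t'⟩
    have e3 : ((γ.subpath 0 t).trans ((γ.subpath t t').trans α)).Homotopic (Path.refl (γ 0)) := by
      refine hgood i h0 ht _ fun s => ?_
      have : ((γ.subpath t t').trans α) s ∈ Set.range ((γ.subpath t t').trans α) := ⟨s, rfl⟩
      rw [Path.trans_range, Path.range_subpath] at this
      rcases this with h | ⟨s', h⟩
      · exact hsub h
      · rw [← h]; exact (hα s').1
    refine (e2.symm.hcomp e1).trans (Path.Homotopic.trans ⟨Path.Homotopy.transAssoc _ _ _⟩ e3)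
  have h0 : Good 0 := by
    intro i h0 _ β hβ
    rw [Path.subpath_self]
    exact Path.Homotopic.trans ⟨Path.Homotopy.reflTrans β⟩
      (hnull i _ _ _ _ hβ fun s => h0)
  have h1 : Good 1 := by
    refine ((isPreconnected_univ (α := unitInterval)).induction₂ (fun t t' => Good t ↔ Good t')
      ?_ (fun _ _ _ _ _ _ h h' => h.trans h') (fun _ _ _ _ h => h.symm)
      (Set.mem_univ 0) (Set.mem_univ 1)).1 h0
    intro t _
    obtain ⟨i, hi0, hit⟩ := hcover t
    rw [nhdsWithin_univ]
    rw [← hx] at hi0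
    obtain ⟨ε, hε, hball⟩ := Metric.mem_nhds_iff.1
      (γ.continuous.continuousAt ((hopen i).mem_nhds hit))
    filter_upwards [Metric.ball_mem_nhds t hε] with t' ht'
    have hs : γ '' (Set.uIcc t t') ⊆ O i := by
      rintro _ ⟨s, hs, rfl⟩
      refine hball ?_
      rw [Metric.mem_ball] at ht' ⊢
      refine lt_of_le_of_lt ?_ ht'
      rw [Subtype.dist_eq, Subtype.dist_eq, Real.dist_eq, Real.dist_eq]
      rcases Set.mem_uIcc.1 hs with ⟨h1, h2⟩ | ⟨h1, h2⟩
      · have h1' : (t : ℝ) ≤ s := h1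
        have h2' : (s : ℝ) ≤ t' := h2
        rw [abs_of_nonneg (by linarith), abs_of_nonneg (by linarith)]; linarith
      · have h1' : (t' : ℝ) ≤ s := h1
        have h2' : (s : ℝ) ≤ t := h2
        rw [abs_of_nonpos (by linarith), abs_of_nonpos (by linarith)]; linarith
    exact ⟨step t t' i hi0 hs, step t' t i hi0 (by rwa [Set.uIcc_comm])⟩
  obtain ⟨i, hi, -⟩ := hcover 0
  have h := h1 i (by rwa [hx]) (by rwa [γ.target]) ((Path.refl x).cast γ.target γ.source)
    (fun s => by simpa using hi)
  rw [Path.subpath_zero_one] at h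
  have h' := h.pathCast γ.source.symm γ.source.symm
  refine Path.Homotopic.trans ?_ (h'.trans ?_)
  · refine Path.Homotopic.trans (Path.Homotopic.symm ⟨Path.Homotopy.transRefl γ⟩) ?_
    rw [show (((γ.cast γ.source γ.target).trans ((Path.refl x).cast γ.target γ.source)).cast
      γ.source.symm γ.source.symm) = γ.trans (Path.refl x) from by ext s; simp [Path.trans_apply]]
  · rw [show ((Path.refl (γ 0)).cast γ.source.symm γ.source.symm) = Path.refl x from by ext s; simp]

end

/-! ### Projections and frames -/

section
open Topology Filter Matrix
open scoped Matrix.Norms.L2Operator ComplexOrder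

/-- The orthogonal projection `F(FᴴF)⁻¹Fᴴ` onto the column space of `F`. It is meaningful when `FᴴF`
is invertible, i.e. when the columns are linearly independent. -/
noncomputable def fproj {n k : ℕ} (F : Matrix (Fin n) (Fin k) ℂ) : Matrix (Fin n) (Fin n) ℂ :=
  F * (Fᴴ * F)⁻¹ * Fᴴ

/-- The orthogonal projections of `ℂⁿ`, of all ranks: the disjoint union of the Grassmannians. -/
def Gr (n : ℕ) : Set (Matrix (Fin n) (Fin n) ℂ) := {P | Pᴴ = P ∧ P * P = P}

theorem isUnit_of_mulVec {k : ℕ} (M : Matrix (Fin k) (Fin k) ℂ) (h : ∀ v, M *ᵥ v = 0 → v = 0) :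
    IsUnit M := by
  rw [← Matrix.mulVec_injective_iff_isUnit]
  exact (injective_iff_map_eq_zero (Matrix.mulVecLin M)).2 h

theorem eq_zero_of_isUnit {k : ℕ} {M : Matrix (Fin k) (Fin k) ℂ} (h : IsUnit M) {v : Fin k → ℂ}
    (hv : M *ᵥ v = 0) : v = 0 :=
  (injective_iff_map_eq_zero (Matrix.mulVecLin M)).1 (Matrix.mulVec_injective_iff_isUnit.2 h) v hv

theorem fproj_frame {n k : ℕ} {F : Matrix (Fin n) (Fin k) ℂ} (hF : Fᴴ * F = 1) :
    fproj F = F * Fᴴ := by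
  simp [fproj, hF]

theorem fproj_mem {n k : ℕ} {F : Matrix (Fin n) (Fin k) ℂ} (hF : IsUnit (Fᴴ * F)) :
    fproj F ∈ Gr n := by
  have hd := (Matrix.isUnit_iff_isUnit_det _).1 hF
  constructor
  · simp [fproj, Matrix.conjTranspose_mul, Matrix.conjTranspose_nonsing_inv, Matrix.mul_assoc]
  · calc fproj F * fproj F = F * ((Fᴴ * F)⁻¹ * (Fᴴ * F)) * ((Fᴴ * F)⁻¹ * Fᴴ) := by
          simp only [fproj, Matrix.mul_assoc]
      _ = fproj F := by rw [Matrix.nonsing_inv_mul _ hd]; simp [fproj, Matrix.mul_assoc]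

theorem trace_fproj {n k : ℕ} {F : Matrix (Fin n) (Fin k) ℂ} (hF : IsUnit (Fᴴ * F)) :
    (fproj F).trace = k := by
  have hd := (Matrix.isUnit_iff_isUnit_det _).1 hF
  rw [fproj, Matrix.trace_mul_comm, ← Matrix.mul_assoc, Matrix.mul_nonsing_inv _ hd]
  simp

theorem fproj_mul {n k : ℕ} {F : Matrix (Fin n) (Fin k) ℂ} (hF : IsUnit (Fᴴ * F)) :
    fproj F * F = F := by
  have hd := (Matrix.isUnit_iff_isUnit_det _).1 hF
  rw [fproj, Matrix.mul_assoc, Matrix.mul_assoc, Matrix.nonsing_inv_mul _ hd, Matrix.mul_one]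

theorem isUnit_gram_of_mul {n k : ℕ} {F B : Matrix (Fin n) (Fin k) ℂ} (h : IsUnit (Bᴴ * F)) :
    IsUnit (Fᴴ * F) := by
  refine isUnit_of_mulVec _ fun v hv => eq_zero_of_isUnit h ?_
  rw [Matrix.conjTranspose_mul_self_mulVec_eq_zero] at hv
  rw [← Matrix.mulVec_mulVec, hv, Matrix.mulVec_zero]

/-- If `1 - P - Q` is invertible, for the projections `P`, `Q` onto the column spaces of `F`, `B`,
then `BᴴF` is injective. -/
theorem injective_of_isUnit {n k l : ℕ} {F : Matrix (Fin n) (Fin k) ℂ}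
    {B : Matrix (Fin n) (Fin l) ℂ} (hF : IsUnit (Fᴴ * F))
    (h : IsUnit (1 - fproj F - fproj B)) {v : Fin k → ℂ} (hv : (Bᴴ * F) *ᵥ v = 0) : v = 0 := by
  have h1 : F *ᵥ v = 0 := by
    refine eq_zero_of_isUnit h ?_
    rw [Matrix.sub_mulVec, Matrix.sub_mulVec, Matrix.one_mulVec, Matrix.mulVec_mulVec,
      fproj_mul hF, sub_self, zero_sub, neg_eq_zero, Matrix.mulVec_mulVec, fproj,
      Matrix.mul_assoc, ← Matrix.mulVec_mulVec, hv, Matrix.mulVec_zero]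
  refine eq_zero_of_isUnit hF ?_
  rw [← Matrix.mulVec_mulVec, h1, Matrix.mulVec_zero]

theorem isUnit_mul_of_isUnit {n k : ℕ} {F B : Matrix (Fin n) (Fin k) ℂ} (hF : IsUnit (Fᴴ * F))
    (h : IsUnit (1 - fproj F - fproj B)) : IsUnit (Bᴴ * F) :=
  isUnit_of_mulVec _ fun _ hv => injective_of_isUnit hF h hv

/-- Invertibility of `1 - P - Q` forces `P` and `Q` to have the same rank; by symmetry an inequality
suffices. -/
theorem rank_le_of_isUnit {n k l : ℕ} {F : Matrix (Fin n) (Fin k) ℂ}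
    {B : Matrix (Fin n) (Fin l) ℂ} (hF : IsUnit (Fᴴ * F))
    (h : IsUnit (1 - fproj F - fproj B)) : k ≤ l := by
  have := LinearMap.finrank_le_finrank_of_injective (f := Matrix.mulVecLin (Bᴴ * F))
    ((injective_iff_map_eq_zero _).2 fun v hv => injective_of_isUnit hF h hv)
  simpa using this

/-- Together with `isUnit_mul_of_isUnit`: the projections `P`, `Q` onto the column spaces of `F`, `B`
satisfy `1 - P - Q` invertible exactly when `BᴴF` is invertible. -/
theorem isUnit_of_isUnit_mul {n k : ℕ} {F B : Matrix (Fin n) (Fin k) ℂ}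
    (h : IsUnit (Bᴴ * F)) : IsUnit (1 - fproj F - fproj B) := by
  have h' : IsUnit (Fᴴ * B) := by
    have := h.star
    rwa [Matrix.star_eq_conjTranspose, Matrix.conjTranspose_mul,
      Matrix.conjTranspose_conjTranspose] at this
  have hF := isUnit_gram_of_mul h
  have hB := isUnit_gram_of_mul h'
  refine isUnit_of_mulVec _ fun v hv => ?_
  have hP := (fproj_mem hF).2
  have hQ := (fproj_mem hB).2
  have key : ∀ {F B : Matrix (Fin n) (Fin k) ℂ}, IsUnit (Bᴴ * F) → IsUnit (Bᴴ * B) →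
      (fproj B) *ᵥ ((fproj F) *ᵥ v) = 0 → fproj F *ᵥ v = 0 := by
    intro F B h hB h0
    have e : Bᴴ * fproj B = Bᴴ := by
      have := congrArg Matrix.conjTranspose (fproj_mul hB)
      rwa [Matrix.conjTranspose_mul, (fproj_mem hB).1] at this
    have h1 := congrArg (fun w => Bᴴ *ᵥ w) h0
    simp only [Matrix.mulVec_zero] at h1
    rw [Matrix.mulVec_mulVec, e, fproj, Matrix.mul_assoc F, ← Matrix.mulVec_mulVec,
      Matrix.mulVec_mulVec] at h1
    rw [fproj, Matrix.mul_assoc F, ← Matrix.mulVec_mulVec, eq_zero_of_isUnit h h1,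
      Matrix.mulVec_zero]
  rw [Matrix.sub_mulVec, Matrix.sub_mulVec, Matrix.one_mulVec] at hv
  have e1 := congrArg (fun w => fproj F *ᵥ w) hv
  have e2 := congrArg (fun w => fproj B *ᵥ w) hv
  simp only [Matrix.mulVec_sub, Matrix.mulVec_mulVec, hP, hQ, Matrix.mulVec_zero, sub_self,
    zero_sub, neg_eq_zero] at e1 e2
  rw [sub_right_comm, sub_self, zero_sub, neg_eq_zero] at e2
  rw [← Matrix.mulVec_mulVec] at e1 e2
  rw [key h hB e2, key h' hF e1] at hv
  simpa using hv

/-- An orthonormal basis of the range of an orthogonal projection, as the columns of `F`. -/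
theorem exists_frame {n : ℕ} {P : Matrix (Fin n) (Fin n) ℂ} (hP : P ∈ Gr n) :
    ∃ (k : ℕ) (F : Matrix (Fin n) (Fin k) ℂ), Fᴴ * F = 1 ∧ fproj F = P := by
  have hH : P.IsHermitian := hP.1
  let U : Matrix (Fin n) (Fin n) ℂ := hH.eigenvectorUnitary
  have hU : Uᴴ * U = 1 := (Matrix.mem_unitaryGroup_iff' (A := U)).1 hH.eigenvectorUnitary.2
  have hU' : U * Uᴴ = 1 := (Matrix.mem_unitaryGroup_iff (A := U)).1 hH.eigenvectorUnitary.2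
  let D : Matrix (Fin n) (Fin n) ℂ := Matrix.diagonal (fun i => (hH.eigenvalues i : ℂ))
  have hs : P = U * D * Uᴴ := by
    have := hH.spectral_theorem
    rw [Unitary.conjStarAlgAut_apply] at this
    exact this
  have hD : D = Uᴴ * P * U := by
    rw [hs, show Uᴴ * (U * D * Uᴴ) * U = (Uᴴ * U) * D * (Uᴴ * U) by simp only [Matrix.mul_assoc],
      hU]; simp
  have hDD : D * D = D := by
    rw [hD, show Uᴴ * P * U * (Uᴴ * P * U) = Uᴴ * (P * (U * Uᴴ) * P) * U by
      simp only [Matrix.mul_assoc], hU', Matrix.mul_one, hP.2]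
  have hd : ∀ i, hH.eigenvalues i = 0 ∨ hH.eigenvalues i = 1 := by
    intro i
    have := congrFun (congrFun hDD i) i
    simp only [D, Matrix.diagonal_mul_diagonal, Matrix.diagonal_apply_eq] at this
    have h2 : hH.eigenvalues i * hH.eigenvalues i = hH.eigenvalues i := by exact_mod_cast this
    rcases eq_or_ne (hH.eigenvalues i) 0 with h | h
    · exact Or.inl h
    · exact Or.inr (mul_left_cancel₀ h (by rw [h2, mul_one]))
  let κ := {i // hH.eigenvalues i = 1}
  let e := (Fintype.equivFin κ).symm
  let F : Matrix (Fin n) (Fin (Fintype.card κ)) ℂ := U.submatrix id (fun j => (e j : Fin n))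
  have hinj : Function.Injective (fun j => (e j : Fin n)) :=
    Subtype.val_injective.comp e.injective
  have hF : Fᴴ * F = 1 := by
    have : Fᴴ * F = (Uᴴ * U).submatrix (fun j => (e j : Fin n)) (fun j => (e j : Fin n)) := by
      ext i j; simp [F, Matrix.mul_apply]
    rw [this, hU, Matrix.submatrix_one _ hinj]
  refine ⟨_, F, hF, ?_⟩
  rw [fproj_frame hF]
  refine Eq.trans ?_ hs.symm
  ext i j
  rw [Matrix.mul_assoc, Matrix.mul_apply, Matrix.mul_apply]
  simp only [D, Matrix.diagonal_mul, F, Matrix.conjTranspose_apply, Matrix.submatrix_apply, id]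
  rw [Equiv.sum_comp e (fun a : κ => U i a * star (U j a)),
    ← Finset.sum_subtype (Finset.univ.filter fun l => hH.eigenvalues l = 1) (by simp)
      (fun l => U i l * star (U j l)), Finset.sum_filter]
  refine Finset.sum_congr rfl fun l _ => ?_
  rcases hd l with h | h <;> simp [h]

/-- On a complex line of matrices containing an invertible one, all but finitely many are
invertible: the determinant is a nonzero polynomial. -/
theorem finite_det_zero {k : ℕ} (M₀ M₁ : Matrix (Fin k) (Fin k) ℂ) (z₀ : ℂ)
    (h : IsUnit ((1 - z₀) • M₀ + z₀ • M₁)) :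
    {z : ℂ | ¬ IsUnit ((1 - z) • M₀ + z • M₁)}.Finite := by
  let N : Matrix (Fin k) (Fin k) (Polynomial ℂ) :=
    (1 - Polynomial.X : Polynomial ℂ) • M₀.map Polynomial.C + (Polynomial.X : Polynomial ℂ) • M₁.map Polynomial.C
  have he : ∀ z, N.det.eval z = ((1 - z) • M₀ + z • M₁).det := by
    intro z
    rw [← Polynomial.coe_evalRingHom, RingHom.map_det]
    congr 1
    ext i j
    simp [N]
    ring
  have hN : N.det ≠ 0 := by
    intro h0
    have := he z₀
    rw [h0, Polynomial.eval_zero] at this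
    exact ((Matrix.isUnit_iff_isUnit_det _).1 h).ne_zero this.symm
  refine (N.det.roots.toFinset.finite_toSet).subset fun z hz => ?_
  simp only [Finset.mem_coe, Multiset.mem_toFinset]
  rw [Polynomial.mem_roots hN, Polynomial.IsRoot, he]
  by_contra hc
  exact hz ((Matrix.isUnit_iff_isUnit_det _).2 (isUnit_iff_ne_zero.2 hc))

theorem continuous_fproj {X : Type*} [TopologicalSpace X] {n k : ℕ}
    {F : X → Matrix (Fin n) (Fin k) ℂ} (hF : Continuous F) (h : ∀ x, IsUnit ((F x)ᴴ * F x)) :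
    Continuous fun x => fproj (F x) := by
  have hG : Continuous fun x => (F x)ᴴ * F x := hF.matrix_conjTranspose.matrix_mul hF
  have hd : ∀ x, ((F x)ᴴ * F x).det ≠ 0 := fun x => ((Matrix.isUnit_iff_isUnit_det _).1 (h x)).ne_zero
  have hi : Continuous fun x => ((F x)ᴴ * F x)⁻¹ := by
    simp only [Matrix.inv_def, Ring.inverse_eq_inv']
    exact (hG.matrix_det.inv₀ hd).smul hG.matrix_adjugate
  exact (hF.matrix_mul hi).matrix_mul hF.matrix_conjTranspose

end

/-! ### Spaces in which all loops are null-homotopic -/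

section
open Topology Filter Matrix
open scoped Matrix.Norms.L2Operator ComplexOrder

/-- The complement of a finite set in `ℂ` is path connected. -/
theorem compl_finite_joined {s : Set ℂ} (hs : s.Finite) {a b : ℂ} (ha : a ∉ s) (hb : b ∉ s) :
    JoinedIn sᶜ a b :=
  (Set.Countable.isPathConnected_compl_of_one_lt_rank
    (by rw [Complex.rank_real_complex]; norm_num) hs.countable).joinedIn a ha b hb

/-- The trace of a projection is its rank, an integer, hence is constant along paths. -/
theorem gr_trace_eq {n : ℕ} {P Q : Gr n} (γ : Path P Q) : P.1.trace = Q.1.trace := by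
  choose k F hF hP using fun t => exists_frame (γ t).2
  have ht : ∀ t, (γ t).1.trace = k t := fun t => by
    rw [← hP t, trace_fproj]; rw [hF t]; exact isUnit_one
  have hc : Continuous fun t => (k t : ℝ) := by
    have : Continuous fun t => (γ t).1.trace.re :=
      Complex.continuous_re.comp ((continuous_subtype_val.comp γ.continuous).matrix_trace)
    simpa only [ht, Complex.natCast_re] using this
  have hk : Continuous k := Nat.isClosedEmbedding_coe_real.isEmbedding.continuous_iff.2 hc
  have := PreconnectedSpace.constant (inferInstance : PreconnectedSpace unitInterval) hk (x := 0) (y := 1)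
  have h0 := ht 0
  have h1 := ht 1
  rw [γ.source] at h0
  rw [γ.target] at h1
  rw [h0, h1, this]

/-- Two paths with the same end points are homotopic in `S` if they run in a subset `O` that can be
contracted to a point inside `S`. -/
theorem homotopic_of_contraction {S : Type*} [TopologicalSpace S] (O : Set S) (c : S)
    (H : O × unitInterval → S) (hH : Continuous H) (h0 : ∀ x, H (x, 0) = x) (h1 : ∀ x, H (x, 1) = c)
    {x y : S} (α β : Path x y) (hα : ∀ t, α t ∈ O) (hβ : ∀ t, β t ∈ O) : α.Homotopic β := by
  have key : ∀ (α : Path x y) (hα : ∀ t, α t ∈ O) (hx : x ∈ O) (hy : y ∈ O)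
      (px : Path x c) (py : Path y c),
      (∀ t, px t = H (⟨x, hx⟩, t)) → (∀ t, py t = H (⟨y, hy⟩, t)) → (α.trans py).Homotopic px := by
    intro α hα hx hy px py hpx hpy
    let α' : Path (⟨x, hx⟩ : O) ⟨y, hy⟩ :=
      { toFun := fun t => ⟨α t, hα t⟩, continuous_toFun := by fun_prop
        source' := by simp, target' := by simp }
    let f : C(O, S) := ⟨Subtype.val, continuous_subtype_val⟩
    let g : C(O, S) := ContinuousMap.const _ c
    let K : f.Homotopy g :=
      { toFun := fun q => H (q.2, q.1), continuous_toFun := by fun_prop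
        map_zero_left := fun x => h0 x, map_one_left := fun x => h1 x }
    have := Path.Homotopic.map_trans_evalAt K α'
    have e1 : α'.map f.continuous = α := by ext t; rfl
    have e2 : K.evalAt ⟨y, hy⟩ = py := by ext t; exact (hpy t).symm
    have e3 : K.evalAt ⟨x, hx⟩ = px := by ext t; exact (hpx t).symm
    have e4 : α'.map g.continuous = Path.refl c := by ext t; rfl
    rw [e1, e2, e3, e4] at this
    exact this.trans ⟨Path.Homotopy.transRefl px⟩
  have hx : x ∈ O := by simpa using hα 0
  have hy : y ∈ O := by simpa using hα 1
  let px : Path x c := { toFun := fun t => H (⟨x, hx⟩, t), continuous_toFun := by fun_prop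
                         source' := h0 _, target' := h1 _ }
  let py : Path y c := { toFun := fun t => H (⟨y, hy⟩, t), continuous_toFun := by fun_prop
                         source' := h0 _, target' := h1 _ }
  have a1 := key α hα hx hy px py (fun _ => rfl) (fun _ => rfl)
  have a2 := key β hβ hx hy px py (fun _ => rfl) (fun _ => rfl)
  have a3 := a1.trans a2.symm
  have b : ∀ α : Path x y, ((α.trans py).trans py.symm).Homotopic α := fun α =>
    Path.Homotopic.trans ⟨Path.Homotopy.transAssoc _ _ _⟩
      ((Path.Homotopic.hcomp (.refl α) ⟨(Path.Homotopy.reflTransSymm py).symm⟩).trans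
        ⟨Path.Homotopy.transRefl α⟩)
  exact (b α).symm.trans ((a3.hcomp (.refl _)).trans (b β))

/-- Every loop in `S` is null-homotopic; equivalently, every path component is simply connected. -/
def NullLoops (S : Type*) [TopologicalSpace S] : Prop :=
  ∀ (x : S) (γ : Path x x), γ.Homotopic (Path.refl x)

theorem NullLoops.homotopic {S : Type*} [TopologicalSpace S] (h : NullLoops S) {x y : S}
    (α β : Path x y) : α.Homotopic β := by
  have := h x (α.trans β.symm)
  have b : ((α.trans β.symm).trans β).Homotopic α :=
    Path.Homotopic.trans ⟨Path.Homotopy.transAssoc _ _ _⟩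
      ((Path.Homotopic.hcomp (.refl α) ⟨(Path.Homotopy.reflSymmTrans β).symm⟩).trans
        ⟨Path.Homotopy.transRefl α⟩)
  exact b.symm.trans ((this.hcomp (.refl β)).trans ⟨Path.Homotopy.reflTrans β⟩)

/-- `NullLoops` passes from `T` to a space that is a homotopy retract of `T`. -/
theorem NullLoops.of_retract {S T : Type*} [TopologicalSpace S] [TopologicalSpace T] (h : NullLoops T)
    (f : C(S, T)) (g : C(T, S)) (H : ContinuousMap.Homotopy (ContinuousMap.id S) (g.comp f)) :
    NullLoops S := by
  intro x γ
  have h1 := Path.Homotopic.map_trans_evalAt H γ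
  have e1 : γ.map (ContinuousMap.id S).continuous = γ := by ext t; rfl
  have e2 : (γ.map (g.comp f).continuous).Homotopic (Path.refl _) := by
    have := (h _ (γ.map f.continuous)).map g
    exact this
  have h2 : (γ.trans (H.evalAt x)).Homotopic (H.evalAt x) := by
    have := h1.trans (((Path.Homotopic.refl (H.evalAt x)).hcomp e2).trans
      ⟨Path.Homotopy.transRefl _⟩)
    rwa [e1] at this
  set p := H.evalAt x
  have b : ((γ.trans p).trans p.symm).Homotopic γ :=
    Path.Homotopic.trans ⟨Path.Homotopy.transAssoc _ _ _⟩
      ((Path.Homotopic.hcomp (.refl γ) ⟨(Path.Homotopy.reflTransSymm p).symm⟩).trans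
        ⟨Path.Homotopy.transRefl γ⟩)
  exact b.symm.trans ((h2.hcomp (.refl _)).trans ⟨(Path.Homotopy.reflTransSymm p).symm⟩)

end

/-! ### Grassmannians and invertible Hermitian matrices -/

section
open Topology Filter Matrix
open scoped Matrix.Norms.L2Operator ComplexOrder

/-- The invertible Hermitian matrices. -/
def GH (n : ℕ) : Set (Matrix (Fin n) (Fin n) ℂ) := {K | Kᴴ = K ∧ IsUnit K}

/-- The Heaviside function, continuous off `0`. -/
noncomputable def heav (x : ℝ) : ℝ := if 0 < x then 1 else 0

/-- The spectral projection of a Hermitian matrix on the positive part of its spectrum. -/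
noncomputable def pproj {n : ℕ} (K : Matrix (Fin n) (Fin n) ℂ) : Matrix (Fin n) (Fin n) ℂ := cfc heav K

theorem continuousOn_heav : ContinuousOn heav {x | x ≠ 0} := by
  intro x hx
  refine ContinuousAt.continuousWithinAt ?_
  rcases lt_or_gt_of_ne (show x ≠ 0 from hx) with h | h
  · refine (continuousAt_const (y := (0 : ℝ))).congr ?_
    filter_upwards [gt_mem_nhds h] with y hy
    simp [heav, hy.le.not_gt]
  · refine (continuousAt_const (y := (1 : ℝ))).congr ?_
    filter_upwards [lt_mem_nhds h] with y hy
    simp [heav, hy]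

theorem spec_ne_zero {n : ℕ} {K : Matrix (Fin n) (Fin n) ℂ} (hK : IsUnit K) :
    spectrum ℝ K ⊆ {x | x ≠ 0} := by
  rintro x hx rfl
  exact (spectrum.zero_mem_iff ℝ).1 hx hK

theorem GH_sa {n : ℕ} {K : Matrix (Fin n) (Fin n) ℂ} (hK : K ∈ GH n) : IsSelfAdjoint K := hK.1

theorem continuousOn_spec {n : ℕ} {K : Matrix (Fin n) (Fin n) ℂ} (hK : K ∈ GH n) :
    ContinuousOn heav (spectrum ℝ K) := continuousOn_heav.mono (spec_ne_zero hK.2)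

theorem pproj_mem {n : ℕ} {K : Matrix (Fin n) (Fin n) ℂ} (hK : K ∈ GH n) : pproj K ∈ Gr n := by
  have := GH_sa hK
  have hc := continuousOn_spec hK
  refine ⟨cfc_predicate (p := IsSelfAdjoint) heav K, ?_⟩
  rw [pproj, ← cfc_mul heav heav K hc hc]
  congr 1
  ext x
  simp [heav]

theorem reflect_sq {n : ℕ} {P : Matrix (Fin n) (Fin n) ℂ} (hP : P ∈ Gr n) :
    ((2 : ℂ) • P - 1) * ((2 : ℂ) • P - 1) = 1 := by
  simp only [sub_mul, mul_sub, smul_mul_assoc, mul_smul_comm, hP.2, mul_one, one_mul]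
  module

theorem reflect_sa {n : ℕ} {P : Matrix (Fin n) (Fin n) ℂ} (hP : P ∈ Gr n) :
    ((2 : ℂ) • P - 1)ᴴ = (2 : ℂ) • P - 1 := by
  simp [hP.1]

theorem reflect_mem {n : ℕ} {P : Matrix (Fin n) (Fin n) ℂ} (hP : P ∈ Gr n) :
    (2 : ℂ) • P - 1 ∈ GH n :=
  ⟨reflect_sa hP, IsUnit.of_mul_eq_one _ (reflect_sq hP)⟩

/-- For a projection `P`, the positive part of the reflection `2P - 1` is `P`. -/
theorem pproj_reflect {n : ℕ} {P : Matrix (Fin n) (Fin n) ℂ} (hP : P ∈ Gr n) :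
    pproj ((2 : ℂ) • P - 1) = P := by
  set K := (2 : ℂ) • P - 1 with hK
  have hm := reflect_mem hP
  have hs := GH_sa hm
  have h1 : Set.EqOn heav (fun x : ℝ => (1/2 : ℝ) * (1 + x)) (spectrum ℝ K) := by
    intro x hx
    have h2 := spectrum.pow_mem_pow K 2 hx
    rw [pow_two K, hK, reflect_sq hP] at h2
    have h3 : x ^ 2 = 1 := by
      by_contra hne
      refine h2 ?_
      rw [spectrum.mem_resolventSet_iff, ← map_one (algebraMap ℝ (Matrix (Fin n) (Fin n) ℂ)),
        ← map_sub]
      exact (isUnit_iff_ne_zero.2 (sub_ne_zero.2 hne)).map _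
    have h4 : (x - 1) * (x + 1) = 0 := by linear_combination h3
    rcases mul_eq_zero.1 h4 with h5 | h5
    · rw [sub_eq_zero.1 h5]; norm_num [heav]
    · rw [eq_neg_of_add_eq_zero_left h5]; norm_num [heav]
  rw [pproj, cfc_congr h1, cfc_const_mul (1/2 : ℝ) (fun x => 1 + x) K (by fun_prop),
    cfc_const_add (1 : ℝ) (fun x => x) K (by fun_prop) hs, cfc_id' ℝ K hs, map_one, hK]
  ext i j
  simp

theorem continuous_pproj {X : Type*} [TopologicalSpace X] {n : ℕ} {K : X → Matrix (Fin n) (Fin n) ℂ}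
    (hK : Continuous K) (h : ∀ x, K x ∈ GH n) : Continuous fun x => pproj (K x) := by
  refine Continuous.cfc_of_mem_nhdsSet (s := {x : ℝ | x ≠ 0}) heav ?_ hK (fun x => GH_sa (h x))
    continuousOn_heav
  exact isOpen_ne.mem_nhdsSet.2 (Set.iUnion_subset fun x => spec_ne_zero (h x).2)

/-- The segment from an invertible Hermitian `K` to the reflection `2P - 1` in its positive spectral
projection `P` consists of invertible matrices, since `K` and `2P - 1` have the same signs on each
eigenvector of `K`. -/
theorem GH_segment {n : ℕ} {K : Matrix (Fin n) (Fin n) ℂ} (hK : K ∈ GH n) (t : ℝ) (h0 : 0 ≤ t)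
    (h1 : t ≤ 1) : (1 - t) • K + t • ((2 : ℂ) • pproj K - 1) ∈ GH n := by
  have hs := GH_sa hK
  have hc := continuousOn_spec hK
  have e : (1 - t) • K + t • ((2 : ℂ) • pproj K - 1) =
      cfc (fun x : ℝ => (1 - t) * x + t * (2 * heav x - 1)) K := by
    rw [cfc_add (a := K) (fun x : ℝ => (1 - t) * x) (fun x => t * (2 * heav x - 1)) (by fun_prop)
      (by fun_prop), cfc_const_mul (1 - t) (fun x : ℝ => x) K (by fun_prop), cfc_id' ℝ K hs,
      cfc_const_mul t (fun x : ℝ => 2 * heav x - 1) K (by fun_prop),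
      cfc_sub (fun x : ℝ => 2 * heav x) (fun _ => 1) K (by fun_prop) (by fun_prop),
      cfc_const_mul 2 heav K hc, cfc_const_one ℝ K hs]
    congr 3
  rw [e]
  refine ⟨cfc_predicate (p := IsSelfAdjoint) _ K, (isUnit_cfc_iff _ _ (by fun_prop) hs).2 ?_⟩
  intro x hx
  have hx0 : x ≠ 0 := spec_ne_zero hK.2 hx
  rcases lt_or_gt_of_ne hx0 with h | h
  · simp only [heav, h.le.not_gt, if_false]
    rcases eq_or_lt_of_le h0 with rfl | h0
    · simpa using hx0
    · nlinarith
  · simp only [heav, h, if_true]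
    rcases eq_or_lt_of_le h0 with rfl | h0
    · simpa using hx0
    · nlinarith

/-- The segment between the reflections in `P` and `Q` consists of invertible matrices when
`1 - P - Q` is invertible. Both reflections preserve norms, so only the midpoint, which is a multiple
of `1 - P - Q`, could have a kernel. -/
theorem isUnit_reflect_segment {n : ℕ} {P Q : Matrix (Fin n) (Fin n) ℂ} (hP : P ∈ Gr n)
    (hQ : Q ∈ Gr n) (h : IsUnit (1 - P - Q)) (t : ℝ) :
    (1 - t) • ((2 : ℂ) • P - 1) + t • ((2 : ℂ) • Q - 1) ∈ GH n := by
  set S := (2 : ℂ) • P - 1 with hS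
  set T := (2 : ℂ) • Q - 1 with hT
  have hSa : Sᴴ = S := reflect_sa hP
  have hTa : Tᴴ = T := reflect_sa hQ
  have hS2 : S * S = 1 := reflect_sq hP
  have hT2 : T * T = 1 := reflect_sq hQ
  refine ⟨by simp [hSa, hTa], isUnit_of_mulVec _ fun v hv => ?_⟩
  rw [Matrix.add_mulVec, Matrix.smul_mulVec, Matrix.smul_mulVec] at hv
  have hv' : (1 - t) • (S *ᵥ v) = (-t) • (T *ᵥ v) := by
    rw [neg_smul]; exact eq_neg_of_add_eq_zero_left hv
  have nrm : ∀ A : Matrix (Fin n) (Fin n) ℂ, Aᴴ = A → A * A = 1 → ∀ c : ℝ,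
      star (c • (A *ᵥ v)) ⬝ᵥ (c • (A *ᵥ v)) = ((c * c : ℝ) : ℂ) * (star v ⬝ᵥ v) := by
    intro A hA hA2 c
    rw [star_smul, Matrix.star_mulVec, hA, smul_dotProduct, dotProduct_smul,
      ← Matrix.dotProduct_mulVec, Matrix.mulVec_mulVec, hA2, Matrix.one_mulVec, smul_smul]
    simp
  have h1 := nrm S hSa hS2 (1 - t)
  rw [hv', nrm T hTa hT2 (-t)] at h1
  have h2 : (((-t) * (-t) - (1 - t) * (1 - t) : ℝ) : ℂ) * (star v ⬝ᵥ v) = 0 := by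
    push_cast at h1 ⊢
    linear_combination h1
  rcases mul_eq_zero.1 h2 with h3 | h3
  · have h4 : t = 1 / 2 := by
      have : (-t) * (-t) - (1 - t) * (1 - t) = 0 := by exact_mod_cast h3
      linarith
    refine eq_zero_of_isUnit h ?_
    have : (1 - P - Q) = (-(1/2) : ℂ) • (S + T) := by rw [hS, hT]; module
    rw [this, Matrix.smul_mulVec, Matrix.add_mulVec]
    rw [h4] at hv
    have h5 : (1/2 : ℝ) • (S *ᵥ v + T *ᵥ v) = 0 := by rw [smul_add, ← hv]; norm_num
    have h6 : S *ᵥ v + T *ᵥ v = 0 := (smul_eq_zero.1 h5).resolve_left (by norm_num)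
    rw [h6, smul_zero]
  · exact dotProduct_star_self_eq_zero.1 h3

/-- Grassmannians are simply connected. The cover consists of the sets of `P` with `1 - P - Q`
invertible. -/
theorem nullLoops_Gr (n : ℕ) : NullLoops (Gr n) := by
  intro x γ
  refine vanKampen_loop (ι := Gr n) (fun Q => {P : Gr n | IsUnit (1 - P.1 - Q.1)}) ?_ ?_ ?_ γ ?_
  · intro Q
    exact Units.isOpen.preimage (f := fun P : Gr n => 1 - P.1 - Q.1) (by fun_prop)
  · intro Q x y α β hα hβ
    -- each member of the cover is contracted to `Q` along segments of reflections
    have hmem : ∀ q : {P : Gr n | IsUnit (1 - P.1 - Q.1)} × unitInterval,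
        (1 - (q.2 : ℝ)) • ((2 : ℂ) • q.1.1.1 - 1) + (q.2 : ℝ) • ((2 : ℂ) • Q.1 - 1) ∈ GH n :=
      fun q => isUnit_reflect_segment q.1.1.2 Q.2 q.1.2 q.2
    refine homotopic_of_contraction {P : Gr n | IsUnit (1 - P.1 - Q.1)} Q
      (fun q => ⟨pproj _, pproj_mem (hmem q)⟩) ?_ ?_ ?_ α β hα hβ
    · exact Continuous.subtype_mk (continuous_pproj (by fun_prop) hmem) _
    · intro x
      ext1
      simpa using pproj_reflect x.1.2
    · intro x
      ext1
      simpa using pproj_reflect Q.2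
  · rintro Q Q' P P' ⟨h1, h1'⟩ ⟨h2, h2'⟩
    obtain ⟨Q', hQ'⟩ := Q'
    obtain ⟨Q, hQ⟩ := Q
    -- two projections are joined along a complex line of frames, avoiding the finitely many bad values
    obtain ⟨P, hP⟩ := P
    obtain ⟨P', hP'⟩ := P'
    obtain ⟨k₁, B, hB, rfl⟩ := exists_frame hQ
    obtain ⟨k₂, B', hB', rfl⟩ := exists_frame hQ'
    obtain ⟨k₃, F, hF, rfl⟩ := exists_frame hP
    obtain ⟨k₄, F', hF', rfl⟩ := exists_frame hP'
    change IsUnit _ at h1 h1' h2 h2'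
    have uF : IsUnit (Fᴴ * F) := by rw [hF]; exact isUnit_one
    have uF' : IsUnit (F'ᴴ * F') := by rw [hF']; exact isUnit_one
    have uB : IsUnit (Bᴴ * B) := by rw [hB]; exact isUnit_one
    have uB' : IsUnit (B'ᴴ * B') := by rw [hB']; exact isUnit_one
    have e1 : k₁ = k₃ := le_antisymm (rank_le_of_isUnit uB (by rwa [sub_right_comm]))
      (rank_le_of_isUnit uF h1)
    have e2 : k₂ = k₃ := le_antisymm (rank_le_of_isUnit uB' (by rwa [sub_right_comm]))
      (rank_le_of_isUnit uF h1')
    have e3 : k₁ = k₄ := le_antisymm (rank_le_of_isUnit uB (by rwa [sub_right_comm]))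
      (rank_le_of_isUnit uF' h2)
    subst e1
    subst e3
    subst e2
    have g1 := isUnit_mul_of_isUnit uF h1
    have g1' := isUnit_mul_of_isUnit uF h1'
    have g2 := isUnit_mul_of_isUnit uF' h2
    have g2' := isUnit_mul_of_isUnit uF' h2'
    have ex : ∀ (C : Matrix (Fin n) (Fin k₂) ℂ) (z : ℂ), Cᴴ * ((1 - z) • F + z • F') =
        (1 - z) • (Cᴴ * F) + z • (Cᴴ * F') := fun C z => by
      rw [Matrix.mul_add, Matrix.mul_smul, Matrix.mul_smul]
    have f1 := finite_det_zero (Bᴴ * F) (Bᴴ * F') 0 (by simpa using g1)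
    have f2 := finite_det_zero (B'ᴴ * F) (B'ᴴ * F') 0 (by simpa using g1')
    obtain ⟨p, hp⟩ := compl_finite_joined (f1.union f2) (a := 0) (b := 1)
      (by rintro (h | h)
          · exact h (by simpa using g1)
          · exact h (by simpa using g1'))
      (by rintro (h | h)
          · exact h (by simpa using g2)
          · exact h (by simpa using g2'))
    have k1 : ∀ t, IsUnit (Bᴴ * ((1 - p t) • F + p t • F')) := fun t => by
      rw [ex]; by_contra hc; exact hp t (Or.inl hc)
    have k2 : ∀ t, IsUnit (B'ᴴ * ((1 - p t) • F + p t • F')) := fun t => by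
      rw [ex]; by_contra hc; exact hp t (Or.inr hc)
    have kk := fun t => isUnit_gram_of_mul (k1 t)
    refine ⟨{ toFun := fun t => ⟨fproj ((1 - p t) • F + p t • F'), fproj_mem (kk t)⟩
              continuous_toFun := Continuous.subtype_mk (continuous_fproj (by fun_prop) kk) _
              source' := ?_
              target' := ?_ }, fun t => ⟨isUnit_of_isUnit_mul (k1 t), isUnit_of_isUnit_mul (k2 t)⟩⟩
    · ext1; simp
    · ext1; simp
  · intro t
    -- two projections of equal rank lie in a common member of the cover, by the same finiteness
    obtain ⟨k, F, hF, hFx⟩ := exists_frame x.2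
    obtain ⟨k', F', hF', hFt⟩ := exists_frame (γ t).2
    have uF : IsUnit (Fᴴ * F) := by rw [hF]; exact isUnit_one
    have uF' : IsUnit (F'ᴴ * F') := by rw [hF']; exact isUnit_one
    have e : k = k' := by
      have := gr_trace_eq ((γ.subpath 0 t).cast γ.source.symm rfl)
      rw [← hFx, ← hFt, trace_fproj uF, trace_fproj uF'] at this
      exact_mod_cast this
    subst e
    have ex : ∀ (C : Matrix (Fin n) (Fin k) ℂ) (z : ℂ), Cᴴ * ((1 - z) • F + z • F') =
        (1 - z) • (Cᴴ * F) + z • (Cᴴ * F') := fun C z => by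
      rw [Matrix.mul_add, Matrix.mul_smul, Matrix.mul_smul]
    have f1 := finite_det_zero (Fᴴ * F) (Fᴴ * F') 0 (by simpa using uF)
    have f2 := finite_det_zero (F'ᴴ * F) (F'ᴴ * F') 1 (by simpa using uF')
    obtain ⟨z, hz⟩ := (f1.union f2).exists_notMem
    have k1 : IsUnit (Fᴴ * ((1 - z) • F + z • F')) := by
      rw [ex]; by_contra hc; exact hz (Or.inl hc)
    have k2 : IsUnit (F'ᴴ * ((1 - z) • F + z • F')) := by
      rw [ex]; by_contra hc; exact hz (Or.inr hc)
    refine ⟨⟨fproj ((1 - z) • F + z • F'), fproj_mem (isUnit_gram_of_mul k1)⟩, ?_, ?_⟩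
    · change IsUnit (1 - x.1 - _)
      rw [← hFx, sub_right_comm]
      exact isUnit_of_isUnit_mul k1
    · change IsUnit (1 - (γ t).1 - _)
      rw [← hFt, sub_right_comm]
      exact isUnit_of_isUnit_mul k2

/-- Invertible Hermitian matrices deform to the reflections `2P - 1`, which form a copy of `Gr n`. -/
theorem nullLoops_GH (n : ℕ) : NullLoops (GH n) := by
  refine (nullLoops_Gr n).of_retract
    ⟨fun K => ⟨pproj K.1, pproj_mem K.2⟩, Continuous.subtype_mk
      (continuous_pproj (by fun_prop) fun K => K.2) _⟩
    ⟨fun P => ⟨(2 : ℂ) • P.1 - 1, reflect_mem P.2⟩, by fun_prop⟩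
    { toFun := fun q => ⟨(1 - (q.1 : ℝ)) • q.2.1 + (q.1 : ℝ) • ((2 : ℂ) • pproj q.2.1 - 1),
        GH_segment q.2.2 _ q.1.2.1 q.1.2.2⟩
      continuous_toFun := ?_
      map_zero_left := ?_
      map_one_left := ?_ }
  · have : Continuous fun q : unitInterval × GH n => pproj q.2.1 :=
      continuous_pproj (by fun_prop) fun q => q.2.2
    refine Continuous.subtype_mk ?_ _
    fun_prop
  · intro x; ext1; simp
  · intro x; ext1; simp

end

/-! ### The Cayley cone on unitaries without a given eigenvalue -/

section
open Topology Filter Matrix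
open scoped Matrix.Norms.L2Operator ComplexOrder ComplexConjugate

/-- Complex `n × n` matrices. -/
abbrev Mat (n : ℕ) : Type := Matrix (Fin n) (Fin n) ℂ

theorem un_star_mul {n : ℕ} (A : Un n) : (A.1)ᴴ * A.1 = 1 := Matrix.mem_unitaryGroup_iff'.1 A.2
theorem un_mul_star {n : ℕ} (A : Un n) : A.1 * (A.1)ᴴ = 1 := Matrix.mem_unitaryGroup_iff.1 A.2

/-- The unitary matrices that do not have `ζ` as an eigenvalue. -/
def Us (n : ℕ) (ζ : ℂ) : Set (Un n) := {A | IsUnit (ζ • (1 : Mat n) - A.1)}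

/-- Numerator of `coneM`. -/
noncomputable def coneN {n : ℕ} (ζ : ℂ) (s : ℝ) (A : Mat n) : Mat n :=
  (1 + s : ℂ) • A - ((1 - s) * ζ : ℂ) • 1

/-- Denominator of `coneM`. -/
noncomputable def coneD {n : ℕ} (ζ : ℂ) (s : ℝ) (A : Mat n) : Mat n :=
  ((1 + s) * ζ : ℂ) • 1 - (1 - s : ℂ) • A

/-- The matrix `ζ((1+s)A - (1-s)ζ)((1+s)ζ - (1-s)A)⁻¹`, obtained from `A` by multiplying its Cayley
transform `(ζ+A)(ζ-A)⁻¹` by `s`; it is `A` for `s = 1` and the scalar matrix `-ζ` for `s = 0`. -/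
noncomputable def coneM {n : ℕ} (ζ : ℂ) (s : ℝ) (A : Mat n) : Mat n :=
  ζ • (coneN ζ s A * (coneD ζ s A)⁻¹)

theorem isUnit_smul {n : ℕ} {c : ℂ} (hc : c ≠ 0) {M : Mat n} (h : IsUnit M) : IsUnit (c • M) :=
  h.smul (Units.mk0 c hc)

theorem zz {ζ : ℂ} (h : ‖ζ‖ = 1) : conj ζ * ζ = 1 := by
  rw [← Complex.normSq_eq_conj_mul_self, Complex.normSq_eq_norm_sq, h]; simp

theorem nz {ζ : ℂ} (h : ‖ζ‖ = 1) : ζ ≠ 0 := by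
  rintro rfl; simp at h

theorem isUnit_coneD {n : ℕ} {ζ : ℂ} (hζ : ‖ζ‖ = 1) {A : Un n} (hA : A ∈ Us n ζ) {s : ℝ}
    (hs : 0 ≤ s) : IsUnit (coneD ζ s A.1) := by
  rcases hs.eq_or_lt with rfl | hs
  · have : coneD ζ (0:ℝ) A.1 = ζ • (1 : Mat n) - A.1 := by simp [coneD]
    rw [this]; exact hA
  refine isUnit_of_mulVec _ fun v hv => ?_
  rw [coneD, Matrix.sub_mulVec, Matrix.smul_mulVec, Matrix.smul_mulVec, Matrix.one_mulVec,
    sub_eq_zero] at hv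
  have h1 : star (((1 + s) * ζ : ℂ) • v) ⬝ᵥ (((1 + s) * ζ : ℂ) • v) =
      (1 + s) * (1 + s) * (star v ⬝ᵥ v) := by
    rw [star_smul, smul_dotProduct, dotProduct_smul, smul_smul, smul_eq_mul]
    have := zz hζ
    simp only [star_mul', RCLike.star_def, map_add, map_one, Complex.conj_ofReal]
    linear_combination (1 + s) * (1 + s) * (star v ⬝ᵥ v) * this
  have h2 : star ((1 - s : ℂ) • (A.1 *ᵥ v)) ⬝ᵥ ((1 - s : ℂ) • (A.1 *ᵥ v)) =
      (1 - s) * (1 - s) * (star v ⬝ᵥ v) := by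
    rw [star_smul, Matrix.star_mulVec, smul_dotProduct, dotProduct_smul,
      ← Matrix.dotProduct_mulVec, Matrix.mulVec_mulVec, un_star_mul, Matrix.one_mulVec,
      smul_smul, smul_eq_mul]
    simp
  rw [hv, h2] at h1
  have h3 : (s : ℂ) * (star v ⬝ᵥ v) = 0 := by linear_combination (-1/4 : ℂ) * h1
  exact dotProduct_star_self_eq_zero.1
    ((mul_eq_zero.1 h3).resolve_left (by exact_mod_cast hs.ne'))

theorem mul_inv_unitary {n : ℕ} {N D : Mat n} (hD : IsUnit D) (h : Nᴴ * N = Dᴴ * D) :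
    (N * D⁻¹)ᴴ * (N * D⁻¹) = 1 := by
  have hd := (Matrix.isUnit_iff_isUnit_det _).1 hD
  have hd' : IsUnit (Dᴴ).det := (Matrix.isUnit_iff_isUnit_det _).1 hD.star
  rw [Matrix.conjTranspose_mul, Matrix.conjTranspose_nonsing_inv,
    show (Dᴴ)⁻¹ * Nᴴ * (N * D⁻¹) = (Dᴴ)⁻¹ * (Nᴴ * N) * D⁻¹ by simp only [Matrix.mul_assoc], h,
    show (Dᴴ)⁻¹ * (Dᴴ * D) * D⁻¹ = ((Dᴴ)⁻¹ * Dᴴ) * (D * D⁻¹) by simp only [Matrix.mul_assoc],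
    Matrix.nonsing_inv_mul _ hd', Matrix.mul_nonsing_inv _ hd, Matrix.mul_one]

theorem smul_unitary {n : ℕ} {ζ : ℂ} (hζ : ‖ζ‖ = 1) {M : Mat n} (hM : Mᴴ * M = 1) :
    (ζ • M)ᴴ * (ζ • M) = 1 := by
  rw [Matrix.conjTranspose_smul, Matrix.smul_mul, Matrix.mul_smul, hM, smul_smul]
  have := zz hζ
  rw [RCLike.star_def, this, one_smul]

theorem coneM_unitary {n : ℕ} {ζ : ℂ} (hζ : ‖ζ‖ = 1) {A : Un n} (hA : A ∈ Us n ζ) {s : ℝ}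
    (hs : 0 ≤ s) : coneM ζ s A.1 ∈ Matrix.unitaryGroup (Fin n) ℂ := by
  rw [Matrix.mem_unitaryGroup_iff', Matrix.star_eq_conjTranspose]
  refine smul_unitary hζ (mul_inv_unitary (isUnit_coneD hζ hA hs) ?_)
  have h1 := un_star_mul A
  have h2 := zz hζ
  simp only [coneN, coneD, Matrix.conjTranspose_sub, Matrix.conjTranspose_smul,
    Matrix.conjTranspose_one, sub_mul, mul_sub, smul_mul_assoc, mul_smul_comm, h1, mul_one, one_mul,
    smul_smul, star_mul', RCLike.star_def, map_add, map_sub, map_mul, map_one, Complex.conj_ofReal, smul_sub]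
  match_scalars
  · linear_combination ((1 - s : ℂ) ^ 2 - (1 + s) ^ 2) * h2
  · ring
  · ring

/-- `coneM` as a unitary matrix. It is unitary for `s ≥ 0` when `ζ` is not an eigenvalue of `A`; in
the cases where it is not, the value `A` is used. -/
noncomputable def coneU {n : ℕ} (ζ : ℂ) (s : ℝ) (A : Un n) : Un n :=
  open Classical in
  if h : coneM ζ s A.1 ∈ Matrix.unitaryGroup (Fin n) ℂ then ⟨_, h⟩ else A

theorem coneU_val {n : ℕ} {ζ : ℂ} (hζ : ‖ζ‖ = 1) {A : Un n} (hA : A ∈ Us n ζ) {s : ℝ}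
    (hs : 0 ≤ s) : (coneU ζ s A).1 = coneM ζ s A.1 := by
  rw [coneU, dif_pos (coneM_unitary hζ hA hs)]

theorem coneM_mem {n : ℕ} {ζ : ℂ} (hζ : ‖ζ‖ = 1) {A : Un n} (hA : A ∈ Us n ζ) {s : ℝ}
    (hs : 0 ≤ s) : coneU ζ s A ∈ Us n ζ := by
  change IsUnit _
  rw [coneU_val hζ hA hs]
  have hD := isUnit_coneD hζ hA hs
  have hd := (Matrix.isUnit_iff_isUnit_det _).1 hD
  have e : ζ • (1 : Mat n) - coneM ζ s A.1 = (2 * ζ) • ((ζ • (1 : Mat n) - A.1) * (coneD ζ s A.1)⁻¹) := by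
    have : ζ • (1 : Mat n) = ζ • (coneD ζ s A.1 * (coneD ζ s A.1)⁻¹) := by
      rw [Matrix.mul_nonsing_inv _ hd]
    rw [this, coneM, ← smul_sub, ← sub_mul, mul_comm 2 ζ, mul_smul, ← smul_mul_assoc (2 : ℂ)]
    congr 2
    rw [Matrix.mul_nonsing_inv _ hd, coneD, coneN]
    module
  rw [e]
  have h1 : IsUnit (coneD ζ s A.1)⁻¹ := Matrix.isUnit_nonsing_inv_iff.2 hD
  exact isUnit_smul (mul_ne_zero two_ne_zero (nz hζ)) (hA.mul h1)

theorem coneM_zero {n : ℕ} {ζ : ℂ} {A : Mat n} (hA : IsUnit (ζ • (1 : Mat n) - A)) :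
    coneM ζ 0 A = (-ζ) • 1 := by
  have hd := (Matrix.isUnit_iff_isUnit_det _).1 hA
  have h1 : coneD ζ 0 A = ζ • (1 : Mat n) - A := by simp [coneD]
  have h2 : coneN ζ 0 A = -(ζ • (1 : Mat n) - A) := by simp [coneN]
  rw [coneM, h1, h2, neg_mul, Matrix.mul_nonsing_inv _ hd, smul_neg, neg_smul]

theorem coneM_one {n : ℕ} {ζ : ℂ} (hζ : ‖ζ‖ = 1) (A : Mat n) : coneM ζ 1 A = A := by
  have h := nz hζ
  have h1 : coneD ζ 1 A = (2 * ζ) • (1 : Mat n) := by simp [coneD]; norm_num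
  have h3 : (coneD ζ 1 A)⁻¹ = (2 * ζ)⁻¹ • (1 : Mat n) := by
    rw [h1]
    refine Matrix.inv_eq_left_inv ?_
    rw [smul_mul_smul_comm, inv_mul_cancel₀ (mul_ne_zero two_ne_zero h), one_smul, mul_one]
  have h2 : coneN ζ 1 A = (2 : ℂ) • A := by simp [coneN]; norm_num
  rw [coneM, h2, h3, smul_mul_smul_comm, mul_one, smul_smul]
  have : ζ * (2 * (2 * ζ)⁻¹) = 1 := by field_simp
  rw [this, one_smul]

theorem continuous_inv_of_isUnit {X : Type*} [TopologicalSpace X] {n : ℕ}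
    {D : X → Mat n} (hG : Continuous D) (h : ∀ x, IsUnit (D x)) :
    Continuous fun x => (D x)⁻¹ := by
  have hd : ∀ x, (D x).det ≠ 0 := fun x => ((Matrix.isUnit_iff_isUnit_det _).1 (h x)).ne_zero
  simp only [Matrix.inv_def, Ring.inverse_eq_inv']
  exact (hG.matrix_det.inv₀ hd).smul hG.matrix_adjugate

theorem continuous_coneU {X : Type*} [TopologicalSpace X] {n : ℕ} {ζ : ℂ} (hζ : ‖ζ‖ = 1)
    {A : X → Un n} {s : X → ℝ} (hA : Continuous A) (hs : Continuous s)
    (h : ∀ x, A x ∈ Us n ζ) (h0 : ∀ x, 0 ≤ s x) : Continuous fun x => coneU ζ (s x) (A x) := by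
  rw [continuous_induced_rng]
  have : (Subtype.val ∘ fun x => coneU ζ (s x) (A x)) = fun x => coneM ζ (s x) (A x).1 := by
    ext1 x; exact coneU_val hζ (h x) (h0 x)
  rw [this]
  have hA' : Continuous fun x => (A x).1 := continuous_subtype_val.comp hA
  have hD : Continuous fun x => coneD ζ (s x) (A x).1 := by unfold coneD; fun_prop
  have hN : Continuous fun x => coneN ζ (s x) (A x).1 := by unfold coneN; fun_prop
  exact (hN.matrix_mul (continuous_inv_of_isUnit hD
    fun x => isUnit_coneD hζ (h x) (h0 x))).const_smul ζ

/-- The Cayley cone commutes with conjugation. -/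
theorem coneM_conj {n : ℕ} (ζ : ℂ) (s : ℝ) (A : Mat n) (g : Un n) :
    coneM ζ s (g.1 * A * (g.1)ᴴ) = g.1 * coneM ζ s A * (g.1)ᴴ := by
  have h1 : coneD ζ s (g.1 * A * (g.1)ᴴ) = g.1 * coneD ζ s A * (g.1)ᴴ := by
    simp [coneD, mul_sub, sub_mul, un_mul_star]
  have h2 : coneN ζ s (g.1 * A * (g.1)ᴴ) = g.1 * coneN ζ s A * (g.1)ᴴ := by
    simp [coneN, mul_sub, sub_mul, un_mul_star]
  have i1 : (g.1)⁻¹ = (g.1)ᴴ := Matrix.inv_eq_left_inv (un_star_mul g)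
  have i2 : ((g.1)ᴴ)⁻¹ = g.1 := Matrix.inv_eq_left_inv (un_mul_star g)
  rw [coneM, h1, h2, Matrix.mul_inv_rev, Matrix.mul_inv_rev, i1, i2, coneM, Matrix.mul_smul, Matrix.smul_mul]
  congr 1
  rw [show g.1 * coneN ζ s A * (g.1)ᴴ * (g.1 * ((coneD ζ s A)⁻¹ * (g.1)ᴴ)) =
    g.1 * coneN ζ s A * ((g.1)ᴴ * g.1) * ((coneD ζ s A)⁻¹ * (g.1)ᴴ) by simp only [mul_assoc],
    un_star_mul, mul_one]
  simp only [mul_assoc]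

end

/-! ### Loops of unitaries avoiding two eigenvalues -/

section
open Topology Filter Matrix
open scoped Matrix.Norms.L2Operator ComplexOrder ComplexConjugate

/-- The scalar matrix `ζ` as a unitary matrix. -/
noncomputable def scalarU (n : ℕ) (ζ : ℂ) (h : ‖ζ‖ = 1) : Un n :=
  ⟨ζ • 1, by
    rw [Matrix.mem_unitaryGroup_iff', Matrix.star_eq_conjTranspose]
    exact smul_unitary h (by simp)⟩

theorem coneU_zero {n : ℕ} {ζ : ℂ} (hζ : ‖ζ‖ = 1) {A : Un n} (hA : A ∈ Us n ζ) :
    coneU ζ 0 A = scalarU n (-ζ) (by rwa [norm_neg]) :=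
  Subtype.ext (by rw [coneU_val hζ hA le_rfl, coneM_zero hA]; rfl)

theorem coneU_one {n : ℕ} {ζ : ℂ} (hζ : ‖ζ‖ = 1) {A : Un n} (hA : A ∈ Us n ζ) :
    coneU ζ 1 A = A :=
  Subtype.ext (by rw [coneU_val hζ hA zero_le_one, coneM_one hζ])

theorem scalarU_mem {n : ℕ} {ζ : ℂ} (hζ : ‖ζ‖ = 1) :
    scalarU n (-ζ) (by rwa [norm_neg]) ∈ Us n ζ := by
  change IsUnit (ζ • (1 : Mat n) - (-ζ) • 1)
  rw [neg_smul, sub_neg_eq_add, ← add_smul, ← two_mul]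
  exact isUnit_smul (mul_ne_zero two_ne_zero (nz hζ)) isUnit_one

theorem isOpen_Us (n : ℕ) (ζ : ℂ) : IsOpen (Us n ζ) :=
  Units.isOpen.preimage (f := fun A : Un n => ζ • (1 : Mat n) - A.1) (by fun_prop)

theorem NullLoops.of_leftInverse {S T : Type*} [TopologicalSpace S] [TopologicalSpace T]
    (h : NullLoops T) (f : S → T) (g : T → S) (hf : Continuous f) (hg : Continuous g)
    (hgf : ∀ x, g (f x) = x) : NullLoops S :=
  h.of_retract ⟨f, hf⟩ ⟨g, hg⟩
    ((ContinuousMap.Homotopy.refl _).cast rfl (by ext x; exact (hgf x).symm))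

theorem nullLoops_Us {n : ℕ} {ζ : ℂ} (hζ : ‖ζ‖ = 1) : NullLoops (Us n ζ) := by
  have h : NullLoops Unit := fun x γ => by
    rw [show γ = Path.refl x from by ext]
  refine h.of_retract ⟨fun _ => (), continuous_const⟩
    ⟨fun _ => ⟨scalarU n (-ζ) (by rwa [norm_neg]), scalarU_mem hζ⟩, continuous_const⟩
    { toFun := fun q => ⟨coneU ζ (1 - q.1) q.2.1, coneM_mem hζ q.2.2 (sub_nonneg.2 q.1.2.2)⟩
      continuous_toFun := ?_
      map_zero_left := ?_
      map_one_left := ?_ }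
  · exact Continuous.subtype_mk (continuous_coneU hζ (by fun_prop) (by fun_prop)
      (fun q => q.2.2) fun q => sub_nonneg.2 q.1.2.2) _
  · intro x; ext1
    simpa using coneU_one hζ x.2
  · intro x; ext1
    simpa using coneU_zero hζ x.2

theorem exists_sqrt {ζ ζ' : ℂ} (hζ : ‖ζ‖ = 1) (hζ' : ‖ζ'‖ = 1) :
    ∃ w : ℂ, ‖w‖ = 1 ∧ w * w * ζ' = ζ := by
  obtain ⟨w, hw⟩ := IsAlgClosed.exists_pow_nat_eq (ζ / ζ') (n := 2) (by norm_num)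
  refine ⟨w, ?_, ?_⟩
  · have := congrArg norm hw
    rw [norm_pow, norm_div, hζ, hζ', div_one] at this
    exact (pow_eq_one_iff_of_nonneg (norm_nonneg _) two_ne_zero).1 this
  · rw [← pow_two, hw, div_mul_cancel₀ _ (nz hζ' : ζ' ≠ 0)]

/-- For `ζ ≠ ζ'` choose `w` with `|w| = 1` and `w²ζ' = ζ`. The Cayley transform `w(ζ' - A)(ζ - A)⁻¹` is then
Hermitian; it identifies the unitaries with neither eigenvalue with the invertible Hermitian
matrices. -/
theorem nullLoops_inter {n : ℕ} {ζ ζ' : ℂ} (hζ : ‖ζ‖ = 1) (hζ' : ‖ζ'‖ = 1) :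
    NullLoops ↥(Us n ζ ∩ Us n ζ') := by
  rcases eq_or_ne ζ ζ' with rfl | hne
  · rw [Set.inter_self]; exact nullLoops_Us hζ
  obtain ⟨w, hw, hww⟩ := exists_sqrt hζ hζ'
  have z1 := zz hζ
  have z2 := zz hζ'
  have z3 := zz hw
  have e1 : w * ζ' = conj w * ζ := by
    linear_combination conj w * hww - w * ζ' * z3
  have e2 : conj w * conj ζ' = w * conj ζ := by
    have := congrArg conj e1
    simpa using this
  have hwr : conj w ≠ w := by
    intro h
    rw [h] at e1
    exact hne (mul_left_cancel₀ (nz hw) e1).symm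
  -- the forward map
  let f : Un n → Mat n := fun A => w • ((ζ' • (1 : Mat n) - A.1) * (ζ • (1 : Mat n) - A.1)⁻¹)
  let E : Mat n → Mat n := fun K => w • (1 : Mat n) - K
  let N : Mat n → Mat n := fun K => (w * ζ') • (1 : Mat n) - ζ • K
  have hf : ∀ A ∈ Us n ζ ∩ Us n ζ', f A ∈ GH n := by
    rintro A ⟨hA, hA'⟩
    have hd := (Matrix.isUnit_iff_isUnit_det _).1 hA
    set C : Mat n := ζ • (1 : Mat n) - A.1 with hC
    have hinv : IsUnit (C⁻¹) := Matrix.isUnit_nonsing_inv_iff.2 hA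
    refine ⟨?_, isUnit_smul (nz hw) (hA'.mul hinv)⟩
    have hCC : f A * C = w • (ζ' • (1 : Mat n) - A.1) := by
      simp only [f]
      rw [Matrix.smul_mul, Matrix.mul_assoc, Matrix.nonsing_inv_mul _ hd, Matrix.mul_one]
    have hCC' : Cᴴ * (f A)ᴴ = (conj w) • ((conj ζ') • (1 : Mat n) - (A.1)ᴴ) := by
      rw [← Matrix.conjTranspose_mul, hCC]
      simp
    have key : Cᴴ * (f A * C) = (Cᴴ * (f A)ᴴ) * C := by
      rw [hCC, hCC', hC]
      have h1 := un_star_mul A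
      simp only [Matrix.conjTranspose_sub, Matrix.conjTranspose_smul,
        Matrix.conjTranspose_one, sub_mul, mul_sub, smul_mul_assoc, mul_smul_comm, h1, mul_one,
        one_mul, smul_smul, RCLike.star_def, smul_sub]
      match_scalars
      · linear_combination conj ζ * e1 - ζ * e2 + (conj w - w) * z1
      · linear_combination - e1
      · linear_combination e2
    have hCs : IsUnit Cᴴ := hA.star
    have k2 : f A * C = (f A)ᴴ * C := hCs.mul_left_cancel (by rw [key, mul_assoc])
    exact (hA.mul_right_cancel k2).symm
  have hE : ∀ K ∈ GH n, IsUnit (E K) := by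
    intro K hK
    refine isUnit_of_mulVec _ fun v hv => ?_
    simp only [E] at hv
    rw [Matrix.sub_mulVec, Matrix.smul_mulVec, Matrix.one_mulVec, sub_eq_zero] at hv
    have h1 : star v ⬝ᵥ (K *ᵥ v) = w * (star v ⬝ᵥ v) := by
      rw [← hv, dotProduct_smul, smul_eq_mul]
    have h2 : star v ⬝ᵥ (K *ᵥ v) = conj w * (star v ⬝ᵥ v) := by
      have : star (K *ᵥ v) = star v ᵥ* K := by rw [Matrix.star_mulVec, hK.1]
      rw [Matrix.dotProduct_mulVec, ← this, ← hv, star_smul, smul_dotProduct, smul_eq_mul,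
        RCLike.star_def]
    have h3 : (conj w - w) * (star v ⬝ᵥ v) = 0 := by linear_combination h1 - h2
    exact dotProduct_star_self_eq_zero.1
      ((mul_eq_zero.1 h3).resolve_left (sub_ne_zero.2 hwr))
  have hNN : ∀ K ∈ GH n, N K * (N K)ᴴ = E K * (E K)ᴴ := by
    intro K hK
    simp only [N, E, Matrix.conjTranspose_sub, Matrix.conjTranspose_smul, hK.1,
        Matrix.conjTranspose_one, sub_mul, mul_sub, smul_mul_assoc, mul_smul_comm, mul_one,
        one_mul, smul_smul, RCLike.star_def, smul_sub, map_mul]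
    match_scalars
    · linear_combination w * conj w * z2
    · linear_combination (- conj w) * z1 - conj ζ * e1 - ζ * e2 - w * z1
    · linear_combination z1
  have hgU : ∀ K ∈ GH n, (E K)⁻¹ * N K ∈ Matrix.unitaryGroup (Fin n) ℂ := by
    intro K hK
    have hd := (Matrix.isUnit_iff_isUnit_det _).1 (hE K hK)
    have hd' : IsUnit ((E K)ᴴ).det := (Matrix.isUnit_iff_isUnit_det _).1 (hE K hK).star
    rw [Matrix.mem_unitaryGroup_iff, Matrix.star_eq_conjTranspose, Matrix.conjTranspose_mul,
      Matrix.conjTranspose_nonsing_inv, show (E K)⁻¹ * N K * ((N K)ᴴ * ((E K)ᴴ)⁻¹) =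
        (E K)⁻¹ * (N K * (N K)ᴴ) * ((E K)ᴴ)⁻¹ by simp only [mul_assoc], hNN K hK,
      show (E K)⁻¹ * (E K * (E K)ᴴ) * ((E K)ᴴ)⁻¹ = ((E K)⁻¹ * E K) * ((E K)ᴴ * ((E K)ᴴ)⁻¹) by
        simp only [mul_assoc], Matrix.nonsing_inv_mul _ hd, Matrix.mul_nonsing_inv _ hd', mul_one]
  have hg : ∀ K (hK : K ∈ GH n), (⟨_, hgU K hK⟩ : Un n) ∈ Us n ζ ∩ Us n ζ' := by
    intro K hK
    have hu := hE K hK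
    have hd := (Matrix.isUnit_iff_isUnit_det _).1 hu
    have hi : IsUnit (E K)⁻¹ := Matrix.isUnit_nonsing_inv_iff.2 hu
    have ex : ∀ z : ℂ, z • (1 : Mat n) - (E K)⁻¹ * N K = (E K)⁻¹ * (z • E K - N K) := by
      intro z
      rw [mul_sub (E K)⁻¹ (z • E K), mul_smul_comm, Matrix.nonsing_inv_mul _ hd]
    constructor
    · change IsUnit (ζ • (1 : Mat n) - (E K)⁻¹ * N K)
      rw [ex]
      have : ζ • E K - N K = (w * (ζ - ζ')) • (1 : Mat n) := by
        simp only [E, N]; module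
      rw [this]
      exact hi.mul (isUnit_smul (mul_ne_zero (nz hw) (sub_ne_zero.2 hne)) isUnit_one)
    · change IsUnit (ζ' • (1 : Mat n) - (E K)⁻¹ * N K)
      rw [ex]
      have : ζ' • E K - N K = (ζ - ζ') • K := by
        simp only [E, N]; module
      rw [this]
      exact hi.mul (isUnit_smul (sub_ne_zero.2 hne) hK.2)
  refine (nullLoops_GH n).of_leftInverse (fun A => ⟨f A.1, hf A.1 A.2⟩)
    (fun K => ⟨⟨_, hgU K.1 K.2⟩, hg K.1 K.2⟩) ?_ ?_ ?_
  · refine Continuous.subtype_mk ?_ _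
    refine Continuous.const_smul (Continuous.matrix_mul (by fun_prop) ?_) w
    exact continuous_inv_of_isUnit (by fun_prop) fun A => A.2.1
  · refine Continuous.subtype_mk (Continuous.subtype_mk ?_ _) _
    refine Continuous.matrix_mul (continuous_inv_of_isUnit (by fun_prop) fun K => hE _ K.2) ?_
    fun_prop
  · rintro ⟨A, hA⟩
    refine Subtype.ext (Subtype.ext ?_)
    have hd := (Matrix.isUnit_iff_isUnit_det _).1 hA.1
    have hd' := (Matrix.isUnit_iff_isUnit_det _).1 (hE _ (hf A hA))
    change (E (f A))⁻¹ * N (f A) = A.1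
    have hCC : f A * (ζ • (1 : Mat n) - A.1) = w • (ζ' • (1 : Mat n) - A.1) := by
      simp only [f]
      rw [Matrix.smul_mul, Matrix.mul_assoc, Matrix.nonsing_inv_mul _ hd, Matrix.mul_one]
    have : N (f A) = E (f A) * A.1 := by
      simp only [N, E]
      rw [sub_mul, smul_mul_assoc, one_mul]
      rw [mul_sub, mul_smul_comm, mul_one] at hCC
      have h5 : f A * A.1 = ζ • f A - w • (ζ' • (1 : Mat n) - A.1) := by
        rw [← hCC]; abel
      rw [h5]; module
    rw [this, ← mul_assoc, Matrix.nonsing_inv_mul _ hd', one_mul]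

theorem NullLoops.pi {ι : Type*} {S : ι → Type*} [∀ i, TopologicalSpace (S i)]
    (h : ∀ i, NullLoops (S i)) : NullLoops (∀ i, S i) := by
  intro x γ
  let K := fun i => (h i (x i) (γ.map (continuous_apply i))).some
  have e : Path.pi (fun i => γ.map (continuous_apply i)) = γ := by ext t i; rfl
  have e' : Path.pi (fun i => Path.refl (x i)) = Path.refl x := by ext t i; rfl
  rw [← e, ← e']
  exact ⟨Path.Homotopic.piHomotopy _ _ K⟩

end

/-! ### Path connectedness of commutants -/

section
open Topology Filter Matrix
open scoped Matrix.Norms.L2Operator ComplexOrder ComplexConjugate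

theorem compactSpace_Un (n : ℕ) : CompactSpace (Un n) := by
  have hc : IsClosed ((Matrix.unitaryGroup (Fin n) ℂ : Submonoid (Mat n)) : Set (Mat n)) := by
    have : ((Matrix.unitaryGroup (Fin n) ℂ : Submonoid (Mat n)) : Set (Mat n)) = {A | Aᴴ * A = 1} := by
      ext A; exact Matrix.mem_unitaryGroup_iff'
    rw [this]
    exact isClosed_eq (by fun_prop) continuous_const
  have hb : Bornology.IsBounded ((Matrix.unitaryGroup (Fin n) ℂ : Submonoid (Mat n)) : Set (Mat n)) := by
    refine (Metric.isBounded_iff_subset_closedBall 0).2 ⟨‖(1 : Mat n)‖ + 1, fun A hA => ?_⟩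
    rw [mem_closedBall_zero_iff]
    have h1 : ‖A‖ * ‖A‖ = ‖(1 : Mat n)‖ := by
      rw [← CStarRing.norm_star_mul_self, Matrix.mem_unitaryGroup_iff'.1 hA]
    nlinarith [norm_nonneg A, norm_nonneg (1 : Mat n)]
  exact isCompact_iff_compactSpace.1 (Metric.isCompact_of_isClosed_isBounded hc hb)

theorem smul_val {n r : ℕ} (g : ConjAct (Un n)) (A : Fin r → Un n) (i : Fin r) :
    ((g • A) i).1 = (ConjAct.ofConjAct g).1 * (A i).1 * ((ConjAct.ofConjAct g).1)ᴴ := by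
  rw [Pi.smul_apply, ConjAct.smul_def]
  rfl

instance (n : ℕ) : TopologicalSpace (ConjAct (Un n)) := inferInstanceAs (TopologicalSpace (Un n))
instance (n : ℕ) : CompactSpace (ConjAct (Un n)) := compactSpace_Un n
instance (n : ℕ) : LocallyPathConnectedSpace (ConjAct (Un n)) :=
  inferInstanceAs (LocallyPathConnectedSpace (unitary (Mat n)))
instance (n r : ℕ) : ContinuousSMul (ConjAct (Un n)) (Fin r → Un n) := by
  refine ⟨continuous_pi fun i => ?_⟩
  have : (fun p : ConjAct (Un n) × (Fin r → Un n) => (p.1 • p.2) i) =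
    fun p => (ConjAct.ofConjAct p.1) * p.2 i * (ConjAct.ofConjAct p.1)⁻¹ := by
    ext1 p; rw [Pi.smul_apply, ConjAct.smul_def]
  rw [this]
  have h : Continuous fun p : ConjAct (Un n) × (Fin r → Un n) => (ConjAct.ofConjAct p.1 : Un n) :=
    continuous_fst
  have h2 : Continuous fun p : ConjAct (Un n) × (Fin r → Un n) => p.2 i := by fun_prop
  exact (h.mul h2).mul h.inv

theorem sphere_infinite : {z : ℂ | ‖z‖ = 1}.Infinite := by
  have h : Set.InjOn (fun x : ℝ => Complex.exp (x * Complex.I)) (Set.Ioc 0 1) := by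
    intro x hx y hy hxy
    have h1 : Complex.exp (x * Complex.I) = Complex.exp (y * Complex.I) := hxy
    rw [Complex.exp_eq_exp_iff_exists_int] at h1
    obtain ⟨k, hk⟩ := h1
    have hk' : x = y + k * (2 * Real.pi) := by
      have := congrArg Complex.im hk
      simpa using this
    have hp := Real.pi_gt_three
    have hx1 := hx.1; have hx2 := hx.2; have hy1 := hy.1; have hy2 := hy.2
    have hk0 : k = 0 := by
      by_contra hne
      rcases lt_or_gt_of_ne hne with h | h
      · have : (k : ℝ) ≤ -1 := by exact_mod_cast (by omega : k ≤ -1)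
        nlinarith
      · have : (1 : ℝ) ≤ k := by exact_mod_cast (by omega : 1 ≤ k)
        nlinarith
    rw [hk0] at hk'
    simpa using hk'
  refine ((Set.Ioc_infinite (by norm_num : (0:ℝ) < 1)).image h).mono ?_
  rintro _ ⟨x, -, rfl⟩
  exact Complex.norm_exp_ofReal_mul_I x

/-- The spectrum is finite and the circle is not. -/
theorem exists_not_eigenvalue {n : ℕ} (A : Un n) : ∃ ζ : ℂ, ‖ζ‖ = 1 ∧ A ∈ Us n ζ := by
  have hf : {z : ℂ | ¬ IsUnit (z • (1 : Mat n) - A.1)}.Finite := by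
    refine (A.1.charpoly.roots.toFinset.finite_toSet).subset fun z hz => ?_
    simp only [Finset.mem_coe, Multiset.mem_toFinset]
    rw [Polynomial.mem_roots A.1.charpoly_monic.ne_zero, Polynomial.IsRoot, Matrix.eval_charpoly]
    by_contra hc
    refine hz ((Matrix.isUnit_iff_isUnit_det _).2 (isUnit_iff_ne_zero.2 ?_))
    rwa [Matrix.smul_one_eq_diagonal]
  obtain ⟨z, hz, hz'⟩ := sphere_infinite.exists_notMem_finset hf.toFinset
  exact ⟨z, hz, by
    by_contra hc
    exact hz' (hf.mem_toFinset.2 hc)⟩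

/-- Scalar matrices are joined to `1` inside every commutant. -/
theorem scalar_joined {n : ℕ} {ζ : ℂ} (h : ‖ζ‖ = 1) {ι : Type*} (c : ι → Un n) :
    JoinedIn {h : Un n | ∀ i, h * c i = c i * h} 1 (scalarU n ζ h) := by
  let p : unitInterval → Un n := fun t =>
    scalarU n (Complex.exp ((t * ζ.arg : ℝ) * Complex.I)) (Complex.norm_exp_ofReal_mul_I _)
  refine ⟨{ toFun := p, continuous_toFun := ?_, source' := ?_, target' := ?_ }, fun t i => ?_⟩
  · refine Continuous.subtype_mk ?_ _
    fun_prop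
  · ext1; simp [p, scalarU]
  · ext1
    have : Complex.exp (ζ.arg * Complex.I) = ζ := by
      have := Complex.norm_mul_exp_arg_mul_I ζ
      simpa [h] using this
    simp [p, scalarU, this]
  · change p t * c i = c i * p t
    refine Subtype.ext ?_
    simp [p, scalarU]

/-- Commutants in `U(n)` are path connected: the Cayley cone on `g` commutes with everything that
commutes with `g`, and it ends at a scalar matrix. -/
theorem joinedIn_commutant {n : ℕ} {ι : Type*} (c : ι → Un n) (g : Un n) (hg : ∀ i, g * c i = c i * g) :
    JoinedIn {h : Un n | ∀ i, h * c i = c i * h} 1 g := by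
  obtain ⟨ζ, hζ, hgζ⟩ := exists_not_eigenvalue g
  have hζ' : ‖-ζ‖ = 1 := by rwa [norm_neg]
  have h1 := scalar_joined hζ' c
  refine h1.trans ⟨{ toFun := fun t => coneU ζ t g, continuous_toFun := ?_, source' := ?_, target' := ?_ }, fun t i => ?_⟩
  · exact continuous_coneU hζ continuous_const (by fun_prop) (fun _ => hgζ) (fun t => t.2.1)
  · simpa using coneU_zero hζ hgζ
  · simpa using coneU_one hζ hgζ
  · change coneU ζ t g * c i = c i * coneU ζ t g
    refine Subtype.ext ?_
    have e := coneM_conj ζ t g.1 (c i)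
    have e2 : (c i).1 * g.1 * ((c i).1)ᴴ = g.1 := by
      have := congrArg Subtype.val (hg i)
      change g.1 * (c i).1 = (c i).1 * g.1 at this
      rw [← this, mul_assoc, un_mul_star, mul_one]
    rw [e2] at e
    change (coneU ζ t g).1 * (c i).1 = (c i).1 * (coneU ζ t g).1
    rw [coneU_val hζ hgζ t.2.1]
    conv_lhs => rw [e]
    rw [mul_assoc, un_star_mul, mul_one]

instance (n : ℕ) : PathConnectedSpace (ConjAct (Un n)) := by
  have : PathConnectedSpace (Un n) := by
    refine ⟨⟨1⟩, fun x y => ?_⟩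
    have h : ∀ g : Un n, Joined 1 g := fun g =>
      (joinedIn_commutant (fun i : Empty => i.elim) g (fun i => i.elim)).joined
    exact (h x).symm.trans (h y)
  exact this

/-- Stabilizers of the conjugation action on tuples are path connected. -/
theorem stab_joined {n r : ℕ} (y : Fin r → Un n) (g : ConjAct (Un n)) (hg : g • y = y) :
    JoinedIn {h : ConjAct (Un n) | h • y = y} 1 g := by
  have key : ∀ h : ConjAct (Un n), h • y = y ↔ ∀ i, (ConjAct.ofConjAct h) * y i = y i * ConjAct.ofConjAct h := by
    intro h
    rw [funext_iff]
    refine forall_congr' fun i => ?_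
    rw [Pi.smul_apply, ConjAct.smul_def, mul_inv_eq_iff_eq_mul]
  have := joinedIn_commutant y (ConjAct.ofConjAct g) ((key g).1 hg)
  have e : {h : ConjAct (Un n) | h • y = y} = {h : Un n | ∀ i, h * y i = y i * h} := by
    ext h; exact key h
  rw [e]
  exact this

end

/-! ### The open cover of the character variety -/

section
open Topology Filter Matrix
open scoped Matrix.Norms.L2Operator ComplexOrder ComplexConjugate

/-- The conjugacy class of a tuple. -/
def mkX {n r : ℕ} (A : Fin r → Un n) : CharVarU n r := Quotient.mk _ A

theorem isOpenQuotientMap_mkX (n r : ℕ) : IsOpenQuotientMap (mkX (n := n) (r := r)) :=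
  MulAction.isOpenQuotientMap_quotientMk (Γ := ConjAct (Un n)) (T := Fin r → Un n)

theorem mkX_eq {n r : ℕ} {A B : Fin r → Un n} : mkX A = mkX B ↔ ∃ g : ConjAct (Un n), g • B = A :=
  Quotient.eq

theorem mkX_smul {n r : ℕ} (g : ConjAct (Un n)) (A : Fin r → Un n) : mkX (g • A) = mkX A :=
  mkX_eq.2 ⟨g, rfl⟩

theorem smul_mem_Us {n r : ℕ} (g : ConjAct (Un n)) (A : Fin r → Un n) (i : Fin r) (ζ : ℂ) :
    (g • A) i ∈ Us n ζ ↔ A i ∈ Us n ζ := by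
  have h : ∀ (g : ConjAct (Un n)) (A : Fin r → Un n), A i ∈ Us n ζ → (g • A) i ∈ Us n ζ := by
    intro g A hA
    change IsUnit _
    set u := ConjAct.ofConjAct g
    have e : ζ • (1 : Mat n) - ((g • A) i).1 = u.1 * (ζ • (1 : Mat n) - (A i).1) * (u.1)ᴴ := by
      rw [smul_val, mul_sub, sub_mul, mul_smul_comm, mul_one, smul_mul_assoc, un_mul_star]
    rw [e]
    have hu : IsUnit u.1 := IsUnit.of_mul_eq_one _ (un_mul_star u)
    exact (hu.mul hA).mul hu.star
  refine ⟨fun H => ?_, h g A⟩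
  have := h g⁻¹ _ H
  rwa [inv_smul_smul] at this

/-- The classes of tuples `(A_i)` such that `ζ_i` is not an eigenvalue of `A_i`, for each `i`. -/
def Wset {n r : ℕ} (ζ : Fin r → ℂ) : Set (CharVarU n r) := mkX '' {A | ∀ i, A i ∈ Us n (ζ i)}

theorem mkX_mem_Wset {n r : ℕ} {ζ : Fin r → ℂ} {A : Fin r → Un n} :
    mkX A ∈ Wset ζ ↔ ∀ i, A i ∈ Us n (ζ i) := by
  refine ⟨?_, fun h => ⟨A, h, rfl⟩⟩
  rintro ⟨B, hB, hBA⟩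
  obtain ⟨g, rfl⟩ := mkX_eq.1 hBA
  exact fun i => (smul_mem_Us g A i _).1 (hB i)

theorem isOpen_Wset {n r : ℕ} (ζ : Fin r → ℂ) : IsOpen (Wset (n := n) ζ) := by
  refine (isOpenQuotientMap_mkX n r).isOpenMap _ ?_
  simp only [Set.ofPred_forall]
  exact isOpen_iInter_of_finite fun i => (isOpen_Us n (ζ i)).preimage (continuous_apply i)

theorem coneU_conj {n r : ℕ} (ζ : ℂ) (s : ℝ) (A : Fin r → Un n) (g : ConjAct (Un n)) (i : Fin r) :
    coneU ζ s ((g • A) i) = g • coneU ζ s (A i) := by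
  have e : coneM ζ s ((g • A) i).1 = (ConjAct.ofConjAct g).1 * coneM ζ s (A i).1 *
      ((ConjAct.ofConjAct g).1)ᴴ := by rw [smul_val, coneM_conj]
  by_cases h : coneM ζ s (A i).1 ∈ Matrix.unitaryGroup (Fin n) ℂ
  · have h' : coneM ζ s ((g • A) i).1 ∈ Matrix.unitaryGroup (Fin n) ℂ := by
      rw [e]
      exact (Matrix.unitaryGroup (Fin n) ℂ).mul_mem ((Matrix.unitaryGroup (Fin n) ℂ).mul_mem
        (ConjAct.ofConjAct g).2 h) ((ConjAct.ofConjAct g)⁻¹).2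
    rw [coneU, coneU, dif_pos h, dif_pos h']
    refine Subtype.ext ?_
    rw [ConjAct.smul_def]
    exact e
  · have h' : coneM ζ s ((g • A) i).1 ∉ Matrix.unitaryGroup (Fin n) ℂ := by
      intro h'
      apply h
      have e2 : coneM ζ s (A i).1 = ((ConjAct.ofConjAct g)⁻¹).1 * coneM ζ s ((g • A) i).1 *
          (ConjAct.ofConjAct g).1 := by
        rw [e]
        change _ = ((ConjAct.ofConjAct g).1)ᴴ * _ * _
        rw [mul_assoc, mul_assoc, un_star_mul, mul_one, ← mul_assoc, un_star_mul, one_mul]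
      rw [e2]
      exact (Matrix.unitaryGroup (Fin n) ℂ).mul_mem ((Matrix.unitaryGroup (Fin n) ℂ).mul_mem
        ((ConjAct.ofConjAct g)⁻¹).2 h') (ConjAct.ofConjAct g).2
    rw [coneU, coneU, dif_neg h, dif_neg h']
    rfl

/-- The Cayley cone, applied to each entry of a tuple and descended to the character variety. -/
noncomputable def coneX {n r : ℕ} (ζ : Fin r → ℂ) (s : ℝ) : CharVarU n r → CharVarU n r :=
  Quotient.map (fun A i => coneU (ζ i) s (A i)) (by
    rintro A B ⟨g, rfl⟩
    exact ⟨g, by ext1 i; exact (coneU_conj (ζ i) s B g i).symm⟩)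

theorem coneX_mk {n r : ℕ} (ζ : Fin r → ℂ) (s : ℝ) (A : Fin r → Un n) :
    coneX ζ s (mkX A) = mkX fun i => coneU (ζ i) s (A i) := rfl

theorem coneX_mem {n r : ℕ} {ζ : Fin r → ℂ} (hζ : ∀ i, ‖ζ i‖ = 1) {s : ℝ} (hs : 0 ≤ s)
    {x : CharVarU n r} (hx : x ∈ Wset ζ) : coneX ζ s x ∈ Wset ζ := by
  obtain ⟨A, hA, rfl⟩ := hx
  exact ⟨_, fun i => coneM_mem (hζ i) (hA i) hs, rfl⟩

theorem coneX_one {n r : ℕ} {ζ : Fin r → ℂ} (hζ : ∀ i, ‖ζ i‖ = 1)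
    {x : CharVarU n r} (hx : x ∈ Wset ζ) : coneX ζ 1 x = x := by
  obtain ⟨A, hA, rfl⟩ := hx
  rw [coneX_mk]
  congr 1
  ext1 i
  exact coneU_one (hζ i) (hA i)

/-- At `s = 0` the cone collapses `Wset ζ` to the class of the scalar tuple `-ζ`. -/
theorem coneX_zero {n r : ℕ} {ζ : Fin r → ℂ} (hζ : ∀ i, ‖ζ i‖ = 1)
    {x y : CharVarU n r} (hx : x ∈ Wset ζ) (hy : y ∈ Wset ζ) : coneX ζ 0 x = coneX ζ 0 y := by
  obtain ⟨A, hA, rfl⟩ := hx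
  obtain ⟨B, hB, rfl⟩ := hy
  rw [coneX_mk, coneX_mk]
  congr 1
  ext1 i
  rw [coneU_zero (hζ i) (hA i), coneU_zero (hζ i) (hB i)]

theorem continuous_coneX {n r : ℕ} {ζ : Fin r → ℂ} (hζ : ∀ i, ‖ζ i‖ = 1) {Y : Type*}
    [TopologicalSpace Y] {b : Y → CharVarU n r} {s : Y → ℝ} (hb : Continuous b) (hs : Continuous s)
    (hW : ∀ y, b y ∈ Wset ζ) (h0 : ∀ y, 0 ≤ s y) : Continuous fun y => coneX ζ (s y) (b y) := by
  let V : Set ((Fin r → Un n) × {t : ℝ // 0 ≤ t}) := {p | ∀ i, p.1 i ∈ Us n (ζ i)}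
  let Z : Set (CharVarU n r × {t : ℝ // 0 ≤ t}) := {p | p.1 ∈ Wset ζ}
  have hq : IsOpenQuotientMap (Prod.map (mkX (n := n) (r := r)) (id : {t : ℝ // 0 ≤ t} → _)) :=
    (isOpenQuotientMap_mkX n r).prodMap .id
  have hF : Continuous fun p : Z => coneX ζ p.1.2.1 p.1.1 := by
    have hq' := hq.restrictPreimage Z
    rw [hq'.isQuotientMap.continuous_iff]
    have hm : ∀ (p : ↥((Prod.map (mkX (n := n) (r := r)) (id : {t : ℝ // 0 ≤ t} → _)) ⁻¹' Z)) (i : Fin r),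
        p.1.1 i ∈ Us n (ζ i) := fun p => mkX_mem_Wset.1 p.2
    change Continuous fun p : ↥((Prod.map (mkX (n := n) (r := r)) (id : {t : ℝ // 0 ≤ t} → _)) ⁻¹' Z) =>
      mkX fun i => coneU (ζ i) p.1.2.1 (p.1.1 i)
    refine (isOpenQuotientMap_mkX n r).continuous.comp (continuous_pi fun i => ?_)
    exact continuous_coneU (hζ i) (by fun_prop) (by fun_prop) (fun p => hm p i) fun p => p.1.2.2
  exact hF.comp (f := fun y => (⟨(b y, ⟨s y, h0 y⟩), hW y⟩ : Z)) (by fun_prop)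

/-- Loops in the intersection of two members of the cover are null-homotopic: up to
reparametrisation they lift to loops in a product of the spaces of `nullLoops_inter`. -/
theorem nullLoops_Wset_inter {n r : ℕ} {ζ ζ' : Fin r → ℂ} (hζ : ∀ i, ‖ζ i‖ = 1)
    (hζ' : ∀ i, ‖ζ' i‖ = 1) : NullLoops ↥(Wset (n := n) ζ ∩ Wset ζ') := by
  rintro ⟨x, hx⟩ γ
  have := compactSpace_Un n
  let _ : MetricSpace (Fin r → Un n) := TopologicalSpace.metrizableSpaceMetric _
  let γ' : Path x x := γ.map continuous_subtype_val
  obtain ⟨A, rfl⟩ := (isOpenQuotientMap_mkX n r).surjective x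
  obtain ⟨p, τ, hτ, hτ0, hτ1, hp⟩ := exists_path_lift (G := ConjAct (Un n)) (M := Fin r → Un n)
    stab_joined γ' A A rfl rfl
  have hpV : ∀ t i, p t i ∈ Us n (ζ i) ∩ Us n (ζ' i) := by
    intro t i
    have h1 : mkX (p t) ∈ Wset ζ ∩ Wset ζ' := by
      have := (γ (τ t)).2
      have e : mkX (p t) = (γ (τ t)).1 := hp t
      rwa [e]
    exact ⟨mkX_mem_Wset.1 h1.1 i, mkX_mem_Wset.1 h1.2 i⟩
  have hA : ∀ i, A i ∈ Us n (ζ i) ∩ Us n (ζ' i) := fun i => by simpa using hpV 0 i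
  let P : Path (fun i => (⟨A i, hA i⟩ : ↥(Us n (ζ i) ∩ Us n (ζ' i)))) (fun i => ⟨A i, hA i⟩) :=
    { toFun := fun t i => ⟨p t i, hpV t i⟩
      continuous_toFun := by fun_prop
      source' := by simp
      target' := by simp }
  have hN := NullLoops.pi (fun i => nullLoops_inter (n := n) (hζ i) (hζ' i)) _ P
  let q : C(∀ i, ↥(Us n (ζ i) ∩ Us n (ζ' i)), ↥(Wset (n := n) ζ ∩ Wset ζ')) :=
    ⟨fun B => ⟨mkX fun i => (B i).1, ⟨_, fun i => (B i).2.1, rfl⟩, ⟨_, fun i => (B i).2.2, rfl⟩⟩,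
      Continuous.subtype_mk ((isOpenQuotientMap_mkX n r).continuous.comp (by fun_prop)) _⟩
  have h2 := hN.map q
  have e : P.map q.continuous = γ.reparam τ hτ hτ0 hτ1 := by
    ext t
    exact hp t
  have h3 : (P.map q.continuous).Homotopic ((Path.refl _).map q.continuous) := h2
  have e2 : (Path.refl (fun i => (⟨A i, hA i⟩ : ↥(Us n (ζ i) ∩ Us n (ζ' i))))).map q.continuous =
    Path.refl _ := by ext t; rfl
  rw [e2] at h3
  rw [show (P.map q.continuous) = γ.reparam τ hτ hτ0 hτ1 from e] at h3
  exact (Path.Homotopic.trans ⟨Path.Homotopy.reparam γ τ hτ hτ0 hτ1⟩ h3)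

end

/-! ### Filling squares -/

section
open Topology Filter

theorem trans_half {S : Type*} [TopologicalSpace S] {a b c : S} (f : Path a b) (Q : Path b c)
    (u s : unitInterval) (h : (s : ℝ) = u / 2) : f.trans Q s = f u := by
  rw [Path.trans_apply, dif_pos (by have := u.2.2; linarith)]
  congr 1
  ext1
  change 2 * (s : ℝ) = u
  linarith

theorem trans_half' {S : Type*} [TopologicalSpace S] {a b c : S} (f : Path a b) (Q : Path b c)
    (u s : unitInterval) (h : (s : ℝ) = (1 + u) / 2) : f.trans Q s = Q u := by
  rw [Path.trans_apply]
  split_ifs with h1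
  · have h2 : u = 0 := by ext1; exact le_antisymm (by change (u : ℝ) ≤ 0; linarith) u.2.1
    subst h2
    rw [Q.source]
    convert f.target using 2
    ext1
    change 2 * (s : ℝ) = 1
    rw [h]; norm_num
  · congr 1
    ext1
    change 2 * (s : ℝ) - 1 = u
    linarith

/-- Boundary data on the unit square extend to the square: the homotopy between the two ways
`f, Q` and `P, g` around the boundary is reparametrised by `τ = (u + t) / 2` along the paths and by
`σ` across them. The coordinate `σ` is undefined at the two corners where both ways begin and end,
but the homotopy does not depend on it there. -/
theorem square_fill {S : Type*} [TopologicalSpace S] (hS : NullLoops S) {a b a' b' : S}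
    (f : Path a b) (g : Path a' b') (P : Path a a') (Q : Path b b') :
    ∃ E : unitInterval × unitInterval → S, Continuous E ∧ (∀ u, E (u, 0) = f u) ∧
      (∀ u, E (u, 1) = g u) ∧ (∀ t, E (0, t) = P t) ∧ (∀ t, E (1, t) = Q t) := by
  obtain ⟨H⟩ := hS.homotopic (f.trans Q) (P.trans g)
  let m : unitInterval × unitInterval → ℝ := fun q =>
    min ((q.1 : ℝ) + q.2) (2 - q.1 - q.2)
  let σ : unitInterval × unitInterval → ℝ := fun q =>
    1 / 2 + ((q.2 : ℝ) - q.1) / (2 * m q)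
  let τ : unitInterval × unitInterval → unitInterval := fun q =>
    ⟨((q.1 : ℝ) + q.2) / 2, by
      have h1 := q.1.2.1; have h2 := q.2.2.1; have h3 := q.1.2.2; have h4 := q.2.2.2
      constructor <;> linarith⟩
  have hτ : Continuous τ := by
    refine Continuous.subtype_mk ?_ _
    fun_prop
  let pr : ℝ → unitInterval := Set.projIcc 0 1 zero_le_one
  have hpr : Continuous pr := continuous_projIcc
  have pr0 : pr 0 = 0 := Set.projIcc_left zero_le_one
  have pr1 : pr 1 = 1 := Set.projIcc_right zero_le_one
  -- near the two corners the homotopy is constant in its deformation parameter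
  have corner : ∀ (q : unitInterval × unitInterval) (c : S), (∀ s, H (s, τ q) = c) →
      ContinuousAt (fun q => H (pr (σ q), τ q)) q := by
    intro q c hc
    change Tendsto _ _ (𝓝 (H (pr (σ q), τ q)))
    rw [hc]
    intro O hO
    obtain ⟨O', hO', hO'o, hcO⟩ := mem_nhds_iff.1 hO
    have : ∀ᶠ t in 𝓝 (τ q), ∀ s ∈ (Set.univ : Set unitInterval), H (s, t) ∈ O' := by
      refine isCompact_univ.eventually_forall_of_forall_eventually fun s _ => ?_
      have h1 : Continuous fun z : unitInterval × unitInterval => H (z.2, z.1) := by fun_prop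
      exact h1.continuousAt.eventually_mem (hO'o.mem_nhds (by rw [hc]; exact hcO))
    rw [mem_map]
    filter_upwards [hτ.continuousAt.eventually this] with q' hq'
    exact hO' (hq' _ (Set.mem_univ _))
  refine ⟨fun q => H (pr (σ q), τ q), ?_, ?_, ?_, ?_, ?_⟩
  · rw [continuous_iff_continuousAt]
    intro q
    by_cases h0 : (q.1 : ℝ) + q.2 = 0
    · have : τ q = 0 := by ext1; change ((q.1 : ℝ) + q.2) / 2 = 0; rw [h0]; simp
      exact corner q a fun s => by rw [this]; simp
    by_cases h2 : (2 : ℝ) - q.1 - q.2 = 0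
    · have : τ q = 1 := by ext1; change ((q.1 : ℝ) + q.2) / 2 = 1; linarith
      exact corner q b' fun s => by rw [this]; simp
    have hm : 2 * m q ≠ 0 := by
      refine mul_ne_zero two_ne_zero ?_
      simp only [m]
      rcases min_choice ((q.1 : ℝ) + q.2) (2 - q.1 - q.2) with h | h <;> rw [h] <;> assumption
    have hmc : Continuous m := by fun_prop
    have hσ : ContinuousAt σ q := by
      refine continuousAt_const.add (ContinuousAt.div (by fun_prop) (by fun_prop) hm)
    exact H.continuous.continuousAt.comp ((hpr.continuousAt.comp hσ).prodMk hτ.continuousAt)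
  · intro u
    have ht : f.trans Q (τ (u, 0)) = f u := trans_half f Q u _ (by simp [τ])
    by_cases hu : (u : ℝ) = 0
    · have hu' : u = 0 := by ext1; exact hu
      subst hu'
      have : τ (0, 0) = 0 := by ext1; simp [τ]
      simp [this]
    have : σ (u, 0) = 0 := by
      have h1 : m (u, 0) = u := by
        simp only [m, Set.Icc.coe_zero, add_zero, sub_zero]
        exact min_eq_left (by have := u.2.2; linarith)
      simp only [σ, h1, Set.Icc.coe_zero]
      field_simp
      ring
    change H (pr (σ (u, 0)), _) = _
    rw [this, pr0, H.apply_zero]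
    exact ht
  · intro u
    have ht : P.trans g (τ (u, 1)) = g u := trans_half' P g u _ (by simp [τ, add_comm])
    by_cases hu : (u : ℝ) = 1
    · have hu' : u = 1 := by ext1; exact hu
      subst hu'
      have : τ (1, 1) = 1 := by ext1; simp [τ]
      simp [this]
    have hu' : (1 : ℝ) - u ≠ 0 := fun h => hu (by linarith)
    have : σ (u, 1) = 1 := by
      have h1 : m (u, 1) = 1 - u := by
        simp only [m, Set.Icc.coe_one]
        rw [min_eq_right (by have := u.2.1; linarith)]
        ring
      simp only [σ, h1, Set.Icc.coe_one]
      field_simp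
      ring
    change H (pr (σ (u, 1)), _) = _
    rw [this, pr1, H.apply_one]
    exact ht
  · intro t
    have ht : P.trans g (τ (0, t)) = P t := trans_half P g t _ (by simp [τ])
    by_cases hu : (t : ℝ) = 0
    · have hu' : t = 0 := by ext1; exact hu
      subst hu'
      have : τ (0, 0) = 0 := by ext1; simp [τ]
      simp [this]
    have : σ (0, t) = 1 := by
      have h1 : m (0, t) = t := by
        simp only [m, Set.Icc.coe_zero, zero_add, sub_zero]
        exact min_eq_left (by have := t.2.2; linarith)
      simp only [σ, h1, Set.Icc.coe_zero]
      field_simp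
      ring
    change H (pr (σ (0, t)), _) = _
    rw [this, pr1, H.apply_one]
    exact ht
  · intro t
    have ht : f.trans Q (τ (1, t)) = Q t := trans_half' f Q t _ (by simp [τ])
    by_cases hu : (t : ℝ) = 1
    · have hu' : t = 1 := by ext1; exact hu
      subst hu'
      have : τ (1, 1) = 1 := by ext1; simp [τ]
      simp [this]
    have hu' : (1 : ℝ) - t ≠ 0 := fun h => hu (by linarith)
    have : σ (1, t) = 0 := by
      have h1 : m (1, t) = 1 - t := by
        simp only [m, Set.Icc.coe_one]
        rw [min_eq_right (by have := t.2.1; linarith)]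
        ring
      simp only [σ, h1, Set.Icc.coe_one]
      rw [show (t : ℝ) - 1 = -(1 - t) by ring]
      field_simp
      ring
    change H (pr (σ (1, t)), _) = _
    rw [this, pr0, H.apply_zero]
    exact ht

/-- The filling of a square with data on the real line and values in a subset `O`. By the last clause
the filling can be taken independent of `u` if the data are. -/
theorem square_fill_real {X : Type*} [TopologicalSpace X] {O : Set X} (hO : NullLoops O)
    (f g P Q : ℝ → X) (hf : Continuous f) (hg : Continuous g) (hP : Continuous P) (hQ : Continuous Q)
    (h00 : P 0 = f 0) (h01 : P 1 = g 0) (h10 : Q 0 = f 1) (h11 : Q 1 = g 1)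
    (hfO : ∀ t ∈ Set.Icc (0:ℝ) 1, f t ∈ O) (hgO : ∀ t ∈ Set.Icc (0:ℝ) 1, g t ∈ O)
    (hPO : ∀ t ∈ Set.Icc (0:ℝ) 1, P t ∈ O) (hQO : ∀ t ∈ Set.Icc (0:ℝ) 1, Q t ∈ O) :
    ∃ E : ℝ × ℝ → X, Continuous E ∧ (∀ q, E q ∈ O) ∧ (∀ u ∈ Set.Icc (0:ℝ) 1, E (u, 0) = f u) ∧
      (∀ u ∈ Set.Icc (0:ℝ) 1, E (u, 1) = g u) ∧ (∀ t ∈ Set.Icc (0:ℝ) 1, E (0, t) = P t) ∧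
      (∀ t ∈ Set.Icc (0:ℝ) 1, E (1, t) = Q t) ∧
      ((∀ u ∈ Set.Icc (0:ℝ) 1, f u = f 0) → (∀ u ∈ Set.Icc (0:ℝ) 1, g u = g 0) →
        (∀ t ∈ Set.Icc (0:ℝ) 1, Q t = P t) →
        ∀ u ∈ Set.Icc (0:ℝ) 1, ∀ t ∈ Set.Icc (0:ℝ) 1, E (u, t) = P t) := by
  let pr : ℝ → unitInterval := Set.projIcc 0 1 zero_le_one
  have hpr : Continuous pr := continuous_projIcc
  have pr0 : pr 0 = 0 := Set.projIcc_left zero_le_one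
  have pr1 : pr 1 = 1 := Set.projIcc_right zero_le_one
  have prv : ∀ t ∈ Set.Icc (0:ℝ) 1, ((pr t : unitInterval) : ℝ) = t := fun t ht => by
    rw [show pr t = ⟨t, ht⟩ from Set.projIcc_of_mem _ ht]
  by_cases hc : (∀ u ∈ Set.Icc (0:ℝ) 1, f u = f 0) ∧ (∀ u ∈ Set.Icc (0:ℝ) 1, g u = g 0) ∧
        (∀ t ∈ Set.Icc (0:ℝ) 1, Q t = P t)
  · obtain ⟨h1, h2, h3⟩ := hc
    refine ⟨fun q => P (pr q.2), by fun_prop, fun q => hPO _ (pr q.2).2, fun u hu => ?_,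
      fun u hu => ?_, fun t ht => ?_, fun t ht => ?_, fun _ _ _ u hu t ht => ?_⟩
    · simp [pr0, h00, h1 u hu]
    · simp [pr1, h01, h2 u hu]
    · simp [prv t ht]
    · simp [prv t ht, h3 t ht]
    · simp [prv t ht]
  let pth : ∀ (p : ℝ → X) (_ : Continuous p) (h : ∀ t ∈ Set.Icc (0:ℝ) 1, p t ∈ O) (x y : O)
    (_ : p 0 = x) (_ : p 1 = y), Path x y := fun p hp h x y hx hy =>
    { toFun := fun t => ⟨p t, h t t.2⟩
      continuous_toFun := by fun_prop
      source' := Subtype.ext hx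
      target' := Subtype.ext hy }
  have m0 : (0 : ℝ) ∈ Set.Icc (0:ℝ) 1 := by simp
  have m1 : (1 : ℝ) ∈ Set.Icc (0:ℝ) 1 := by simp
  obtain ⟨E, hE, e1, e2, e3, e4⟩ := square_fill hO
    (pth f hf hfO ⟨f 0, hfO 0 m0⟩ ⟨f 1, hfO 1 m1⟩ rfl rfl)
    (pth g hg hgO ⟨g 0, hgO 0 m0⟩ ⟨g 1, hgO 1 m1⟩ rfl rfl)
    (pth P hP hPO _ _ h00 h01) (pth Q hQ hQO _ _ h10 h11)
  refine ⟨fun q => E (pr q.1, pr q.2), by fun_prop, fun q => (E _).2, fun u hu => ?_,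
      fun u hu => ?_, fun t ht => ?_, fun t ht => ?_, fun h1 h2 h3 => absurd ⟨h1, h2, h3⟩ hc⟩
  · simp only [pr0, e1]; exact congrArg f (prv u hu)
  · simp only [pr1, e2]; exact congrArg g (prv u hu)
  · simp only [pr0, e3]; exact congrArg P (prv t ht)
  · simp only [pr1, e4]; exact congrArg Q (prv t ht)

end

/-! ### Filling cubes -/

section
open Topology Filter

/-- Maps from the boundary of a unit cube to `O` extend to the cube, the extension taking values in the
ambient space. With the sup norm on `ℝ³` the cube with centre `c` is the closed ball of radius `1/2`,
and its boundary is the sphere. -/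
def CubeFill {X : Type*} [TopologicalSpace X] (O : Set X) : Prop :=
  ∀ (c : ℝ × ℝ × ℝ) (b : ℝ × ℝ × ℝ → X), ContinuousOn b (Metric.sphere c (1 / 2)) →
    (∀ p ∈ Metric.sphere c (1 / 2), b p ∈ O) →
    ∃ K : ℝ × ℝ × ℝ → X, ContinuousOn K (Metric.closedBall c (1 / 2)) ∧
      ∀ p ∈ Metric.sphere c (1 / 2), K p = b p

/-- If a family `C s` contracts `O` from the identity, at `s = 1`, to a point, at `s = 0`, then `O`
admits fillings of cubes: the boundary map is coned off radially. -/
theorem cubeFill_of_cone {X : Type*} [TopologicalSpace X] {O : Set X} (C : ℝ → X → X)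
    (h1 : ∀ x ∈ O, C 1 x = x) (h0 : ∀ x ∈ O, ∀ y ∈ O, C 0 x = C 0 y)
    (hC : ∀ (Y : Type) [TopologicalSpace Y] (b : Y → X) (s : Y → ℝ), Continuous b →
      Continuous s → (∀ y, b y ∈ O) → (∀ y, 0 ≤ s y) → Continuous fun y => C (s y) (b y)) :
    CubeFill O := by
  intro c b hb hbO
  obtain ⟨p₀, hp₀⟩ : (Metric.sphere c (1 / 2 : ℝ)).Nonempty :=
    NormedSpace.sphere_nonempty.2 (by norm_num)
  let π : ℝ × ℝ × ℝ → ℝ × ℝ × ℝ := fun p => c + (1 / (2 * dist p c)) • (p - c)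
  have hπ : ∀ p, dist p c ≠ 0 → π p ∈ Metric.sphere c (1 / 2) := by
    intro p hp
    rw [mem_sphere_iff_norm, add_sub_cancel_left, norm_smul, ← dist_eq_norm p c]
    rw [Real.norm_of_nonneg (by positivity)]
    field_simp
  let K : ℝ × ℝ × ℝ → X := fun p =>
    if dist p c ≤ 1 / 4 then C 0 (b p₀) else C (max 0 (4 * dist p c - 1)) (b (π p))
  let A : Set (ℝ × ℝ × ℝ) := {p | 1 / 4 ≤ dist p c}
  have hA : IsClosed A := isClosed_le continuous_const (by fun_prop)
  have hKA : ∀ p ∈ A, K p = C (max 0 (4 * dist p c - 1)) (b (π p)) := by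
    intro p hp
    have hp' : 1 / 4 ≤ dist p c := hp
    simp only [K]
    split_ifs with h
    · have : dist p c = 1 / 4 := le_antisymm h hp'
      have e : max 0 (4 * dist p c - 1) = 0 := by rw [this]; norm_num
      rw [e]
      exact h0 _ (hbO _ hp₀) _ (hbO _ (hπ p (by rw [this]; norm_num)))
    · rfl
  refine ⟨K, ?_, ?_⟩
  · have e : Metric.closedBall c (1 / 2) ⊆ Metric.closedBall c (1 / 4) ∪ A := by
      intro p _
      rcases le_total (dist p c) (1 / 4) with h | h
      · exact Or.inl h
      · exact Or.inr h
    refine ContinuousOn.mono ?_ e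
    refine ContinuousOn.union_of_isClosed ?_ ?_ Metric.isClosed_closedBall hA
    · refine continuousOn_const (c := C 0 (b p₀)) |>.congr fun p hp => ?_
      exact if_pos hp
    · refine ContinuousOn.congr ?_ hKA
      rw [continuousOn_iff_continuous_domRestrict]
      have hpos : ∀ p : A, dist p.1 c ≠ 0 := fun p => by
        have : 1 / 4 ≤ dist p.1 c := p.2
        intro h; rw [h] at this; norm_num at this
      have hπc : Continuous fun p : A => π p.1 := by
        have h1 : Continuous fun p : A => 1 / (2 * dist p.1 c) :=
          continuous_const.div (by fun_prop) fun p => mul_ne_zero two_ne_zero (hpos p)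
        have h2 : Continuous fun p : A => p.1 - c := continuous_subtype_val.sub continuous_const
        exact continuous_const.add (h1.smul h2)
      refine hC A (fun p => b (π p.1)) (fun p => max 0 (4 * dist p.1 c - 1)) ?_ (by fun_prop)
        (fun p => hbO _ (hπ _ (hpos p))) (fun p => le_max_left _ _)
      exact hb.comp_continuous hπc fun p => hπ _ (hpos p)
  · intro p hp
    have hp' : dist p c = 1 / 2 := hp
    rw [hKA p (by change 1 / 4 ≤ dist p c; rw [hp']; norm_num)]
    have e : π p = p := by
      simp only [π, hp']
      norm_num
    rw [e, hp', show max (0 : ℝ) (4 * (1 / 2) - 1) = 1 by norm_num]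
    exact h1 _ (hbO p hp)

end

/-! ### Homotopies over the integer grid -/

section
open Topology Filter

/-- The centre of the unit cube over the cell with lower left corner `(i, j)`. -/
noncomputable def cc (i j : ℤ) : ℝ × ℝ × ℝ := (i + 1 / 2, j + 1 / 2, 1 / 2)

theorem mem_ball_cc {i j : ℤ} {a b t : ℝ} : (a, b, t) ∈ Metric.closedBall (cc i j) (1 / 2) ↔
    (i ≤ a ∧ a ≤ i + 1) ∧ (j ≤ b ∧ b ≤ j + 1) ∧ 0 ≤ t ∧ t ≤ 1 := by
  rw [Metric.mem_closedBall, cc, Prod.dist_eq, Prod.dist_eq, max_le_iff, max_le_iff]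
  simp only [Real.dist_eq, abs_le]
  constructor
  · rintro ⟨⟨h1, h2⟩, ⟨h3, h4⟩, h5, h6⟩
    refine ⟨⟨?_, ?_⟩, ⟨?_, ?_⟩, ?_, ?_⟩ <;> linarith
  · rintro ⟨⟨h1, h2⟩, ⟨h3, h4⟩, h5, h6⟩
    refine ⟨⟨?_, ?_⟩, ⟨?_, ?_⟩, ?_, ?_⟩ <;> linarith

theorem mem_sphere_cc {i j : ℤ} {a b t : ℝ} : (a, b, t) ∈ Metric.sphere (cc i j) (1 / 2) ↔
    (a, b, t) ∈ Metric.closedBall (cc i j) (1 / 2) ∧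
      (t = 0 ∨ t = 1 ∨ b = j ∨ b = j + 1 ∨ a = i ∨ a = i + 1) := by
  have e : ∀ x y : ℝ, |x - (y + 1 / 2)| = 1 / 2 ↔ x = y ∨ x = y + 1 := by
    intro x y
    rw [abs_eq (by norm_num)]
    constructor
    · rintro (h | h)
      · right; linarith
      · left; linarith
    · rintro (h | h)
      · right; linarith
      · left; linarith
  have e0 : |t - 1 / 2| = 1 / 2 ↔ t = 0 ∨ t = 1 := by simpa using e t 0
  have e1 := e a i
  have e2 := e b j
  rw [Metric.mem_sphere, Metric.mem_closedBall]
  simp only [cc, Prod.dist_eq, Real.dist_eq]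
  constructor
  · intro h
    refine ⟨h.le, ?_⟩
    rcases max_choice |a - (i + 1 / 2)| (max |b - (j + 1 / 2)| |t - 1 / 2|) with h1 | h1
    · rw [h1] at h; have := e1.1 h; tauto
    rcases max_choice |b - (j + 1 / 2)| |t - 1 / 2| with h2 | h2
    · rw [h1, h2] at h; have := e2.1 h; tauto
    · rw [h1, h2] at h; have := e0.1 h; tauto
  · rintro ⟨h, h'⟩
    refine le_antisymm h ?_
    have : |a - (i + 1 / 2)| = 1 / 2 ∨ |b - (j + 1 / 2)| = 1 / 2 ∨ |t - 1 / 2| = 1 / 2 := by tauto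
    rw [le_max_iff, le_max_iff]
    rcases this with h | h | h
    · exact Or.inl h.ge
    · exact Or.inr (Or.inl h.ge)
    · exact Or.inr (Or.inr h.ge)

/-- The closed columns over the cells of the integer grid. -/
def col (c : ℤ × ℤ) : Set (ℝ × ℝ × ℝ) :=
  {p | ((c.1 : ℝ) ≤ p.1 ∧ p.1 ≤ c.1 + 1) ∧ (c.2 : ℝ) ≤ p.2.1 ∧ p.2.1 ≤ c.2 + 1}

theorem isClosed_col (c : ℤ × ℤ) : IsClosed (col c) :=
  ((isClosed_le (f := fun _ : ℝ × ℝ × ℝ => (c.1 : ℝ)) (g := fun p => p.1) (by fun_prop)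
    (by fun_prop)).inter (isClosed_le (f := fun p : ℝ × ℝ × ℝ => p.1) (g := fun _ => (c.1 : ℝ) + 1)
    (by fun_prop) (by fun_prop))).inter
    ((isClosed_le (f := fun _ : ℝ × ℝ × ℝ => (c.2 : ℝ)) (g := fun p => p.2.1) (by fun_prop)
    (by fun_prop)).inter (isClosed_le (f := fun p : ℝ × ℝ × ℝ => p.2.1)
    (g := fun _ => (c.2 : ℝ) + 1) (by fun_prop) (by fun_prop)))

theorem locallyFinite_col : LocallyFinite col := by
  intro p
  refine ⟨Metric.ball p 1, Metric.ball_mem_nhds p one_pos, ?_⟩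
  refine (Set.Finite.prod (Set.finite_Icc (⌊p.1⌋ - 2) (⌊p.1⌋ + 2))
    (Set.finite_Icc (⌊p.2.1⌋ - 2) (⌊p.2.1⌋ + 2))).subset ?_
  rintro ⟨i, j⟩ ⟨q, ⟨⟨h1, h2⟩, h3, h4⟩, hq⟩
  have key : ∀ (x y : ℝ) (i : ℤ), dist y x < 1 → (i : ℝ) ≤ y → y ≤ i + 1 →
      i ∈ Set.Icc (⌊x⌋ - 2) (⌊x⌋ + 2) := by
    intro x y i h h1 h2
    rw [Real.dist_eq, abs_lt] at h
    have := Int.floor_le x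
    have := Int.lt_floor_add_one x
    constructor
    · have : (⌊x⌋ : ℝ) - 3 < i := by linarith
      have : ⌊x⌋ - 3 < i := by exact_mod_cast this
      omega
    · have : (i : ℝ) < ⌊x⌋ + 3 := by linarith
      have : i < ⌊x⌋ + 3 := by exact_mod_cast this
      omega
  rw [Metric.mem_ball, Prod.dist_eq, Prod.dist_eq, max_lt_iff, max_lt_iff] at hq
  exact ⟨key _ _ _ hq.1 h1 h2, key _ _ _ hq.2.1 h3 h4⟩

theorem iUnion_col : ⋃ c, col c = Set.univ := by
  refine Set.eq_univ_of_forall fun p => Set.mem_iUnion.2 ⟨(⌊p.1⌋, ⌊p.2.1⌋), ?_⟩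
  exact ⟨⟨Int.floor_le _, (Int.lt_floor_add_one _).le⟩, Int.floor_le _, (Int.lt_floor_add_one _).le⟩

/-- A homotopy from `f` to `g`, built over the skeleta of the integer grid, when both maps send each cell
`(i, j)` into the same `W (θ i j)`: it is given by `P` over the vertices, by `square_fill_real` over the
edges and by `CubeFill` over the cells. The last two clauses say that over an edge along which the data
are constant the homotopy is constant too. -/
theorem grid {X Θ : Type*} [TopologicalSpace X] (W : Θ → Set X)
    (hnull : ∀ θ θ', NullLoops ↥(W θ ∩ W θ')) (hfill : ∀ θ, CubeFill (W θ))
    (f g : ℝ × ℝ → X) (hf : Continuous f) (hg : Continuous g) (θ : ℤ → ℤ → Θ)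
    (hfθ : ∀ (i j : ℤ) (a b : ℝ), i ≤ a → a ≤ i + 1 → j ≤ b → b ≤ j + 1 → f (a, b) ∈ W (θ i j))
    (hgθ : ∀ (i j : ℤ) (a b : ℝ), i ≤ a → a ≤ i + 1 → j ≤ b → b ≤ j + 1 → g (a, b) ∈ W (θ i j))
    (P : ℤ → ℤ → ℝ → X) (hP : ∀ i j, Continuous (P i j)) (hP0 : ∀ i j, P i j 0 = f (i, j))
    (hP1 : ∀ i j, P i j 1 = g (i, j))
    (hPθ : ∀ (i j i' j' : ℤ), (i' = i ∨ i' = i - 1) → (j' = j ∨ j' = j - 1) →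
      ∀ t ∈ Set.Icc (0 : ℝ) 1, P i j t ∈ W (θ i' j')) :
    ∃ K : ℝ × ℝ × ℝ → X, Continuous K ∧ (∀ a b, K (a, b, 0) = f (a, b)) ∧
      (∀ a b, K (a, b, 1) = g (a, b)) ∧
      (∀ i j : ℤ, (∀ u ∈ Set.Icc (0:ℝ) 1, f (i + u, j) = f (i, j)) →
        (∀ u ∈ Set.Icc (0:ℝ) 1, g (i + u, j) = g (i, j)) →
        (∀ t ∈ Set.Icc (0:ℝ) 1, P (i + 1) j t = P i j t) →
        ∀ u ∈ Set.Icc (0:ℝ) 1, ∀ t ∈ Set.Icc (0:ℝ) 1, K (i + u, j, t) = P i j t) ∧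
      (∀ i j : ℤ, (∀ u ∈ Set.Icc (0:ℝ) 1, f (i, j + u) = f (i, j)) →
        (∀ u ∈ Set.Icc (0:ℝ) 1, g (i, j + u) = g (i, j)) →
        (∀ t ∈ Set.Icc (0:ℝ) 1, P i (j + 1) t = P i j t) →
        ∀ u ∈ Set.Icc (0:ℝ) 1, ∀ t ∈ Set.Icc (0:ℝ) 1, K (i, j + u, t) = P i j t) := by
  have m0 : (0 : ℝ) ∈ Set.Icc (0:ℝ) 1 := by simp
  have m1 : (1 : ℝ) ∈ Set.Icc (0:ℝ) 1 := by simp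
  -- fillings of the faces over the edges of the grid
  have exH : ∀ i j : ℤ, ∃ E : ℝ × ℝ → X, Continuous E ∧ (∀ q, E q ∈ W (θ i j) ∩ W (θ i (j - 1))) ∧
      (∀ u ∈ Set.Icc (0:ℝ) 1, E (u, 0) = f (i + u, j)) ∧
      (∀ u ∈ Set.Icc (0:ℝ) 1, E (u, 1) = g (i + u, j)) ∧
      (∀ t ∈ Set.Icc (0:ℝ) 1, E (0, t) = P i j t) ∧
      (∀ t ∈ Set.Icc (0:ℝ) 1, E (1, t) = P (i + 1) j t) ∧
      ((∀ u ∈ Set.Icc (0:ℝ) 1, f (i + u, j) = f (i + 0, j)) →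
        (∀ u ∈ Set.Icc (0:ℝ) 1, g (i + u, j) = g (i + 0, j)) →
        (∀ t ∈ Set.Icc (0:ℝ) 1, P (i + 1) j t = P i j t) →
        ∀ u ∈ Set.Icc (0:ℝ) 1, ∀ t ∈ Set.Icc (0:ℝ) 1, E (u, t) = P i j t) := by
    intro i j
    refine square_fill_real (hnull _ _) (fun u => f (i + u, j)) (fun u => g (i + u, j)) (P i j)
      (P (i + 1) j) (by fun_prop) (by fun_prop) (hP _ _) (hP _ _) ?_ ?_ ?_ ?_ ?_ ?_ ?_ ?_
    · simp [hP0]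
    · simp [hP1]
    · simp [hP0]
    · simp [hP1]
    · rintro t ⟨h, h'⟩
      refine ⟨hfθ _ _ _ _ ?_ ?_ ?_ ?_, hfθ _ _ _ _ ?_ ?_ ?_ ?_⟩ <;> push_cast <;> linarith
    · rintro t ⟨h, h'⟩
      refine ⟨hgθ _ _ _ _ ?_ ?_ ?_ ?_, hgθ _ _ _ _ ?_ ?_ ?_ ?_⟩ <;> push_cast <;> linarith
    · exact fun t ht => ⟨hPθ _ _ _ _ (by simp) (by simp) t ht, hPθ _ _ _ _ (by simp) (by simp) t ht⟩
    · exact fun t ht => ⟨hPθ _ _ _ _ (by simp) (by simp) t ht, hPθ _ _ _ _ (by simp) (by simp) t ht⟩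
  have exV : ∀ i j : ℤ, ∃ E : ℝ × ℝ → X, Continuous E ∧ (∀ q, E q ∈ W (θ i j) ∩ W (θ (i - 1) j)) ∧
      (∀ u ∈ Set.Icc (0:ℝ) 1, E (u, 0) = f (i, j + u)) ∧
      (∀ u ∈ Set.Icc (0:ℝ) 1, E (u, 1) = g (i, j + u)) ∧
      (∀ t ∈ Set.Icc (0:ℝ) 1, E (0, t) = P i j t) ∧
      (∀ t ∈ Set.Icc (0:ℝ) 1, E (1, t) = P i (j + 1) t) ∧
      ((∀ u ∈ Set.Icc (0:ℝ) 1, f (i, j + u) = f (i, j + 0)) →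
        (∀ u ∈ Set.Icc (0:ℝ) 1, g (i, j + u) = g (i, j + 0)) →
        (∀ t ∈ Set.Icc (0:ℝ) 1, P i (j + 1) t = P i j t) →
        ∀ u ∈ Set.Icc (0:ℝ) 1, ∀ t ∈ Set.Icc (0:ℝ) 1, E (u, t) = P i j t) := by
    intro i j
    refine square_fill_real (hnull _ _) (fun u => f (i, j + u)) (fun u => g (i, j + u)) (P i j)
      (P i (j + 1)) (by fun_prop) (by fun_prop) (hP _ _) (hP _ _) ?_ ?_ ?_ ?_ ?_ ?_ ?_ ?_
    · simp [hP0]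
    · simp [hP1]
    · simp [hP0]
    · simp [hP1]
    · rintro t ⟨h, h'⟩
      refine ⟨hfθ _ _ _ _ ?_ ?_ ?_ ?_, hfθ _ _ _ _ ?_ ?_ ?_ ?_⟩ <;> push_cast <;> linarith
    · rintro t ⟨h, h'⟩
      refine ⟨hgθ _ _ _ _ ?_ ?_ ?_ ?_, hgθ _ _ _ _ ?_ ?_ ?_ ?_⟩ <;> push_cast <;> linarith
    · exact fun t ht => ⟨hPθ _ _ _ _ (by simp) (by simp) t ht, hPθ _ _ _ _ (by simp) (by simp) t ht⟩
    · exact fun t ht => ⟨hPθ _ _ _ _ (by simp) (by simp) t ht, hPθ _ _ _ _ (by simp) (by simp) t ht⟩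
  choose H hH HW H0 H1 HP HP' Hc using exH
  choose V hV VW V0 V1 VP VP' Vc using exV
  -- the map on the union of all boundaries of cubes
  let B : ℝ × ℝ × ℝ → X := fun p =>
    if p.2.2 = 0 then f (p.1, p.2.1) else if p.2.2 = 1 then g (p.1, p.2.1) else
      if Int.fract p.2.1 = 0 then H ⌊p.1⌋ ⌊p.2.1⌋ (Int.fract p.1, p.2.2) else
        V ⌊p.1⌋ ⌊p.2.1⌋ (Int.fract p.2.1, p.2.2)
  have B0 : ∀ a b, B (a, b, 0) = f (a, b) := fun a b => by simp [B]
  have B1 : ∀ a b, B (a, b, 1) = g (a, b) := fun a b => by simp [B]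
  have BH : ∀ (i j : ℤ) (u t : ℝ), u ∈ Set.Icc (0:ℝ) 1 → t ∈ Set.Icc (0:ℝ) 1 →
      B (i + u, j, t) = H i j (u, t) := by
    intro i j u t hu ht
    by_cases h0 : t = 0
    · rw [h0, B0, H0 _ _ _ hu]
    by_cases h1 : t = 1
    · rw [h1, B1, H1 _ _ _ hu]
    simp only [B, h0, h1, if_false, Int.fract_intCast, if_true, Int.floor_intCast,
      Int.floor_intCast_add, Int.fract_intCast_add]
    rcases hu.2.eq_or_lt with h | h
    · subst h
      simp [HP _ _ _ ht, HP' _ _ _ ht]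
    · have e : ⌊u⌋ = 0 := Int.floor_eq_zero_iff.2 ⟨hu.1, h⟩
      rw [e, add_zero, Int.fract_eq_self.2 ⟨hu.1, h⟩]
  have BV : ∀ (i j : ℤ) (u t : ℝ), u ∈ Set.Icc (0:ℝ) 1 → t ∈ Set.Icc (0:ℝ) 1 →
      B (i, j + u, t) = V i j (u, t) := by
    intro i j u t hu ht
    by_cases h0 : t = 0
    · rw [h0, B0, V0 _ _ _ hu]
    by_cases h1 : t = 1
    · rw [h1, B1, V1 _ _ _ hu]
    simp only [B, h0, h1, if_false, Int.fract_intCast, Int.floor_intCast,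
      Int.floor_intCast_add, Int.fract_intCast_add]
    rcases hu.2.eq_or_lt with h | h
    · subst h
      simp [HP _ _ _ ht, VP' _ _ _ ht]
    · have e : ⌊u⌋ = 0 := Int.floor_eq_zero_iff.2 ⟨hu.1, h⟩
      rw [e, add_zero, Int.fract_eq_self.2 ⟨hu.1, h⟩]
      split_ifs with h2
      · rw [h2, HP _ _ _ ht, VP _ _ _ ht]
      · rfl
  have exC : ∀ i j : ℤ, ∃ K : ℝ × ℝ × ℝ → X, ContinuousOn K (Metric.closedBall (cc i j) (1 / 2)) ∧
      ∀ p ∈ Metric.sphere (cc i j) (1 / 2), K p = B p := by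
    intro i j
    let Sp := Metric.sphere (cc i j) (1 / 2 : ℝ)
    have rg : ∀ p ∈ Sp, (p.1 - i ∈ Set.Icc (0:ℝ) 1) ∧ (p.2.1 - j ∈ Set.Icc (0:ℝ) 1) ∧
        p.2.2 ∈ Set.Icc (0:ℝ) 1 := by
      rintro ⟨a, b, t⟩ hp
      have := (mem_sphere_cc.1 hp).1
      rw [mem_ball_cc] at this
      obtain ⟨⟨h1, h2⟩, ⟨h3, h4⟩, h5⟩ := this
      refine ⟨⟨?_, ?_⟩, ⟨?_, ?_⟩, h5⟩ <;> dsimp only <;> linarith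
    have F0 : ∀ p ∈ Sp, p.2.2 = 0 → B p = f (p.1, p.2.1) := fun p _ h => by
      simp only [B, h, if_true]
    have F1 : ∀ p ∈ Sp, p.2.2 = 1 → B p = g (p.1, p.2.1) := fun p _ h => by
      simp only [B, h, if_true, one_ne_zero, if_false]
    have F2 : ∀ p ∈ Sp, p.2.1 = j → B p = H i j (p.1 - i, p.2.2) := by
      rintro ⟨a, b, t⟩ hp (rfl : b = j)
      rw [← BH i j _ _ (rg _ hp).1 (rg _ hp).2.2]
      simp
    have F3 : ∀ p ∈ Sp, p.2.1 = j + 1 → B p = H i (j + 1) (p.1 - i, p.2.2) := by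
      rintro ⟨a, b, t⟩ hp (rfl : b = j + 1)
      rw [← BH i (j + 1) _ _ (rg _ hp).1 (rg _ hp).2.2]
      simp
    have F4 : ∀ p ∈ Sp, p.1 = i → B p = V i j (p.2.1 - j, p.2.2) := by
      rintro ⟨a, b, t⟩ hp (rfl : a = i)
      rw [← BV i j _ _ (rg _ hp).2.1 (rg _ hp).2.2]
      simp
    have F5 : ∀ p ∈ Sp, p.1 = i + 1 → B p = V (i + 1) j (p.2.1 - j, p.2.2) := by
      rintro ⟨a, b, t⟩ hp (rfl : a = i + 1)
      rw [← BV (i + 1) j _ _ (rg _ hp).2.1 (rg _ hp).2.2]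
      simp
    have hSp : IsClosed Sp := Metric.isClosed_sphere
    have cl : ∀ (φ : ℝ × ℝ × ℝ → ℝ) (c : ℝ), Continuous φ → IsClosed (Sp ∩ {p | φ p = c}) :=
      fun φ c hφ => hSp.inter (isClosed_eq hφ continuous_const)
    have face : ∀ (φ : ℝ × ℝ × ℝ → ℝ) (c : ℝ) (G : ℝ × ℝ × ℝ → X), Continuous G →
        (∀ p ∈ Sp, φ p = c → B p = G p) → ContinuousOn B (Sp ∩ {p | φ p = c}) :=
      fun φ c G hG h => hG.continuousOn.congr fun p hp => h p hp.1 hp.2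
    have cov : ∀ p ∈ Sp, p.2.2 = 0 ∨ p.2.2 = 1 ∨ p.2.1 = j ∨ p.2.1 = j + 1 ∨ p.1 = i ∨
        p.1 = i + 1 := by
      rintro ⟨a, b, t⟩ hp
      exact (mem_sphere_cc.1 hp).2
    refine hfill (θ i j) (cc i j) B ?_ ?_
    · have c0 := face (fun p => p.2.2) 0 _ (by fun_prop) F0
      have c1 := face (fun p => p.2.2) 1 _ (by fun_prop) F1
      have c2 := face (fun p => p.2.1) j _ (by fun_prop) F2
      have c3 := face (fun p => p.2.1) (j + 1) _ (by fun_prop) F3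
      have c4 := face (fun p => p.1) i _ (by fun_prop) F4
      have c5 := face (fun p => p.1) (i + 1) _ (by fun_prop) F5
      have d0 := cl (fun p => p.2.2) 0 (by fun_prop)
      have d1 := cl (fun p => p.2.2) 1 (by fun_prop)
      have d2 := cl (fun p => p.2.1) j (by fun_prop)
      have d3 := cl (fun p => p.2.1) (j + 1) (by fun_prop)
      have d4 := cl (fun p => p.1) i (by fun_prop)
      have d5 := cl (fun p => p.1) (i + 1) (by fun_prop)
      have := c0.union_of_isClosed (c1.union_of_isClosed (c2.union_of_isClosed
        (c3.union_of_isClosed (c4.union_of_isClosed c5 d4 d5) d3 (d4.union d5)) d2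
        (d3.union (d4.union d5))) d1 (d2.union (d3.union (d4.union d5)))) d0
        (d1.union (d2.union (d3.union (d4.union d5))))
      refine this.mono fun p hp => ?_
      rcases cov p hp with h | h | h | h | h | h
      · exact Or.inl ⟨hp, h⟩
      · exact Or.inr (Or.inl ⟨hp, h⟩)
      · exact Or.inr (Or.inr (Or.inl ⟨hp, h⟩))
      · exact Or.inr (Or.inr (Or.inr (Or.inl ⟨hp, h⟩)))
      · exact Or.inr (Or.inr (Or.inr (Or.inr (Or.inl ⟨hp, h⟩))))
      · exact Or.inr (Or.inr (Or.inr (Or.inr (Or.inr ⟨hp, h⟩))))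
    · rintro ⟨a, b, t⟩ hp
      have := (mem_sphere_cc.1 hp).1
      rw [mem_ball_cc] at this
      obtain ⟨⟨h1, h2⟩, ⟨h3, h4⟩, h5, h6⟩ := this
      rcases cov _ hp with h | h | h | h | h | h
      · rw [F0 _ hp h]
        exact hfθ _ _ _ _ h1 h2 h3 h4
      · rw [F1 _ hp h]
        exact hgθ _ _ _ _ h1 h2 h3 h4
      · rw [F2 _ hp h]
        exact (HW _ _ _).1
      · rw [F3 _ hp h]
        simpa using (HW i (j + 1) _).2
      · rw [F4 _ hp h]
        exact (VW _ _ _).1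
      · rw [F5 _ hp h]
        simpa using (VW (i + 1) j _).2
  choose C hC CB using exC
  let pr : ℝ → ℝ := fun t => (Set.projIcc 0 1 zero_le_one t : unitInterval)
  have hpr : Continuous pr := continuous_subtype_val.comp continuous_projIcc
  have prm : ∀ t, 0 ≤ pr t ∧ pr t ≤ 1 := fun t => (Set.projIcc 0 1 zero_le_one t).2
  have pre : ∀ t ∈ Set.Icc (0:ℝ) 1, pr t = t := fun t ht => by
    simp only [pr]; rw [Set.projIcc_of_mem _ ht]
  let K : ℝ × ℝ × ℝ → X := fun p => C ⌊p.1⌋ ⌊p.2.1⌋ (p.1, p.2.1, pr p.2.2)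
  have floorcell : ∀ a : ℝ, (⌊a⌋ : ℝ) ≤ a ∧ a ≤ ⌊a⌋ + 1 := fun a =>
    ⟨Int.floor_le a, (Int.lt_floor_add_one a).le⟩
  have KC : ∀ (i j : ℤ), ∀ p ∈ col (i, j), K p = C i j (p.1, p.2.1, pr p.2.2) := by
    rintro i j ⟨a, b, t⟩ ⟨ha, hb⟩
    dsimp only at ha hb
    have inb : (a, b, pr t) ∈ Metric.closedBall (cc i j) (1 / 2) := mem_ball_cc.2 ⟨ha, hb, prm t⟩
    have inb' : (a, b, pr t) ∈ Metric.closedBall (cc ⌊a⌋ ⌊b⌋) (1 / 2) :=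
      mem_ball_cc.2 ⟨floorcell a, floorcell b, prm t⟩
    have key : ∀ (i : ℤ) (a : ℝ), (i : ℝ) ≤ a ∧ a ≤ i + 1 → ⌊a⌋ = i ∨ (a = i + 1 ∧ a = ⌊a⌋) := by
      intro i a h
      rcases h.2.eq_or_lt with h' | h'
      · right; refine ⟨h', ?_⟩; rw [h']; simp
      · left; exact Int.floor_eq_iff.2 ⟨h.1, h'⟩
    by_cases h : ⌊a⌋ = i ∧ ⌊b⌋ = j
    · simp only [K, h.1, h.2]
    · have h1 := key i a ha
      have h2 := key j b hb
      simp only [K]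
      rw [CB _ _ _ (mem_sphere_cc.2 ⟨inb', by tauto⟩), CB _ _ _ (mem_sphere_cc.2 ⟨inb, by tauto⟩)]
  have Kb : ∀ (i j : ℤ) (a b t : ℝ), (a, b, t) ∈ Metric.sphere (cc i j) (1 / 2) →
      K (a, b, t) = B (a, b, t) := by
    intro i j a b t h
    have h' := (mem_sphere_cc.1 h).1
    rw [mem_ball_cc] at h'
    rw [KC i j _ ⟨h'.1, h'.2.1⟩]
    simp only [pre t h'.2.2]
    exact CB _ _ _ h
  refine ⟨K, ?_, fun a b => ?_, fun a b => ?_, fun i j h1 h2 h3 u hu t ht => ?_,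
    fun i j h1 h2 h3 u hu t ht => ?_⟩
  · refine locallyFinite_col.continuous iUnion_col isClosed_col fun c => ?_
    refine ContinuousOn.congr ?_ fun p hp => KC c.1 c.2 p hp
    refine (hC c.1 c.2).comp (by fun_prop) ?_
    rintro ⟨a, b, t⟩ ⟨ha, hb⟩
    exact mem_ball_cc.2 ⟨ha, hb, prm t⟩
  · rw [Kb ⌊a⌋ ⌊b⌋ _ _ _ (mem_sphere_cc.2 ⟨mem_ball_cc.2 ⟨floorcell a, floorcell b, by simp⟩,
      by simp⟩), B0]
  · rw [Kb ⌊a⌋ ⌊b⌋ _ _ _ (mem_sphere_cc.2 ⟨mem_ball_cc.2 ⟨floorcell a, floorcell b, by simp⟩,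
      by simp⟩), B1]
  · rw [Kb i j _ _ _ (mem_sphere_cc.2 ⟨mem_ball_cc.2 ⟨⟨by linarith [hu.1], by linarith [hu.2]⟩,
      by simp, ht⟩, by simp⟩), BH i j u t hu ht]
    exact Hc i j (by simpa using h1) (by simpa using h2) h3 u hu t ht
  · rw [Kb i j _ _ _ (mem_sphere_cc.2 ⟨mem_ball_cc.2 ⟨by simp,
      ⟨by linarith [hu.1], by linarith [hu.2]⟩, ht⟩, by simp⟩), BV i j u t hu ht]
    exact Vc i j (by simpa using h1) (by simpa using h2) h3 u hu t ht

end

/-! ### Eigenvalue angles -/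

section
open Topology Filter Matrix
open scoped Matrix.Norms.L2Operator ComplexOrder ComplexConjugate

/-- The diagonal matrix with entries `e^{i x_l}`. -/
noncomputable def dM {n : ℕ} (x : Fin n → ℝ) : Mat n := diagonal fun l => Complex.exp (x l * Complex.I)

theorem dM_mem {n : ℕ} (x : Fin n → ℝ) : dM x ∈ Matrix.unitaryGroup (Fin n) ℂ := by
  rw [Matrix.mem_unitaryGroup_iff', star_eq_conjTranspose, dM, diagonal_conjTranspose, diagonal_mul_diagonal,
    ← diagonal_one]
  congr 1
  funext l
  exact zz (Complex.norm_exp_ofReal_mul_I _)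

/-- `dM` as a unitary matrix. -/
noncomputable def dU {n : ℕ} (x : Fin n → ℝ) : Un n := ⟨dM x, dM_mem x⟩

/-- The Cayley transform of a unitary matrix, multiplied by `i`, is Hermitian. -/
theorem cayley_herm {n : ℕ} {ζ : ℂ} (hζ : ‖ζ‖ = 1) {A : Un n} (hA : A ∈ Us n ζ) :
    (Complex.I • ((ζ • (1 : Mat n) + A.1) * (ζ • (1 : Mat n) - A.1)⁻¹)).IsHermitian := by
  have hD : IsUnit (ζ • (1 : Mat n) - A.1) := hA
  set D := ζ • (1 : Mat n) - A.1 with hDd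
  set N := ζ • (1 : Mat n) + A.1 with hN
  have hDd' : IsUnit D.det := (Matrix.isUnit_iff_isUnit_det _).1 hD
  have hDs : IsUnit (Dᴴ).det := by rw [det_conjTranspose]; exact hDd'.star
  have hcomm : N * D = D * N := by
    rw [hN, hDd]; simp only [add_mul, mul_sub, sub_mul, mul_add, smul_mul_assoc, mul_smul_comm, one_mul, mul_one]; module
  have hkey : -(Nᴴ * D) = Dᴴ * N := by
    rw [hN, hDd]
    simp only [conjTranspose_add, conjTranspose_sub, conjTranspose_smul, conjTranspose_one,
      add_mul, mul_sub, sub_mul, mul_add, smul_mul_assoc, mul_smul_comm, one_mul, mul_one, un_star_mul,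
      smul_smul]
    have : star ζ * ζ = 1 := zz hζ
    match_scalars <;> first | ring1 | linear_combination (-2) * this
  have h2 : N * D⁻¹ = D⁻¹ * N := by
    calc N * D⁻¹ = D⁻¹ * (D * N) * D⁻¹ := by rw [← mul_assoc, nonsing_inv_mul _ hDd', one_mul]
      _ = D⁻¹ * (N * D) * D⁻¹ := by rw [hcomm]
      _ = D⁻¹ * N := by rw [mul_assoc, mul_assoc, mul_nonsing_inv _ hDd', mul_one]
  change _ᴴ = _
  rw [h2, conjTranspose_smul, conjTranspose_mul, conjTranspose_nonsing_inv]
  have h3 : Nᴴ * (Dᴴ)⁻¹ = -(N * D⁻¹) := by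
    have hcs : Dᴴ * Nᴴ = Nᴴ * Dᴴ := by rw [← conjTranspose_mul, hcomm, conjTranspose_mul]
    have h4 : -(Dᴴ * Nᴴ * D) = Dᴴ * (Dᴴ * N) := by rw [← hkey, mul_neg, mul_assoc]
    calc Nᴴ * (Dᴴ)⁻¹ = (Dᴴ)⁻¹ * (Dᴴ * Nᴴ) * (Dᴴ)⁻¹ := by
          rw [← mul_assoc, nonsing_inv_mul _ hDs, one_mul]
      _ = (Dᴴ)⁻¹ * Nᴴ := by rw [hcs, mul_assoc, mul_assoc, mul_nonsing_inv _ hDs, mul_one]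
      _ = (Dᴴ)⁻¹ * (Nᴴ * D) * D⁻¹ := by rw [mul_assoc, mul_assoc, mul_nonsing_inv _ hDd', mul_one]
      _ = (Dᴴ)⁻¹ * (-(Dᴴ * N)) * D⁻¹ := by rw [← hkey, neg_neg]
      _ = -(N * D⁻¹) := by rw [mul_neg, ← mul_assoc, nonsing_inv_mul _ hDs, one_mul, neg_mul]
  rw [h3, ← h2]
  simp

/-- Unitary matrices are diagonalised by diagonalising a Hermitian Cayley transform. -/
theorem exists_diag {n : ℕ} (A : Un n) : ∃ (u : Un n) (x : Fin n → ℝ), A = u * dU x * u⁻¹ := by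
  obtain ⟨ζ, hζ, hA⟩ := exists_not_eigenvalue A
  have hK := cayley_herm hζ hA
  have hD : IsUnit (ζ • (1 : Mat n) - A.1) := hA
  have hDd' := (Matrix.isUnit_iff_isUnit_det _).1 hD
  generalize hKd : Complex.I • ((ζ • (1 : Mat n) + A.1) * (ζ • (1 : Mat n) - A.1)⁻¹) = K at hK
  have h1 : (K + Complex.I • 1) * A.1 = ζ • (K - Complex.I • 1) := by
    have : K * (ζ • (1 : Mat n) - A.1) = Complex.I • (ζ • (1 : Mat n) + A.1) := by
      rw [← hKd, smul_mul_assoc, mul_assoc, nonsing_inv_mul _ hDd', mul_one]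
    rw [mul_sub, mul_smul_comm, mul_one, sub_eq_iff_eq_add] at this
    rw [add_mul, smul_mul_assoc, one_mul, smul_sub, this]
    module
  let u : Un n := hK.eigenvectorUnitary
  have hsp : K = u.1 * diagonal (fun l => (hK.eigenvalues l : ℂ)) * (u.1)ᴴ := by
    have := hK.spectral_theorem
    rw [Unitary.conjStarAlgAut_apply] at this
    exact this
  set L := hK.eigenvalues
  let B : Un n := u⁻¹ * A * u
  have hB : B.1 = (u.1)ᴴ * A.1 * u.1 := rfl
  have h2 : diagonal (fun l => (L l : ℂ) + Complex.I) * B.1 =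
      ζ • diagonal (fun l => (L l : ℂ) - Complex.I) := by
    have e1 : diagonal (fun l => (L l : ℂ) + Complex.I) = (u.1)ᴴ * (K + Complex.I • 1) * u.1 := by
      rw [hsp, mul_add, add_mul, ← mul_assoc, ← mul_assoc, un_star_mul, one_mul, mul_assoc, un_star_mul,
        mul_one, mul_smul_comm, smul_mul_assoc, mul_one, un_star_mul, ← diagonal_one, ← diagonal_smul,
        diagonal_add]
      congr 1; funext l; simp
    have e2 : diagonal (fun l => (L l : ℂ) - Complex.I) = (u.1)ᴴ * (K - Complex.I • 1) * u.1 := by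
      rw [hsp, mul_sub, sub_mul, ← mul_assoc, ← mul_assoc, un_star_mul, one_mul, mul_assoc, un_star_mul,
        mul_one, mul_smul_comm, smul_mul_assoc, mul_one, un_star_mul, ← diagonal_one, ← diagonal_smul,
        diagonal_sub]
      congr 1; funext l; simp
    rw [e1, e2, hB]
    calc (u.1)ᴴ * (K + Complex.I • 1) * u.1 * ((u.1)ᴴ * A.1 * u.1)
        = (u.1)ᴴ * (K + Complex.I • 1) * (u.1 * (u.1)ᴴ) * A.1 * u.1 := by simp only [mul_assoc]
      _ = (u.1)ᴴ * ((K + Complex.I • 1) * A.1) * u.1 := by rw [un_mul_star, mul_one]; simp only [mul_assoc]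
      _ = _ := by rw [h1, mul_smul_comm, smul_mul_assoc]
  have hne : ∀ l, (L l : ℂ) + Complex.I ≠ 0 := by
    intro l h
    have := congrArg Complex.im h
    simp at this
  have hBd : B.1 = diagonal fun l => ζ * ((L l : ℂ) - Complex.I) / ((L l : ℂ) + Complex.I) := by
    ext a b
    have := congrFun (congrFun h2 a) b
    rw [diagonal_mul, Matrix.smul_apply, diagonal_apply] at this
    rw [diagonal_apply]
    split_ifs at this ⊢ with hab
    · subst hab
      rw [eq_div_iff (hne a), mul_comm, this]; rfl
    · simpa [hne a] using this
  have hn : ∀ l, ‖ζ * ((L l : ℂ) - Complex.I) / ((L l : ℂ) + Complex.I)‖ = 1 := by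
    intro l
    have : ((L l : ℂ) - Complex.I) = conj ((L l : ℂ) + Complex.I) := by simp; ring
    rw [norm_div, norm_mul, hζ, one_mul, this, Complex.norm_conj, div_self (norm_ne_zero_iff.2 (hne l))]
  refine ⟨u, fun l => Complex.arg (ζ * ((L l : ℂ) - Complex.I) / ((L l : ℂ) + Complex.I)), ?_⟩
  have : dU (fun l => Complex.arg (ζ * ((L l : ℂ) - Complex.I) / ((L l : ℂ) + Complex.I))) = B := by
    refine Subtype.ext ?_
    rw [hBd]
    change diagonal _ = _
    congr 1; funext l
    have := Complex.norm_mul_exp_arg_mul_I (ζ * ((L l : ℂ) - Complex.I) / ((L l : ℂ) + Complex.I))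
    rwa [hn l, Complex.ofReal_one, one_mul] at this
  rw [this]
  change A = u * (u⁻¹ * A * u) * u⁻¹
  group

/-- Angles differing by multiples of `2π` give the same diagonal unitary. -/
theorem dU_shift {n : ℕ} {x y : Fin n → ℝ} (h : ∀ l, ∃ m : ℤ, y l = x l + m * (2 * Real.pi)) :
    dU y = dU x := by
  refine Subtype.ext ?_
  change diagonal _ = diagonal _
  congr 1; funext l
  obtain ⟨m, hm⟩ := h l
  rw [Complex.exp_eq_exp_iff_exists_int]
  exact ⟨m, by rw [hm]; push_cast; ring⟩

/-- Shifting angles by multiples of `2π`, one can reach spread at most `2π` and any sum that differs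
from the original one by a multiple of `2π`. -/
theorem spread_shift {n : ℕ} (hn : 0 < n) (x : Fin n → ℝ) (k : ℤ) : ∃ y : Fin n → ℝ,
    (∀ l, ∃ m : ℤ, y l = x l + m * (2 * Real.pi)) ∧ (∀ l m, y m - y l ≤ 2 * Real.pi) ∧
    ∑ l, y l = ∑ l, x l + k * (2 * Real.pi) := by
  have hp := Real.pi_pos
  have : Nonempty (Fin n) := ⟨⟨0, hn⟩⟩
  -- moving the smallest angle up, or the largest down, by 2π keeps the spread at most 2π
  have key : ∀ (ε : ℤ) (_ : ε = 1 ∨ ε = -1) (y : Fin n → ℝ), (∀ l m, y m - y l ≤ 2 * Real.pi) →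
      ∃ y' : Fin n → ℝ, (∀ l, ∃ m : ℤ, y' l = y l + m * (2 * Real.pi)) ∧
        (∀ l m, y' m - y' l ≤ 2 * Real.pi) ∧ ∑ l, y' l = ∑ l, y l + ε * (2 * Real.pi) := by
    intro ε hε y hy
    obtain ⟨l₀, hl₀⟩ : ∃ l₀, ∀ l, ε * y l₀ ≤ ε * y l := Finite.exists_min fun l => (ε : ℝ) * y l
    refine ⟨fun l => y l + if l = l₀ then ε * (2 * Real.pi) else 0, fun l => ?_, fun l m => ?_, ?_⟩
    · by_cases h : l = l₀
      · exact ⟨ε, by simp [h]⟩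
      · exact ⟨0, by simp [h]⟩
    · have h1 := hy l m
      have h2 := hl₀ l
      have h3 := hl₀ m
      dsimp only
      by_cases hl : l = l₀ <;> by_cases hm : m = l₀ <;> simp only [hl, hm, if_true, if_false] <;>
        rcases hε with rfl | rfl <;> (try subst hl) <;> (try subst hm) <;> push_cast at * <;> linarith
    · rw [Finset.sum_add_distrib, Finset.sum_ite_eq' Finset.univ l₀]
      simp
  -- start from representatives in a single period
  obtain ⟨y₀, h₀, hy₀⟩ : ∃ y : Fin n → ℝ, (∀ l, ∃ m : ℤ, y l = x l + m * (2 * Real.pi)) ∧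
      ∀ l m, y m - y l ≤ 2 * Real.pi := by
    refine ⟨fun l => toIcoMod Real.two_pi_pos 0 (x l), fun l => ⟨-toIcoDiv Real.two_pi_pos 0 (x l), ?_⟩,
      fun l m => ?_⟩
    · have := toIcoMod_add_toIcoDiv_zsmul Real.two_pi_pos 0 (x l)
      rw [zsmul_eq_mul] at this
      push_cast; linarith
    · have h1 := toIcoMod_mem_Ico Real.two_pi_pos 0 (x l)
      have h2 := toIcoMod_mem_Ico Real.two_pi_pos 0 (x m)
      linarith [h1.1, h2.2]
  choose m₀ hm₀ using h₀
  have step : ∀ k : ℤ, ∃ y : Fin n → ℝ, (∀ l, ∃ m : ℤ, y l = x l + m * (2 * Real.pi)) ∧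
      (∀ l m, y m - y l ≤ 2 * Real.pi) ∧ ∑ l, y l = ∑ l, y₀ l + k * (2 * Real.pi) := by
    have bump : ∀ (k ε : ℤ) (_ : ε = 1 ∨ ε = -1), (∃ y : Fin n → ℝ,
        (∀ l, ∃ m : ℤ, y l = x l + m * (2 * Real.pi)) ∧
        (∀ l m, y m - y l ≤ 2 * Real.pi) ∧ ∑ l, y l = ∑ l, y₀ l + k * (2 * Real.pi)) →
        ∃ y : Fin n → ℝ, (∀ l, ∃ m : ℤ, y l = x l + m * (2 * Real.pi)) ∧
        (∀ l m, y m - y l ≤ 2 * Real.pi) ∧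
          ∑ l, y l = ∑ l, y₀ l + (k + ε : ℤ) * (2 * Real.pi) := by
      rintro k ε hε ⟨y, h1, h2, h3⟩
      obtain ⟨y', h1', h2', h3'⟩ := key ε hε y h2
      refine ⟨y', fun l => ?_, h2', by rw [h3', h3]; push_cast; ring⟩
      obtain ⟨a, ha⟩ := h1 l
      obtain ⟨b, hb⟩ := h1' l
      exact ⟨a + b, by rw [hb, ha]; push_cast; ring⟩
    intro k
    induction k using Int.induction_on with
    | zero => exact ⟨y₀, fun l => ⟨m₀ l, hm₀ l⟩, hy₀, by simp⟩
    | succ k ih => exact bump _ 1 (Or.inl rfl) ih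
    | pred k ih => exact bump _ (-1) (Or.inr rfl) ih
  obtain ⟨y, h1, h2, h3⟩ := step (k - ∑ l, m₀ l)
  refine ⟨y, h1, h2, ?_⟩
  rw [h3, Finset.sum_congr rfl fun l _ => hm₀ l, Finset.sum_add_distrib, ← Finset.sum_mul]
  push_cast; ring

theorem det_dM {n : ℕ} (x : Fin n → ℝ) : (dM x).det = Complex.exp ((∑ l, x l : ℝ) * Complex.I) := by
  rw [dM, det_diagonal, ← Complex.exp_sum, Complex.ofReal_sum, Finset.sum_mul]

theorem dU_perm {n : ℕ} (u : Un n) (x : Fin n → ℝ) (σ : Equiv.Perm (Fin n)) :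
    ∃ v : Un n, u * dU x * u⁻¹ = v * dU (x ∘ σ) * v⁻¹ := by
  have hv : u.1.submatrix id σ ∈ Matrix.unitaryGroup (Fin n) ℂ := by
    rw [Matrix.mem_unitaryGroup_iff, star_eq_conjTranspose, conjTranspose_submatrix,
      submatrix_mul_equiv, un_mul_star, submatrix_id_id]
  refine ⟨⟨_, hv⟩, Subtype.ext ?_⟩
  change u.1 * dM x * (u.1)ᴴ = u.1.submatrix id σ * dM (x ∘ σ) * (u.1.submatrix id σ)ᴴ
  have : dM (x ∘ σ) = (dM x).submatrix σ σ := by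
    rw [dM, dM, submatrix_diagonal_equiv]; rfl
  rw [this, conjTranspose_submatrix, submatrix_mul_equiv, submatrix_mul_equiv, submatrix_id_id]

/-- Once a logarithm of the determinant is chosen, a unitary matrix has a sorted list of
eigenvalue angles of spread at most `2π` with that sum. -/
theorem exists_angles {n : ℕ} (hn : 0 < n) (A : Un n) (φ : ℝ)
    (h : A.1.det = Complex.exp (φ * Complex.I)) : ∃ (u : Un n) (x : Fin n → ℝ), Monotone x ∧
      (∀ l m, x m - x l ≤ 2 * Real.pi) ∧ ∑ l, x l = φ ∧ A = u * dU x * u⁻¹ := by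
  obtain ⟨u, x, hA⟩ := exists_diag A
  have hdet : A.1.det = Complex.exp ((∑ l, x l : ℝ) * Complex.I) := by
    rw [hA]
    change (u.1 * dM x * (u.1)ᴴ).det = _
    rw [det_mul, det_mul, mul_comm, ← mul_assoc, ← det_mul, un_star_mul, det_one, one_mul, det_dM]
  rw [h, Complex.exp_eq_exp_iff_exists_int] at hdet
  obtain ⟨k, hk⟩ := hdet
  have hk' : φ = ∑ l, x l + k * (2 * Real.pi) := by
    have := congrArg Complex.im hk
    simpa using this
  obtain ⟨y, h1, h2, h3⟩ := spread_shift hn x k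
  obtain ⟨v, hv⟩ := dU_perm u y (Tuple.sort y)
  refine ⟨v, y ∘ Tuple.sort y, Tuple.monotone_sort y, fun l m => h2 _ _, ?_, ?_⟩
  · rw [hk', ← h3]
    exact Equiv.sum_comp (Tuple.sort y) y
  · rw [hA, ← hv, dU_shift h1]

end

/-! ### A branch of the argument of the determinant -/

section
open Topology Filter Matrix
open scoped Matrix.Norms.L2Operator ComplexOrder ComplexConjugate

/-- The point `e^{ix}` of the unit circle. -/
noncomputable def ee (x : ℝ) : ℂ := Complex.exp (x * Complex.I)

theorem norm_ee (x : ℝ) : ‖ee x‖ = 1 := Complex.norm_exp_ofReal_mul_I x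

theorem ee_add (x y : ℝ) : ee (x + y) = ee x * ee y := by
  rw [ee, ee, ee, ← Complex.exp_add]; congr 1; push_cast; ring

theorem ee_eq {x y : ℝ} : ee x = ee y ↔ ∃ m : ℤ, x = y + m * (2 * Real.pi) := by
  rw [ee, ee, Complex.exp_eq_exp_iff_exists_int]
  refine exists_congr fun m => ⟨fun h => by simpa using congrArg Complex.im h, fun h => ?_⟩
  rw [h]; push_cast; ring

theorem conj_diag_inv {n : ℕ} (u : Un n) (d : Fin n → ℂ) (hd : ∀ l, d l ≠ 0) :
    (u.1 * diagonal d * (u.1)ᴴ) * (u.1 * diagonal (fun l => (d l)⁻¹) * (u.1)ᴴ) = 1 := by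
  calc _ = u.1 * diagonal d * ((u.1)ᴴ * u.1) * diagonal (fun l => (d l)⁻¹) * (u.1)ᴴ := by
        simp only [mul_assoc]
    _ = _ := by
      rw [un_star_mul, mul_one, mul_assoc u.1, diagonal_mul_diagonal]
      simp [hd, un_mul_star]

theorem conj_diag_poly {n : ℕ} (u : Un n) (x : Fin n → ℝ) (a b : ℂ) :
    a • (1 : Mat n) + b • (u * dU x * u⁻¹).1 =
      u.1 * diagonal (fun l => a + b * ee (x l)) * (u.1)ᴴ := by
  have : diagonal (fun l => a + b * ee (x l)) = a • (1 : Mat n) + b • dM x := by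
    rw [dM, ← diagonal_one, ← diagonal_smul, ← diagonal_smul, diagonal_add]
    congr 1; funext l; simp [ee]
  rw [this, mul_add, add_mul, mul_smul_comm, smul_mul_assoc, mul_one, un_mul_star, mul_smul_comm,
    smul_mul_assoc]
  rfl

theorem diag_mem_Us {n : ℕ} (u : Un n) (x : Fin n → ℝ) (ξ : ℝ) :
    u * dU x * u⁻¹ ∈ Us n (ee ξ) ↔ ∀ l, ee (x l) ≠ ee ξ := by
  have e : ee ξ • (1 : Mat n) - (u * dU x * u⁻¹).1 =
      u.1 * diagonal (fun l => ee ξ - ee (x l)) * (u.1)ᴴ := by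
    have := conj_diag_poly u x (ee ξ) (-1)
    simpa [sub_eq_add_neg] using this
  change IsUnit _ ↔ _
  rw [e]
  constructor
  · intro h l hl
    rw [isUnit_iff_isUnit_det, det_mul, det_mul, mul_comm, ← mul_assoc, ← det_mul, un_star_mul,
      det_one, one_mul, det_diagonal, isUnit_iff_ne_zero] at h
    exact h (Finset.prod_eq_zero (Finset.mem_univ l) (by rw [hl, sub_self]))
  · intro h
    exact IsUnit.of_mul_eq_one _ (conj_diag_inv u _ fun l => sub_ne_zero.2 (h l).symm)

/-- The projection of `ℝ` onto `[0, 1]`. -/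
noncomputable def clip (s : ℝ) : ℝ := max 0 (min s 1)

theorem clip_of_mem {s : ℝ} (h : s ∈ Set.Icc (0:ℝ) 1) : clip s = s := by
  rw [clip, min_eq_left h.2, max_eq_right h.1]

theorem clip_mem (s : ℝ) : clip s ∈ Set.Icc (0:ℝ) 1 :=
  ⟨le_max_left _ _, max_le zero_le_one (min_le_right _ _)⟩

theorem continuous_clip : Continuous clip := by unfold clip; fun_prop

/-- The segment from `1` at `s = 0` to `-e^{-iξ}A` at `s = 1`. -/
noncomputable def segM {n : ℕ} (ξ s : ℝ) (A : Mat n) : Mat n :=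
  (1 - s : ℂ) • 1 + (s * ee (-(ξ + Real.pi)) : ℂ) • A

/-- The branch of `arg det(-e^{-iξ}A)` on the unitaries without the eigenvalue `e^{iξ}` which is the
sum of the principal arguments of the eigenvalues. It is written as the imaginary part of the integral
of the logarithmic derivative of the determinant along `segM`, which makes its continuity visible; `clip` does
not change the integral. -/
noncomputable def argdet {n : ℕ} (ξ : ℝ) (A : Mat n) : ℝ :=
  (∫ s in (0:ℝ)..1, trace ((ee (-(ξ + Real.pi)) • A - 1) * (segM ξ (clip s) A)⁻¹)).im

/-- The principal argument of `-e^{i(x - ξ)}`. -/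
theorem slit_of_ne {x ξ : ℝ} (h : ee x ≠ ee ξ) :
    ee (-(ξ + Real.pi)) * ee x ∈ Complex.slitPlane ∧
    (Complex.log (ee (-(ξ + Real.pi)) * ee x)).im =
      x - ξ - Real.pi - ⌊(x - ξ) / (2 * Real.pi)⌋ * (2 * Real.pi) := by
  have hp := Real.pi_pos
  set a := ⌊(x - ξ) / (2 * Real.pi)⌋ with ha
  set y := x - ξ - Real.pi - a * (2 * Real.pi) with hy
  have e : ee (-(ξ + Real.pi)) * ee x = ee y := by
    rw [← ee_add, ee_eq]
    exact ⟨a, by rw [hy]; ring⟩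
  have h1 : (a : ℝ) * (2 * Real.pi) ≤ x - ξ := (le_div_iff₀ (by positivity)).1 (Int.floor_le _)
  have h2 : x - ξ < (a + 1) * (2 * Real.pi) := (div_lt_iff₀ (by positivity)).1 (Int.lt_floor_add_one _)
  have h3 : (a : ℝ) * (2 * Real.pi) ≠ x - ξ := fun h' => h (ee_eq.2 ⟨a, by linarith⟩)
  have h4 : (a : ℝ) * (2 * Real.pi) < x - ξ := lt_of_le_of_ne h1 h3
  have hl : (Complex.log (ee y)).im = y := by
    rw [ee, Complex.log_exp (by simp; linarith) (by simp; linarith)]; simp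
  rw [e]
  refine ⟨?_, hl⟩
  rw [Complex.mem_slitPlane_iff_arg]
  rw [Complex.log_im] at hl
  refine ⟨by rw [hl]; linarith, ?_⟩
  exact Complex.exp_ne_zero _

theorem segM_diag {n : ℕ} (ξ s : ℝ) (u : Un n) (x : Fin n → ℝ) :
    segM ξ s (u * dU x * u⁻¹).1 =
      u.1 * diagonal (fun l => 1 + s • (ee (-(ξ + Real.pi)) * ee (x l) - 1)) * (u.1)ᴴ := by
  rw [segM, conj_diag_poly]
  congr 3
  funext l
  rw [Complex.real_smul]; ring

theorem seg_ne {x ξ : ℝ} (h : ee x ≠ ee ξ) {s : ℝ} (hs : s ∈ Set.Icc (0:ℝ) 1) :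
    1 + s • (ee (-(ξ + Real.pi)) * ee x - 1) ∈ Complex.slitPlane :=
  Complex.starConvex_one_slitPlane.add_smul_mem (by simpa using (slit_of_ne h).1) hs.1 hs.2

theorem isUnit_segM {n : ℕ} {ξ s : ℝ} (hs : s ∈ Set.Icc (0:ℝ) 1) {A : Un n} (hA : A ∈ Us n (ee ξ)) :
    IsUnit (segM ξ s A.1) := by
  obtain ⟨u, x, rfl⟩ := exists_diag A
  rw [diag_mem_Us] at hA
  rw [segM_diag]
  exact IsUnit.of_mul_eq_one _ (conj_diag_inv u _ fun l => Complex.slitPlane_ne_zero (seg_ne (hA l) hs))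

/-- The value of `argdet` in terms of eigenvalue angles. -/
theorem argdet_diag {n : ℕ} {ξ : ℝ} (u : Un n) {x : Fin n → ℝ} (h : ∀ l, ee (x l) ≠ ee ξ) :
    argdet ξ (u * dU x * u⁻¹).1 =
      ∑ l, (x l - ξ - Real.pi - ⌊(x l - ξ) / (2 * Real.pi)⌋ * (2 * Real.pi)) := by
  have hz : ∀ l, 1 + (ee (-(ξ + Real.pi)) * ee (x l) - 1) ∈ Complex.slitPlane := fun l => by
    simpa using (slit_of_ne (h l)).1
  have key : ∀ s ∈ Set.Icc (0:ℝ) 1,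
      trace ((ee (-(ξ + Real.pi)) • (u * dU x * u⁻¹).1 - 1) * (segM ξ (clip s) (u * dU x * u⁻¹).1)⁻¹) =
      ∑ l, (ee (-(ξ + Real.pi)) * ee (x l) - 1) * (1 + s • (ee (-(ξ + Real.pi)) * ee (x l) - 1))⁻¹ := by
    intro s hs
    have e1 : ee (-(ξ + Real.pi)) • (u * dU x * u⁻¹).1 - 1 =
        u.1 * diagonal (fun l => ee (-(ξ + Real.pi)) * ee (x l) - 1) * (u.1)ᴴ := by
      have := conj_diag_poly u x (-1) (ee (-(ξ + Real.pi)))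
      have e : (fun l => ee (-(ξ + Real.pi)) * ee (x l) - 1) =
        fun l => -1 + ee (-(ξ + Real.pi)) * ee (x l) := by funext l; ring
      rw [e, ← this]; simp [sub_eq_neg_add]
    rw [clip_of_mem hs, segM_diag, e1, inv_eq_right_inv
      (conj_diag_inv u _ fun l => Complex.slitPlane_ne_zero (seg_ne (h l) hs))]
    have e2 : ∀ d d' : Fin n → ℂ, u.1 * diagonal d * (u.1)ᴴ * (u.1 * diagonal d' * (u.1)ᴴ) =
        u.1 * diagonal (fun l => d l * d' l) * (u.1)ᴴ := by
      intro d d'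
      calc _ = u.1 * diagonal d * ((u.1)ᴴ * u.1) * diagonal d' * (u.1)ᴴ := by
            simp only [mul_assoc]
        _ = _ := by rw [un_star_mul, mul_one, mul_assoc u.1, diagonal_mul_diagonal]
    rw [e2, trace_mul_comm, ← mul_assoc, un_star_mul, one_mul, trace_diagonal]
  rw [argdet, intervalIntegral.integral_congr (g := fun s : ℝ =>
    ∑ l, (ee (-(ξ + Real.pi)) * ee (x l) - 1) * (1 + s • (ee (-(ξ + Real.pi)) * ee (x l) - 1))⁻¹)
    (fun s hs => key s (by rwa [Set.uIcc_of_le zero_le_one] at hs)),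
    intervalIntegral.integral_finsetSum, Complex.im_sum]
  · refine Finset.sum_congr rfl fun l _ => ?_
    rw [intervalIntegral.integral_const_mul, ← Complex.log_eq_integral (hz l), add_sub_cancel,
      (slit_of_ne (h l)).2]
  · intro l _
    refine ContinuousOn.intervalIntegrable ?_
    rw [Set.uIcc_of_le zero_le_one]
    refine continuousOn_const.mul (ContinuousOn.inv₀ (by fun_prop) fun s hs => ?_)
    exact Complex.slitPlane_ne_zero (seg_ne (h l) hs)

theorem continuous_argdet {n : ℕ} (ξ : ℝ) :
    Continuous fun A : ↥(Us n (ee ξ)) => argdet ξ A.1.1 := by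
  unfold argdet
  refine Complex.continuous_im.comp ?_
  refine intervalIntegral.continuous_parametric_intervalIntegral_of_continuous' ?_ 0 1
  have h1 : Continuous fun p : ↥(Us n (ee ξ)) × ℝ => p.1.1.1 := by fun_prop
  have h2 : Continuous fun p : ↥(Us n (ee ξ)) × ℝ => clip p.2 := continuous_clip.comp continuous_snd
  have h3 : Continuous fun p : ↥(Us n (ee ξ)) × ℝ => segM ξ (clip p.2) p.1.1.1 := by
    unfold segM; fun_prop
  have h4 := continuous_inv_of_isUnit h3 fun p => isUnit_segM (clip_mem p.2) p.1.2
  have h5 : Continuous fun p : ↥(Us n (ee ξ)) × ℝ => (ee (-(ξ + Real.pi)) • p.1.1.1 - 1 : Mat n) := by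
    fun_prop
  exact (h5.mul h4).matrix_trace

theorem argdet_conj {n : ℕ} (ξ : ℝ) (g : Un n) (A : Mat n) :
    argdet ξ (g.1 * A * (g.1)ᴴ) = argdet ξ A := by
  unfold argdet
  congr 2
  funext s
  have h1 : segM ξ (clip s) (g.1 * A * (g.1)ᴴ) = g.1 * segM ξ (clip s) A * (g.1)ᴴ := by
    rw [segM, segM, mul_add, add_mul, mul_smul_comm, mul_smul_comm, smul_mul_assoc, smul_mul_assoc,
      mul_one, un_mul_star]
  have h2 : ee (-(ξ + Real.pi)) • (g.1 * A * (g.1)ᴴ) - 1 =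
      g.1 * (ee (-(ξ + Real.pi)) • A - 1) * (g.1)ᴴ := by
    rw [mul_sub, sub_mul, mul_smul_comm, smul_mul_assoc, mul_one, un_mul_star]
  have i1 : (g.1)⁻¹ = (g.1)ᴴ := inv_eq_right_inv (un_mul_star g)
  have i2 : ((g.1)ᴴ)⁻¹ = g.1 := inv_eq_right_inv (un_star_mul g)
  rw [h1, h2, Matrix.mul_inv_rev, Matrix.mul_inv_rev, i1, i2]
  generalize ee (-(ξ + Real.pi)) • A - 1 = a
  generalize (segM ξ (clip s) A)⁻¹ = b
  calc _ = (g.1 * (a * ((g.1)ᴴ * g.1) * b * (g.1)ᴴ)).trace := by simp only [mul_assoc]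
    _ = (a * b * ((g.1)ᴴ * g.1)).trace := by
      rw [trace_mul_comm, un_star_mul, mul_one]; simp only [mul_assoc]; rw [un_star_mul]
    _ = _ := by rw [un_star_mul, mul_one]

/-- `argdet` of the `i`-th entry, on the character variety. -/
noncomputable def argdetX {n r : ℕ} (i : Fin r) (ξ : ℝ) : CharVarU n r → ℝ :=
  Quotient.lift (fun A => argdet ξ (A i).1) (by
    rintro A B ⟨g, rfl⟩
    change argdet ξ ((g • B) i).1 = _
    rw [smul_val, argdet_conj])

/-- The determinant of the `i`-th entry, on the character variety. -/
noncomputable def detX {n r : ℕ} (i : Fin r) : CharVarU n r → ℂ :=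
  Quotient.lift (fun A => (A i).1.det) (by
    rintro A B ⟨g, rfl⟩
    change ((g • B) i).1.det = _
    rw [smul_val, det_mul, det_mul, mul_comm, ← mul_assoc, ← det_mul, un_star_mul, det_one, one_mul])

theorem continuous_detX {n r : ℕ} (i : Fin r) : Continuous (detX (n := n) i) := by
  refine (isOpenQuotientMap_mkX n r).isQuotientMap.continuous_iff.2 ?_
  change Continuous fun A : Fin r → Un n => (A i).1.det
  exact Continuous.matrix_det (by fun_prop)

theorem continuousOn_argdetX {n r : ℕ} (i : Fin r) (ξ : Fin r → ℝ) :
    ContinuousOn (argdetX (n := n) i (ξ i)) (Wset fun i => ee (ξ i)) := by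
  intro y hy
  obtain ⟨A, hA, rfl⟩ := hy
  refine ContinuousAt.continuousWithinAt ?_
  rw [← (isOpenQuotientMap_mkX n r).continuousAt_comp_iff]
  have h1 : ContinuousOn (fun B : Un n => argdet (ξ i) B.1) (Us n (ee (ξ i))) := by
    rw [continuousOn_iff_continuous_domRestrict]
    exact continuous_argdet (ξ i)
  have h2 : ContinuousAt (fun B : Un n => argdet (ξ i) B.1) (A i) :=
    h1.continuousAt ((isOpen_Us n _).mem_nhds (hA i))
  exact ContinuousAt.comp (f := fun B : Fin r → Un n => B i) h2 (continuous_apply i).continuousAt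

/-- `x` is a list, for each entry of the tuple, of sorted eigenvalue angles of spread at most `2π`; the
angles of the `i`-th entry have sum `φ i`, and `u` diagonalises. -/
structure Angles {n r : ℕ} (y : CharVarU n r) (φ : Fin r → ℝ) (u : Fin r → Un n)
    (x : Fin r → Fin n → ℝ) : Prop where
  mono : ∀ i, Monotone (x i)
  spread : ∀ i l m, x i m - x i l ≤ 2 * Real.pi
  sum : ∀ i, ∑ l, x i l = φ i
  eq : y = mkX fun i => u i * dU (x i) * (u i)⁻¹

theorem exists_Angles {n r : ℕ} (hn : 0 < n) (y : CharVarU n r) (φ : Fin r → ℝ)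
    (h : ∀ i, detX i y = ee (φ i)) : ∃ u x, Angles y φ u x := by
  obtain ⟨A, rfl⟩ := (isOpenQuotientMap_mkX n r).surjective y
  choose u x h1 h2 h3 h4 using fun i => exists_angles hn (A i) (φ i) (h i)
  exact ⟨u, x, h1, h2, h3, congrArg mkX (funext h4)⟩

theorem Angles.ne {n r : ℕ} {y : CharVarU n r} {φ : Fin r → ℝ} {u : Fin r → Un n}
    {x : Fin r → Fin n → ℝ} (h : Angles y φ u x) {ξ : Fin r → ℝ} (hy : y ∈ Wset fun i => ee (ξ i))
    (i : Fin r) (l : Fin n) : ee (x i l) ≠ ee (ξ i) := by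
  rw [h.eq, mkX_mem_Wset] at hy
  exact (diag_mem_Us _ _ _).1 (hy i) l

/-- A sorted integer vector of spread at most one is determined by its sum. -/
theorem sorted_eq {n : ℕ} {a b : Fin n → ℤ} (ha : Monotone a) (hb : Monotone b)
    (ha1 : ∀ l m, a m ≤ a l + 1) (hb1 : ∀ l m, b m ≤ b l + 1) (h : ∑ l, a l = ∑ l, b l) : a = b := by
  have key : ∀ {a b : Fin n → ℤ} (_ : Monotone a) (_ : Monotone b)
    (_ : ∀ l m, a m ≤ a l + 1) (_ : ∀ l m, b m ≤ b l + 1) (_ : ∑ l, a l = ∑ l, b l) (l : Fin n),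
      b l ≤ a l := by
    intro a b ha hb ha1 hb1 h l
    by_contra! hl
    refine h.not_lt (Finset.sum_lt_sum (fun m _ => ?_) ⟨l, Finset.mem_univ l, hl⟩)
    rcases le_total m l with hm | hm
    · have := ha hm; have := hb1 m l; omega
    · have := ha1 l m; have := hb hm; omega
  funext l
  exact le_antisymm (key hb ha hb1 ha1 h.symm l) (key ha hb ha1 hb1 h l)

theorem int_const {E : Type*} [TopologicalSpace E] {C : Set E} (hC : IsPreconnected C) {N : E → ℝ}
    (hN : ContinuousOn N C) (hZ : ∀ p ∈ C, ∃ m : ℤ, N p = m) {p q : E} (hp : p ∈ C) (hq : q ∈ C) :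
    N p = N q :=
  hC.constant_of_mapsTo Int.isClosedEmbedding_coe_real.isInducing.isDiscrete_range hN
    (fun p hp => by obtain ⟨m, hm⟩ := hZ p hp; exact ⟨m, hm.symm⟩) hp hq

/-- Over a connected set mapped into one member of the cover, the integer parts of the normalised
angles do not change: by `argdet_diag` their sum is continuous, hence constant, and it determines
them by `sorted_eq`. -/
theorem floors_const {n r : ℕ} {E : Type*} [TopologicalSpace E] {C : Set E} (hC : IsPreconnected C)
    {f : E → CharVarU n r} (hf : Continuous f) {φ : Fin r → E → ℝ} (hφ : ∀ i, Continuous (φ i))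
    {ξ : Fin r → ℝ} (hW : ∀ p ∈ C, f p ∈ Wset fun i => ee (ξ i))
    {u : E → Fin r → Un n} {x : E → Fin r → Fin n → ℝ}
    (hx : ∀ p, Angles (f p) (fun i => φ i p) (u p) (x p)) {p q : E} (hp : p ∈ C) (hq : q ∈ C)
    (i : Fin r) (l : Fin n) :
    ⌊(x p i l - ξ i) / (2 * Real.pi)⌋ = ⌊(x q i l - ξ i) / (2 * Real.pi)⌋ := by
  have hpi := Real.pi_pos
  let N : E → ℝ := fun p => (φ i p - n * (ξ i + Real.pi) - argdetX i (ξ i) (f p)) / (2 * Real.pi)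
  have hNc : ContinuousOn N C := by
    refine ContinuousOn.div_const ?_ _
    refine ContinuousOn.sub ((hφ i).continuousOn.sub continuousOn_const) ?_
    exact (continuousOn_argdetX i ξ).comp hf.continuousOn hW
  have hN : ∀ p ∈ C, N p = ((∑ l, ⌊(x p i l - ξ i) / (2 * Real.pi)⌋ : ℤ) : ℝ) := by
    intro p hp
    have h1 : argdetX i (ξ i) (f p) = argdet (ξ i) (u p i * dU (x p i) * (u p i)⁻¹).1 := by
      rw [(hx p).eq]; rfl
    have h2 : N p * (2 * Real.pi) = φ i p - n * (ξ i + Real.pi) - argdetX i (ξ i) (f p) :=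
      div_mul_cancel₀ _ (by positivity)
    rw [h1, argdet_diag _ fun l => (hx p).ne (hW p hp) i l, Finset.sum_sub_distrib, Finset.sum_sub_distrib,
      Finset.sum_sub_distrib, (hx p).sum i, ← Finset.sum_mul] at h2
    simp only [Finset.sum_const, Finset.card_univ, Fintype.card_fin, nsmul_eq_mul] at h2
    push_cast
    have h3 : (2 * Real.pi) ≠ 0 := by positivity
    apply mul_right_cancel₀ h3
    linarith
  have h := int_const hC hNc (fun p hp => ⟨_, hN p hp⟩) hp hq
  rw [hN p hp, hN q hq, Int.cast_inj] at h
  have hm : ∀ p, Monotone fun l => ⌊(x p i l - ξ i) / (2 * Real.pi)⌋ := by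
    intro p a b hab
    have := (hx p).mono i hab
    exact Int.floor_mono (by gcongr)
  have hs : ∀ p l m, ⌊(x p i m - ξ i) / (2 * Real.pi)⌋ ≤ ⌊(x p i l - ξ i) / (2 * Real.pi)⌋ + 1 := by
    intro p l m
    rw [← Int.floor_add_one]
    refine Int.floor_mono ?_
    have := (hx p).spread i l m
    rw [div_add_one (by positivity)]
    gcongr
    linarith
  exact congrFun (sorted_eq (hm p) (hm q) (hs p) (hs q) h) l

end

/-! ### Logarithms of the determinant, cells and boxes -/

section
open Topology Filter Matrix
open scoped Matrix.Norms.L2Operator ComplexOrder ComplexConjugate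

/-- The complement of the open square `(0, M)²`. -/
def Out (M : ℝ) : Set (ℝ × ℝ) := {p | ¬(0 < p.1 ∧ p.1 < M ∧ 0 < p.2 ∧ p.2 < M)}

theorem mem_Out {M : ℝ} {p : ℝ × ℝ} : p ∈ Out M ↔ p.1 ≤ 0 ∨ M ≤ p.1 ∨ p.2 ≤ 0 ∨ M ≤ p.2 := by
  change ¬ _ ↔ _
  simp only [not_and_or, not_lt]

theorem isClosed_Out (M : ℝ) : IsClosed (Out M) := by
  have : Out M = {p | p.1 ≤ 0} ∪ ({p | M ≤ p.1} ∪ ({p | p.2 ≤ 0} ∪ {p | M ≤ p.2})) := by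
    ext p; exact mem_Out
  rw [this]
  have h1 : Continuous fun p : ℝ × ℝ => p.1 := continuous_fst
  have h2 : Continuous fun p : ℝ × ℝ => p.2 := continuous_snd
  exact (isClosed_le h1 continuous_const).union ((isClosed_le continuous_const h1).union
    ((isClosed_le h2 continuous_const).union (isClosed_le continuous_const h2)))

/-- A continuous function with integer values on the complement of the open square is constant there. -/
theorem out_const {M : ℝ} {N : ℝ × ℝ → ℝ} (hN : Continuous N)
    (hZ : ∀ p ∈ Out M, ∃ m : ℤ, N p = m) {p : ℝ × ℝ} (hp : p ∈ Out M) : N p = N (0, 0) := by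
  have c1 : IsPreconnected {p : ℝ × ℝ | p.1 ≤ 0} :=
    ((convex_Iic (0:ℝ)).linear_preimage (LinearMap.fst ℝ ℝ ℝ)).isPreconnected
  have c2 : IsPreconnected {p : ℝ × ℝ | M ≤ p.1} :=
    ((convex_Ici M).linear_preimage (LinearMap.fst ℝ ℝ ℝ)).isPreconnected
  have c3 : IsPreconnected {p : ℝ × ℝ | p.2 ≤ 0} :=
    ((convex_Iic (0:ℝ)).linear_preimage (LinearMap.snd ℝ ℝ ℝ)).isPreconnected
  have c4 : IsPreconnected {p : ℝ × ℝ | M ≤ p.2} :=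
    ((convex_Ici M).linear_preimage (LinearMap.snd ℝ ℝ ℝ)).isPreconnected
  have e1 : ∀ p : ℝ × ℝ, p.1 ≤ 0 → N p = N (0, 0) := fun p hp =>
    int_const c1 hN.continuousOn (fun q hq => hZ q (mem_Out.2 (Or.inl hq))) hp
      (show ((0, 0) : ℝ × ℝ) ∈ {p : ℝ × ℝ | p.1 ≤ 0} from le_refl (0 : ℝ))
  have e3 : ∀ p : ℝ × ℝ, p.2 ≤ 0 → N p = N (0, 0) := fun p hp =>
    int_const c3 hN.continuousOn (fun q hq => hZ q (mem_Out.2 (Or.inr (Or.inr (Or.inl hq))))) hp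
      (show ((0, 0) : ℝ × ℝ) ∈ {p : ℝ × ℝ | p.2 ≤ 0} from le_refl (0 : ℝ))
  rcases mem_Out.1 hp with h | h | h | h
  · exact e1 p h
  · exact (int_const c2 hN.continuousOn (fun q hq => hZ q (mem_Out.2 (Or.inr (Or.inl hq)))) h
      (show ((M, 0) : ℝ × ℝ) ∈ {p : ℝ × ℝ | M ≤ p.1} from le_refl M)).trans (e3 (M, 0) le_rfl)
  · exact e3 p h
  · exact (int_const c4 hN.continuousOn (fun q hq => hZ q (mem_Out.2 (Or.inr (Or.inr (Or.inr hq))))) h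
      (show ((0, M) : ℝ × ℝ) ∈ {p : ℝ × ℝ | M ≤ p.2} from le_refl M)).trans (e1 (0, M) le_rfl)

theorem norm_detX {n r : ℕ} (i : Fin r) (y : CharVarU n r) : ‖detX i y‖ = 1 := by
  obtain ⟨A, rfl⟩ := (isOpenQuotientMap_mkX n r).surjective y
  exact CStarRing.norm_of_mem_unitary (Matrix.det_of_mem_unitary (A i).2)

/-- The determinant of the `i`-th entry lifts along the covering `ℝ → S¹`, since the plane is simply
connected. The lift is constant outside the square because the determinant is. -/
theorem exists_log_det {n r : ℕ} {f : ℝ × ℝ → CharVarU n r} (hf : Continuous f) {M : ℝ}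
    {x₀ : CharVarU n r} (hf0 : ∀ p ∈ Out M, f p = x₀) (i : Fin r) :
    ∃ φ : ℝ × ℝ → ℝ, Continuous φ ∧ (∀ p, detX i (f p) = ee (φ p)) ∧ ∀ p ∈ Out M, φ p = φ (0, 0) := by
  let d : C(ℝ × ℝ, Circle) := ⟨fun p => ⟨detX i (f p), mem_sphere_zero_iff_norm.2 (norm_detX i _)⟩,
    Continuous.subtype_mk ((continuous_detX i).comp hf) _⟩
  obtain ⟨θ, hθ⟩ := (⟨_, Circle.exp_arg _⟩ : ∃ θ, Circle.exp θ = d (0, 0))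
  obtain ⟨φ, ⟨-, hφ⟩, -⟩ := Circle.isCoveringMap_exp.existsUnique_continuousMap_lifts d (0, 0) θ hθ
  have h1 : ∀ p, detX i (f p) = ee (φ p) := by
    intro p
    have := congrArg Circle.coeHom (congrFun hφ p)
    exact this.symm
  refine ⟨φ, φ.continuous, h1, fun p hp => ?_⟩
  have h0 : ((0, 0) : ℝ × ℝ) ∈ Out M := mem_Out.2 (Or.inl le_rfl)
  have hpi := Real.pi_pos
  have h2 := out_const (M := M) (N := fun p => (φ p - φ (0, 0)) / (2 * Real.pi)) (by fun_prop)
    (fun q hq => by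
      have : ee (φ q) = ee (φ (0, 0)) := by rw [← h1, ← h1, hf0 q hq, hf0 _ h0]
      obtain ⟨m, hm⟩ := ee_eq.1 this
      exact ⟨m, by rw [hm]; field_simp; ring⟩) hp
  simp only [sub_self, zero_div] at h2
  rcases div_eq_zero_iff.1 h2 with h | h
  · linarith
  · linarith

/-- The closed unit cell with lower left corner `c`. -/
def cell (c : ℤ × ℤ) : Set (ℝ × ℝ) :=
  {p | ((c.1 : ℝ) ≤ p.1 ∧ p.1 ≤ c.1 + 1) ∧ (c.2 : ℝ) ≤ p.2 ∧ p.2 ≤ c.2 + 1}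

theorem cell_eq (c : ℤ × ℤ) : cell c = Set.Icc (c.1 : ℝ) (c.1 + 1) ×ˢ Set.Icc (c.2 : ℝ) (c.2 + 1) := rfl

theorem isPreconnected_cell (c : ℤ × ℤ) : IsPreconnected (cell c) := by
  rw [cell_eq]
  exact isPreconnected_Icc.prod isPreconnected_Icc

/-- Points near `p` lie only in cells that contain `p`. -/
theorem cell_near (p : ℝ × ℝ) : ∀ᶠ q in 𝓝 p, ∀ c, q ∈ cell c → p ∈ cell c := by
  have hc : Continuous fun p : ℝ × ℝ => (p.1, p.2, (0:ℝ)) := by fun_prop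
  have := (locallyFinite_col.preimage_continuous hc).eventually_subset
    (fun c => (isClosed_col c).preimage hc) p
  filter_upwards [this] with q hq c hqc
  exact hq hqc

/-- Angle vectors `y` for which `(y k l - ξ k) / 2π` lies in the open interval `(a k l, a k l + 1)`. -/
def box {n r : ℕ} (ξ : Fin r → ℝ) (a : Fin r → Fin n → ℤ) : Set (Fin r → Fin n → ℝ) :=
  {y | ∀ k l, ξ k + a k l * (2 * Real.pi) < y k l ∧ y k l < ξ k + (a k l + 1) * (2 * Real.pi)}

theorem convex_box {n r : ℕ} (ξ : Fin r → ℝ) (a : Fin r → Fin n → ℤ) : Convex ℝ (box ξ a) := by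
  intro y hy z hz s t hs ht hst k l
  have hs' : s = 1 - t := by linarith
  subst hs'
  have h1 := convex_Ioo _ _ (hy k l) (hz k l) hs ht hst
  exact h1

/-- Tuples of unitary matrices whose eigenvalue angles lie in the box belong to `Wset`. -/
theorem box_mem {n r : ℕ} {ξ : Fin r → ℝ} {a : Fin r → Fin n → ℤ} {y : Fin r → Fin n → ℝ}
    (hy : y ∈ box ξ a) (u : Fin r → Un n) :
    mkX (fun k => u k * dU (y k) * (u k)⁻¹) ∈ Wset fun k => ee (ξ k) := by
  refine mkX_mem_Wset.2 fun k => (diag_mem_Us _ _ _).2 fun l h => ?_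
  obtain ⟨m, hm⟩ := ee_eq.1 h
  have hp := Real.two_pi_pos
  have h1 := (hy k l).1
  have h2 := (hy k l).2
  rw [hm] at h1 h2
  have h3 : (a k l : ℝ) < m := by nlinarith
  have h4 : (m : ℝ) < a k l + 1 := by nlinarith
  have h3' : a k l < m := by exact_mod_cast h3
  have h4' : m < a k l + 1 := by exact_mod_cast h4
  omega

theorem Angles.mem_box {n r : ℕ} {y : CharVarU n r} {φ : Fin r → ℝ} {u : Fin r → Un n}
    {x : Fin r → Fin n → ℝ} (h : Angles y φ u x) {ξ : Fin r → ℝ} (hy : y ∈ Wset fun i => ee (ξ i)) :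
    x ∈ box ξ fun k l => ⌊(x k l - ξ k) / (2 * Real.pi)⌋ := by
  intro k l
  have hp := Real.two_pi_pos
  set a := ⌊(x k l - ξ k) / (2 * Real.pi)⌋ with ha
  have h1 : (a : ℝ) * (2 * Real.pi) ≤ x k l - ξ k := (le_div_iff₀ hp).1 (Int.floor_le _)
  have h2 : x k l - ξ k < (a + 1) * (2 * Real.pi) := (div_lt_iff₀ hp).1 (Int.lt_floor_add_one _)
  have h3 : (a : ℝ) * (2 * Real.pi) ≠ x k l - ξ k := fun h' => h.ne hy k l (ee_eq.2 ⟨a, by linarith⟩)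
  have h4 : (a : ℝ) * (2 * Real.pi) < x k l - ξ k := lt_of_le_of_ne h1 h3
  constructor <;> linarith

theorem joined_one {n : ℕ} (u : Un n) : Joined u 1 := by
  have h := joinedIn_commutant (ι := Empty) (fun e => e.elim) u (fun e => e.elim)
  obtain ⟨p, -⟩ := h
  exact ⟨p.symm⟩

theorem continuous_dU {n : ℕ} : Continuous (dU (n := n)) := by
  refine Continuous.subtype_mk ?_ _
  unfold dM
  exact Continuous.matrix_diagonal (by fun_prop)

theorem cubeFill_Wset {n r : ℕ} (ξ : Fin r → ℝ) : CubeFill (Wset (n := n) fun k => ee (ξ k)) :=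
  have h : ∀ k, ‖ee (ξ k)‖ = 1 := fun _ => norm_ee _
  cubeFill_of_cone (coneX fun k => ee (ξ k)) (fun _ hx => coneX_one h hx)
    (fun _ hx _ hy => coneX_zero h hx hy)
    (fun _ _ _ _ hb hs hW h0 => continuous_coneX h hb hs hW h0)

end

/-! ### Homotopy to a diagonal map and its contraction -/

section
open Topology Filter Matrix
open scoped Matrix.Norms.L2Operator ComplexOrder ComplexConjugate

/-- The deformation of a map of the plane that sends each cell of the integer grid into a member of the
cover and is constant outside a square with integer vertices. -/
theorem grid_null {n r : ℕ} (hn : 0 < n) {f : ℝ × ℝ → CharVarU n r} (hf : Continuous f) {M : ℕ}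
    {x₀ : CharVarU n r} (hf0 : ∀ p ∈ Out M, f p = x₀) (ξ : ℤ × ℤ → Fin r → ℝ)
    (hξ : ∀ c, ∀ p ∈ cell c, f p ∈ Wset fun k => ee (ξ c k)) :
    ∃ K : ℝ × ℝ × ℝ → CharVarU n r, Continuous K ∧ (∀ a b, K (a, b, 0) = f (a, b)) ∧
      (∃ y, ∀ a b, K (a, b, 1) = y) ∧
      ∀ a b t : ℝ, t ∈ Set.Icc (0:ℝ) 1 → (a = 0 ∨ a = M ∨ b = 0 ∨ b = M) →
        K (a, b, t) = K (0, 0, t) := by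
  have hO0 : ((0, 0) : ℝ × ℝ) ∈ Out (M : ℝ) := mem_Out.2 (Or.inl le_rfl)
  choose φ hφc hφ hφ0 using fun i => exists_log_det hf hf0 i
  have hD : ∀ q : CharVarU n r × (Fin r → ℝ), ∃ ux : (Fin r → Un n) × (Fin r → Fin n → ℝ),
      (∀ i, detX i q.1 = ee (q.2 i)) → Angles q.1 q.2 ux.1 ux.2 := by
    intro q
    by_cases h : ∀ i, detX i q.1 = ee (q.2 i)
    · obtain ⟨u, x, hux⟩ := exists_Angles hn q.1 q.2 h
      exact ⟨(u, x), fun _ => hux⟩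
    · exact ⟨(fun _ => 1, fun _ _ => 0), fun h' => absurd h' h⟩
  -- choosing angles as a function of the value and of `φ` makes the choice constant outside the square
  choose D hD using hD
  let dat : ℝ × ℝ → (Fin r → Un n) × (Fin r → Fin n → ℝ) := fun p => D (f p, fun i => φ i p)
  have hx : ∀ p, Angles (f p) (fun i => φ i p) (dat p).1 (dat p).2 :=
    fun p => hD (f p, fun i => φ i p) fun i => hφ i p
  have hdat : ∀ p ∈ Out (M : ℝ), dat p = dat (0, 0) := by
    intro p hp
    have h1 : (fun i => φ i p) = fun i => φ i (0, 0) := funext fun i => hφ0 i p hp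
    change D (f p, fun i => φ i p) = D (f (0, 0), fun i => φ i (0, 0))
    rw [h1, hf0 p hp, hf0 _ hO0]
  let fl : ℤ × ℤ → Fin r → Fin n → ℤ := fun c k l =>
    ⌊((dat (c.1, c.2)).2 k l - ξ c k) / (2 * Real.pi)⌋
  have hcc : ∀ c : ℤ × ℤ, ((c.1 : ℝ), (c.2 : ℝ)) ∈ cell c := fun c => by
    refine ⟨⟨le_rfl, ?_⟩, le_rfl, ?_⟩ <;> simp
  have hbox : ∀ c, ∀ p ∈ cell c, (dat p).2 ∈ box (ξ c) (fl c) := by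
    intro c p hp
    have h1 := (hx p).mem_box (hξ c p hp)
    have h2 : (fun k l => ⌊((dat p).2 k l - ξ c k) / (2 * Real.pi)⌋) = fl c := by
      funext k l
      exact floors_const (isPreconnected_cell c) hf hφc (hξ c) hx hp (hcc c) k l
    rwa [h2] at h1
  -- a continuous choice of angles lying in the same boxes
  obtain ⟨z, hz⟩ := exists_continuous_forall_mem_convex_of_local_const
    (t := fun p : ℝ × ℝ => {y : Fin r → Fin n → ℝ | (∀ c, p ∈ cell c → y ∈ box (ξ c) (fl c)) ∧
      (p ∈ Out (M : ℝ) → y = (dat (0, 0)).2)}) (by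
    intro p y hy y' hy' a b ha hb hab
    refine ⟨fun c hc => convex_box _ _ (hy.1 c hc) (hy'.1 c hc) ha hb hab, fun hp => ?_⟩
    rw [hy.2 hp, hy'.2 hp, ← add_smul, hab, one_smul]) (by
    intro p
    refine ⟨(dat p).2, ?_⟩
    have hO : ∀ᶠ q in 𝓝 p, q ∈ Out (M : ℝ) → p ∈ Out (M : ℝ) := by
      by_cases h : p ∈ Out (M : ℝ)
      · exact Eventually.of_forall fun _ _ => h
      · filter_upwards [(isClosed_Out (M : ℝ)).isOpen_compl.mem_nhds h] with q hq hq'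
        exact absurd hq' hq
    filter_upwards [cell_near p, hO] with q hq hqO
    exact ⟨fun c hc => hbox c p (hq c hc), fun h => by rw [hdat p (hqO h)]⟩)
  have hzb : ∀ c, ∀ p ∈ cell c, z p ∈ box (ξ c) (fl c) := fun c p hp => (hz p).1 c hp
  have hzO : ∀ p ∈ Out (M : ℝ), z p = (dat (0, 0)).2 := fun p hp => (hz p).2 hp
  have hzc : Continuous z := z.continuous
  choose γ hγ using fun u : Un n => (⟨(joined_one u).somePath, trivial⟩ : ∃ _ : Path u 1, True)
  let mk : (Fin r → Un n) → (Fin r → Fin n → ℝ) → CharVarU n r := fun u y =>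
    mkX fun k => u k * dU (y k) * (u k)⁻¹
  have hmk : ∀ {Y : Type} [TopologicalSpace Y] {u : Y → Fin r → Un n} {y : Y → Fin r → Fin n → ℝ},
      Continuous u → Continuous y → Continuous fun s => mk (u s) (y s) := by
    intro Y _ u y hu hy
    refine (isOpenQuotientMap_mkX n r).continuous.comp (continuous_pi fun k => ?_)
    have h1 : Continuous fun s => u s k := (continuous_apply k).comp hu
    have h2 : Continuous fun s => dU (y s k) := continuous_dU.comp ((continuous_apply k).comp hy)
    exact (h1.mul h2).mul h1.inv
  let g : ℝ × ℝ → CharVarU n r := fun p => mk 1 (z p)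
  let P : ℤ → ℤ → ℝ → CharVarU n r := fun i j t =>
    mk (fun k => γ ((dat (i, j)).1 k) (Set.projIcc 0 1 zero_le_one t))
      ((1 - clip t) • (dat (i, j)).2 + clip t • z (i, j))
  have hg : Continuous g := hmk continuous_const hzc
  have hPc : ∀ i j, Continuous (P i j) := by
    intro i j
    refine hmk (continuous_pi fun k => (γ _).continuous.comp continuous_projIcc) ?_
    have := continuous_clip
    fun_prop
  have c0 : clip 0 = 0 := clip_of_mem (by simp)
  have c1 : clip 1 = 1 := clip_of_mem (by simp)
  have hP0 : ∀ i j : ℤ, P i j 0 = f (i, j) := by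
    intro i j
    change mk _ _ = _
    rw [(hx (i, j)).eq, c0, Set.projIcc_left]
    simp [mk]
  have hP1 : ∀ i j : ℤ, P i j 1 = g (i, j) := by
    intro i j
    change mk _ _ = _
    rw [c1, Set.projIcc_right]
    simp [mk, g]
  have hPθ : ∀ (i j i' j' : ℤ), (i' = i ∨ i' = i - 1) → (j' = j ∨ j' = j - 1) →
      ∀ t ∈ Set.Icc (0 : ℝ) 1, P i j t ∈ Wset fun k => ee (ξ (i', j') k) := by
    intro i j i' j' hi hj t ht
    have hc : ((i : ℝ), (j : ℝ)) ∈ cell (i', j') := by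
      rcases hi with rfl | rfl <;> rcases hj with rfl | rfl <;>
        refine ⟨⟨?_, ?_⟩, ?_, ?_⟩ <;> dsimp only <;> push_cast <;> linarith
    have h1 := clip_mem t
    exact box_mem (convex_box _ _ (hbox _ _ hc) (hzb _ _ hc) (sub_nonneg.2 h1.2) h1.1 (by ring)) _
  have hgθ : ∀ (i j : ℤ) (a b : ℝ), i ≤ a → a ≤ i + 1 → j ≤ b → b ≤ j + 1 →
      g (a, b) ∈ Wset fun k => ee (ξ (i, j) k) := fun i j a b h1 h2 h3 h4 =>
    box_mem (hzb (i, j) (a, b) ⟨⟨h1, h2⟩, h3, h4⟩) 1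
  obtain ⟨K, hK, hK0, hK1, hKh, hKv⟩ := grid (Θ := Fin r → ℝ)
    (fun ξ => Wset (n := n) fun k => ee (ξ k))
    (fun ξ ξ' => nullLoops_Wset_inter (fun _ => norm_ee _) (fun _ => norm_ee _)) cubeFill_Wset
    f g hf hg (fun i j => ξ (i, j)) (fun i j a b h1 h2 h3 h4 => hξ (i, j) (a, b) ⟨⟨h1, h2⟩, h3, h4⟩)
    hgθ P hPc hP0 hP1 hPθ
  have hPO : ∀ i j : ℤ, ((i : ℝ), (j : ℝ)) ∈ Out (M : ℝ) → P i j = P 0 0 := by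
    intro i j h
    have h00 : dat (((0:ℤ):ℝ), ((0:ℤ):ℝ)) = dat (0, 0) := by simp
    have z00 : z (((0:ℤ):ℝ), ((0:ℤ):ℝ)) = z (0, 0) := by simp
    funext t
    simp only [P]
    rw [hdat _ h, h00, z00, hzO _ h, hzO _ hO0]
  have hfO : ∀ p ∈ Out (M : ℝ), ∀ q ∈ Out (M : ℝ), f p = f q := fun p hp q hq => by
    rw [hf0 p hp, hf0 q hq]
  have hgO : ∀ p ∈ Out (M : ℝ), ∀ q ∈ Out (M : ℝ), g p = g q := fun p hp q hq => by
    simp only [g]; rw [hzO p hp, hzO q hq]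
  have hKb : ∀ a b t : ℝ, t ∈ Set.Icc (0:ℝ) 1 → (a = 0 ∨ a = M ∨ b = 0 ∨ b = M) →
      K (a, b, t) = P 0 0 t := by
    have hv : ∀ (i : ℤ), (i = 0 ∨ i = M) → ∀ b t : ℝ, t ∈ Set.Icc (0:ℝ) 1 → K (i, b, t) = P 0 0 t := by
      intro i hi b t ht
      have hO : ∀ b : ℝ, ((i : ℝ), b) ∈ Out (M : ℝ) := fun b => mem_Out.2 (by
        rcases hi with rfl | rfl
        · left; simp
        · right; left; simp)
      have := hKv i ⌊b⌋ (fun u _ => hfO _ (hO _) _ (hO _)) (fun u _ => hgO _ (hO _) _ (hO _))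
        (fun t _ => by rw [hPO i (⌊b⌋ + 1) (hO _), hPO i ⌊b⌋ (hO _)]) (Int.fract b)
        ⟨Int.fract_nonneg b, (Int.fract_lt_one b).le⟩ t ht
      rwa [Int.floor_add_fract, hPO i ⌊b⌋ (hO _)] at this
    have hh : ∀ (j : ℤ), (j = 0 ∨ j = M) → ∀ a t : ℝ, t ∈ Set.Icc (0:ℝ) 1 → K (a, j, t) = P 0 0 t := by
      intro j hj a t ht
      have hO : ∀ a : ℝ, (a, (j : ℝ)) ∈ Out (M : ℝ) := fun b => mem_Out.2 (by
        rcases hj with rfl | rfl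
        · right; right; left; simp
        · right; right; right; simp)
      have := hKh ⌊a⌋ j (fun u _ => hfO _ (hO _) _ (hO _)) (fun u _ => hgO _ (hO _) _ (hO _))
        (fun t _ => by rw [hPO (⌊a⌋ + 1) j (hO _), hPO ⌊a⌋ j (hO _)]) (Int.fract a)
        ⟨Int.fract_nonneg a, (Int.fract_lt_one a).le⟩ t ht
      rwa [Int.floor_add_fract, hPO ⌊a⌋ j (hO _)] at this
    rintro a b t ht (rfl | rfl | rfl | rfl)
    · have := hv 0 (Or.inl rfl) b t ht; rwa [Int.cast_zero] at this
    · have := hv M (Or.inr rfl) b t ht; rwa [Int.cast_natCast] at this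
    · have := hh 0 (Or.inl rfl) a t ht; rwa [Int.cast_zero] at this
    · have := hh M (Or.inr rfl) a t ht; rwa [Int.cast_natCast] at this
  -- the diagonal map `g` is contracted by scaling the angles
  refine ⟨fun q => if q.2.2 ≤ 1 / 2 then K (q.1, q.2.1, 2 * q.2.2) else
    mk 1 ((2 - 2 * q.2.2) • z (q.1, q.2.1)), ?_, ?_, ⟨mk 1 0, ?_⟩, ?_⟩
  · refine Continuous.if_le (by fun_prop) (hmk continuous_const (by fun_prop)) (by fun_prop)
      continuous_const fun q hq => ?_
    rw [hq]
    norm_num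
    rw [hK1]
  · intro a b
    have : (0:ℝ) ≤ 1 / 2 := by norm_num
    simp only [this, if_true, mul_zero, hK0]
  · intro a b
    have : ¬ (1:ℝ) ≤ 1 / 2 := by norm_num
    simp only [this, if_false]
    norm_num
  · intro a b t ht hab
    have hab' : (a, b) ∈ Out (M : ℝ) := mem_Out.2 (by
      rcases hab with rfl | rfl | rfl | rfl <;> simp)
    dsimp only
    split_ifs with h
    · have ht' : 2 * t ∈ Set.Icc (0:ℝ) 1 := ⟨by linarith [ht.1], by linarith⟩
      rw [hKb a b _ ht' hab, hKb 0 0 _ ht' (Or.inl rfl)]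
    · rw [hzO _ hab', hzO _ hO0]

end

/-! ### Subdivision of the square -/

section
open Topology Filter Matrix
open scoped Matrix.Norms.L2Operator ComplexOrder ComplexConjugate

theorem exists_mem_Wset {n r : ℕ} (y : CharVarU n r) :
    ∃ ξ : Fin r → ℝ, y ∈ Wset fun k => ee (ξ k) := by
  obtain ⟨A, rfl⟩ := (isOpenQuotientMap_mkX n r).surjective y
  choose ζ h1 h2 using fun k => exists_not_eigenvalue (A k)
  refine ⟨fun k => Complex.arg (ζ k), mkX_mem_Wset.2 fun k => ?_⟩
  have : ee (Complex.arg (ζ k)) = ζ k := by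
    have := Complex.norm_mul_exp_arg_mul_I (ζ k)
    rwa [h1 k, Complex.ofReal_one, one_mul] at this
  rw [this]
  exact h2 k

/-- A map of the plane that is constant outside the open unit square is homotopic to a constant
map, through maps that are constant on the boundary of the square. -/
theorem square_null {n r : ℕ} (hn : 0 < n) {F : ℝ × ℝ → CharVarU n r} (hF : Continuous F)
    {x₀ : CharVarU n r} (hF0 : ∀ p ∈ Out 1, F p = x₀) :
    ∃ K : ℝ × ℝ × ℝ → CharVarU n r, Continuous K ∧ (∀ a b, K (a, b, 0) = F (a, b)) ∧
      (∃ y, ∀ a b, K (a, b, 1) = y) ∧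
      ∀ a b t : ℝ, t ∈ Set.Icc (0:ℝ) 1 → (a = 0 ∨ a = 1 ∨ b = 0 ∨ b = 1) →
        K (a, b, t) = K (0, 0, t) := by
  obtain ⟨δ, hδ, hL⟩ := lebesgue_number_lemma_of_metric
    (s := Set.Icc (0:ℝ) 1 ×ˢ Set.Icc (0:ℝ) 1)
    (c := fun ξ : Fin r → ℝ => F ⁻¹' Wset fun k => ee (ξ k)) (isCompact_Icc.prod isCompact_Icc)
    (fun ξ => (isOpen_Wset _).preimage hF) (fun p _ => by
      obtain ⟨ξ, hξ⟩ := exists_mem_Wset (F p)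
      exact Set.mem_iUnion.2 ⟨ξ, hξ⟩)
  obtain ⟨M, hM⟩ := exists_nat_gt (1 / δ)
  have hM0 : (0:ℝ) < M := lt_trans (by positivity) hM
  have hMδ : 1 / (M:ℝ) < δ := by
    rw [div_lt_iff₀ hM0]
    rwa [div_lt_iff₀ hδ, mul_comm] at hM
  let f : ℝ × ℝ → CharVarU n r := fun p => F (p.1 / M, p.2 / M)
  have hf : Continuous f := hF.comp (by fun_prop)
  have hf0 : ∀ p ∈ Out (M : ℝ), f p = x₀ := by
    intro p hp
    refine hF0 _ (mem_Out.2 ?_)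
    rcases mem_Out.1 hp with h | h | h | h
    · exact Or.inl (div_nonpos_of_nonpos_of_nonneg h hM0.le)
    · exact Or.inr (Or.inl ((one_le_div hM0).2 h))
    · exact Or.inr (Or.inr (Or.inl (div_nonpos_of_nonpos_of_nonneg h hM0.le)))
    · exact Or.inr (Or.inr (Or.inr ((one_le_div hM0).2 h)))
  have hcell : ∀ c : ℤ × ℤ, ∃ ξ : Fin r → ℝ, ∀ p ∈ cell c, f p ∈ Wset fun k => ee (ξ k) := by
    intro c
    -- cells whose corner is outside the square miss the open square, and `f` is constant on them
    by_cases hc : ((c.1 : ℝ) / M, (c.2 : ℝ) / M) ∈ Set.Icc (0:ℝ) 1 ×ˢ Set.Icc (0:ℝ) 1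
    · obtain ⟨ξ, hξ⟩ := hL _ hc
      refine ⟨ξ, fun p hp => hξ ?_⟩
      have key : ∀ i : ℤ, ∀ a : ℝ, (i : ℝ) ≤ a → a ≤ i + 1 → dist (a / M) (i / M) < δ := by
        intro i a h1 h2
        refine lt_of_le_of_lt ?_ hMδ
        rw [Real.dist_eq, ← sub_div, abs_of_nonneg (div_nonneg (by linarith) hM0.le)]
        gcongr
        linarith
      exact Metric.mem_ball.2 (max_lt (key _ _ hp.1.1 hp.1.2) (key _ _ hp.2.1 hp.2.2))
    · obtain ⟨ξ, hξ⟩ := exists_mem_Wset x₀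
      refine ⟨ξ, fun p hp => ?_⟩
      rw [hf0 p]
      · exact hξ
      by_contra hp'
      apply hc
      rw [mem_Out] at hp'
      push Not at hp'
      have key : ∀ i : ℤ, ∀ a : ℝ, (i : ℝ) ≤ a → a ≤ i + 1 → 0 < a → a < M →
          (i : ℝ) / M ∈ Set.Icc (0:ℝ) 1 := by
        intro i a h1 h2 h3 h4
        have h5 : (-1 : ℝ) < i := by linarith
        have h6 : (-1 : ℤ) < i := by exact_mod_cast h5
        have h7 : (0 : ℝ) ≤ i := by exact_mod_cast (by omega : 0 ≤ i)
        exact ⟨div_nonneg h7 hM0.le, (div_le_one hM0).2 (by linarith)⟩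
      exact ⟨key _ _ hp.1.1 hp.1.2 hp'.1 hp'.2.1, key _ _ hp.2.1 hp.2.2 hp'.2.2.1 hp'.2.2.2⟩
  choose ξ hξ using hcell
  obtain ⟨K, hK, hK0, ⟨y, hy⟩, hKb⟩ := grid_null hn hf hf0 ξ hξ
  refine ⟨fun q => K (M * q.1, M * q.2.1, q.2.2), hK.comp (by fun_prop), fun a b => ?_,
    ⟨y, fun a b => hy _ _⟩, fun a b t ht hab => ?_⟩
  · dsimp only
    rw [hK0]
    simp only [f]
    rw [mul_div_cancel_left₀ _ hM0.ne', mul_div_cancel_left₀ _ hM0.ne']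
  · dsimp only
    rw [hKb _ _ t ht, mul_zero]
    rcases hab with rfl | rfl | rfl | rfl <;> simp

end

/-! ### From free to based null-homotopies -/

section
open Topology Filter Matrix
open scoped Matrix.Norms.L2Operator ComplexOrder ComplexConjugate

/-- Four times the distance to the boundary of the unit square. -/
noncomputable def bdist (p : ℝ × ℝ) : ℝ := 4 * min (min p.1 (1 - p.1)) (min p.2 (1 - p.2))

theorem bdist_nonneg {a b : ℝ} (ha : a ∈ Set.Icc (0:ℝ) 1) (hb : b ∈ Set.Icc (0:ℝ) 1) :
    0 ≤ bdist (a, b) := by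
  have := ha.1; have := ha.2; have := hb.1; have := hb.2
  unfold bdist
  refine mul_nonneg (by norm_num) (le_min (le_min ?_ ?_) (le_min ?_ ?_)) <;> dsimp only <;> linarith

theorem continuous_bdist : Continuous bdist := by unfold bdist; fun_prop

theorem bdist_le {a b u : ℝ} (h : bdist (a, b) ≤ u) :
    a ≤ u / 4 ∨ 1 - a ≤ u / 4 ∨ b ≤ u / 4 ∨ 1 - b ≤ u / 4 := by
  have : min (min a (1 - a)) (min b (1 - b)) ≤ u / 4 := by
    have h' : 4 * min (min a (1 - a)) (min b (1 - b)) ≤ u := h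
    linarith
  simpa only [min_le_iff, or_assoc] using this

theorem bdist_eq_zero {a b : ℝ} (ha : a ∈ Set.Icc (0:ℝ) 1) (hb : b ∈ Set.Icc (0:ℝ) 1)
    (h : a = 0 ∨ a = 1 ∨ b = 0 ∨ b = 1) : bdist (a, b) = 0 := by
  refine le_antisymm ?_ (bdist_nonneg ha hb)
  have : min (min a (1 - a)) (min b (1 - b)) ≤ 0 := by
    simp only [min_le_iff]
    rcases h with rfl | rfl | rfl | rfl <;> simp
  unfold bdist
  dsimp only
  linarith

/-- The expansion of the square that pushes the collar of width `u / 4` to the boundary, in one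
coordinate. -/
noncomputable def expand (u a : ℝ) : ℝ := clip ((a - u / 4) * (1 + u))

theorem expand_zero {a : ℝ} (ha : a ∈ Set.Icc (0:ℝ) 1) : expand 0 a = a := by
  simp [expand, clip_of_mem ha]

theorem expand_low {u a : ℝ} (hu : 0 ≤ u) (ha : a ≤ u / 4) : expand u a = 0 := by
  have : (a - u / 4) * (1 + u) ≤ 0 := mul_nonpos_of_nonpos_of_nonneg (by linarith) (by linarith)
  exact max_eq_left ((min_le_left _ _).trans this)

theorem expand_high {u a : ℝ} (hu : u ∈ Set.Icc (0:ℝ) 1) (ha : 1 - a ≤ u / 4) : expand u a = 1 := by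
  have : 1 ≤ (a - u / 4) * (1 + u) := by nlinarith [hu.1, hu.2]
  rw [expand, clip, min_eq_right this, max_eq_right zero_le_one]

theorem expand_collar {a b u : ℝ} (hu : u ∈ Set.Icc (0:ℝ) 1) (h : bdist (a, b) ≤ u) :
    expand u a = 0 ∨ expand u a = 1 ∨ expand u b = 0 ∨ expand u b = 1 := by
  rcases bdist_le h with h | h | h | h
  · exact Or.inl (expand_low hu.1 h)
  · exact Or.inr (Or.inl (expand_high hu h))
  · exact Or.inr (Or.inr (Or.inl (expand_low hu.1 h)))
  · exact Or.inr (Or.inr (Or.inr (expand_high hu h)))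

/-- From free to based null-homotopies of maps of the square. The collar of width `u / 4` follows the
track of the base point under the free homotopy, and the rest of the square runs through that homotopy
up to time `u`. At the end only a loop along the track and back is left, which is retracted. -/
theorem genLoop_null {X : Type*} [TopologicalSpace X] {x : X} (f : GenLoop (Fin 2) X x)
    (hnull : ∀ F : ℝ × ℝ → X, Continuous F → (∀ p ∈ Out 1, F p = x) →
      ∃ K : ℝ × ℝ × ℝ → X, Continuous K ∧ (∀ a b, K (a, b, 0) = F (a, b)) ∧
      (∃ y, ∀ a b, K (a, b, 1) = y) ∧
      ∀ a b t : ℝ, t ∈ Set.Icc (0:ℝ) 1 → (a = 0 ∨ a = 1 ∨ b = 0 ∨ b = 1) →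
        K (a, b, t) = K (0, 0, t)) : GenLoop.Homotopic f GenLoop.const := by
  let pj : ℝ → unitInterval := Set.projIcc 0 1 zero_le_one
  have hpj : Continuous pj := continuous_projIcc
  let F : ℝ × ℝ → X := fun p => f ![pj p.1, pj p.2]
  have hF : Continuous F := by
    refine f.1.continuous.comp (continuous_pi fun i => ?_)
    fin_cases i
    · exact hpj.comp continuous_fst
    · exact hpj.comp continuous_snd
  have hF0 : ∀ p ∈ Out 1, F p = x := by
    intro p hp
    refine f.2 _ ?_
    rcases mem_Out.1 hp with h | h | h | h
    · exact ⟨0, Or.inl (Set.projIcc_of_le_left zero_le_one h)⟩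
    · exact ⟨0, Or.inr (Set.projIcc_of_right_le zero_le_one h)⟩
    · exact ⟨1, Or.inl (Set.projIcc_of_le_left zero_le_one h)⟩
    · exact ⟨1, Or.inr (Set.projIcc_of_right_le zero_le_one h)⟩
  obtain ⟨K, hK, hK0, ⟨y, hy⟩, hKb⟩ := hnull F hF hF0
  have hbd : ∀ p : Fin 2 → unitInterval, p ∈ Cube.boundary (Fin 2) →
      bdist ((p 0 : ℝ), (p 1 : ℝ)) = 0 := by
    rintro p ⟨i, hi⟩
    refine bdist_eq_zero (p 0).2 (p 1).2 ?_
    fin_cases i <;> rcases hi with hi | hi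
    · exact Or.inl (congrArg Subtype.val hi)
    · exact Or.inr (Or.inl (congrArg Subtype.val hi))
    · exact Or.inr (Or.inr (Or.inl (congrArg Subtype.val hi)))
    · exact Or.inr (Or.inr (Or.inr (congrArg Subtype.val hi)))
  have hx : K (0, 0, 0) = x := by
    rw [hK0]; exact hF0 _ (mem_Out.2 (Or.inl le_rfl))
  let ht : (Fin 2 → unitInterval) → ℝ := fun p => min 1 (bdist ((p 0 : ℝ), (p 1 : ℝ)))
  have htc : Continuous ht := continuous_const.min (continuous_bdist.comp (by fun_prop))
  have hbc : Continuous fun p : Fin 2 → unitInterval => bdist ((p 0 : ℝ), (p 1 : ℝ)) :=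
    continuous_bdist.comp (by fun_prop)
  have ht0 : ∀ p ∈ Cube.boundary (Fin 2), ht p = 0 := fun p hp => by
    simp [ht, hbd p hp]
  -- the intermediate loop runs along the track of the base point and back
  let g : GenLoop (Fin 2) X x := ⟨⟨fun p => K (0, 0, ht p), by fun_prop⟩, fun p hp => by
    change K (0, 0, ht p) = x
    rw [ht0 p hp, hx]⟩
  have hcl := continuous_clip
  have H1 : GenLoop.Homotopic f g := by
    refine ⟨⟨⟨⟨fun q => K (expand q.1 (q.2 0), expand q.1 (q.2 1),
      min (q.1 : ℝ) (bdist ((q.2 0 : ℝ), (q.2 1 : ℝ)))), ?_⟩, fun p => ?_, fun p => ?_⟩, fun u p hp => ?_⟩⟩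
    · have h1 : Continuous fun q : unitInterval × (Fin 2 → unitInterval) =>
          bdist ((q.2 0 : ℝ), (q.2 1 : ℝ)) := hbc.comp continuous_snd
      refine hK.comp ?_
      unfold expand
      fun_prop
    · have h0 := bdist_nonneg (p 0).2 (p 1).2
      change K (expand ((0 : unitInterval) : ℝ) (p 0), expand ((0 : unitInterval) : ℝ) (p 1),
        min ((0 : unitInterval) : ℝ) _) = f p
      rw [Set.Icc.coe_zero, min_eq_left h0, expand_zero (p 0).2, expand_zero (p 1).2, hK0]
      change f _ = f p
      congr 1
      funext i
      fin_cases i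
      · exact Set.projIcc_val zero_le_one (p 0)
      · exact Set.projIcc_val zero_le_one (p 1)
    · change K (expand ((1 : unitInterval) : ℝ) (p 0), expand ((1 : unitInterval) : ℝ) (p 1),
        min ((1 : unitInterval) : ℝ) (bdist ((p 0 : ℝ), (p 1 : ℝ)))) =
          K (0, 0, min 1 (bdist ((p 0 : ℝ), (p 1 : ℝ))))
      rw [Set.Icc.coe_one]
      rcases le_total (bdist ((p 0 : ℝ), (p 1 : ℝ))) 1 with h | h
      · exact hKb _ _ _ ⟨le_min zero_le_one (bdist_nonneg (p 0).2 (p 1).2), min_le_left _ _⟩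
          (expand_collar (by simp) h)
      · rw [min_eq_left h, hy, hy]
    · change K (expand u (p 0), expand u (p 1), min (u : ℝ) (bdist ((p 0 : ℝ), (p 1 : ℝ)))) = f p
      have h0 : bdist ((p 0 : ℝ), (p 1 : ℝ)) = 0 := hbd p hp
      rw [h0, min_eq_right u.2.1, hKb _ _ 0 (by simp) (expand_collar u.2 (h0.trans_le u.2.1)), hx]
      exact (f.2 p hp).symm
  have H2 : GenLoop.Homotopic g GenLoop.const := by
    refine ⟨⟨⟨⟨fun q => K (0, 0, (1 - q.1) * ht q.2), by fun_prop⟩, fun p => ?_, fun p => ?_⟩,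
      fun u p hp => ?_⟩⟩
    · change K (0, 0, (1 - ((0 : unitInterval) : ℝ)) * ht p) = K (0, 0, ht p)
      simp
    · change K (0, 0, (1 - ((1 : unitInterval) : ℝ)) * ht p) = x
      simp [hx]
    · change K (0, 0, (1 - (u : ℝ)) * ht p) = K (0, 0, ht p)
      rw [ht0 p hp, mul_zero]
  exact H1.trans H2

end

/-- For every `n ≥ 1` and `r ≥ 1`, the second homotopy group of `X_r(U(n))` is trivial. -/
theorem pi2_charVar_unitary_trivial (n r : ℕ) (hn : 1 ≤ n) (hr : 1 ≤ r)
    (x : CharVarU n r) :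
    Subsingleton (HomotopyGroup (Fin 2) (CharVarU n r) x) := by
  have h : ∀ f : GenLoop (Fin 2) (CharVarU n r) x, GenLoop.Homotopic f GenLoop.const :=
    fun f => genLoop_null f fun F hF hF0 => square_null hn hF hF0
  refine ⟨fun a b => ?_⟩
  induction a, b using Quotient.inductionOn₂ with
  | h f g => exact Quotient.sound ((h f).trans (h g).symm)
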